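/- arXiv:2305.02098 — 2 statements merged into one kernel-verified Lean document; each statement's English description precedes it below -/
import Mathlib

section
/- Let (f₀, U₀) be a compactly supported polytropic steady state of the relativistic Vlasov–Poisson system with exponent 1 ≤ k < 7/2 and cut-off energy E₀ < 0, i.e. f₀(x,p) = φ(E(x,p)) with φ(E) = (E₀ − E)₊^k and E(x,p) = √(1+|p|²) + U₀(x). Then for every spherically symmetric h ∈ C_c^∞(ℝ⁶) with supp h ⊂ {f₀ > 0} and h(x,−p) = −h(x,p), the following inequality holds: D²H_C(f₀)({E,h},{E,h}) ≥ (1/2) ∬ (1/|φ'(E)|) [ |x·p|² |{E, h/(x·p)}|² + (U₀'(r)/(r(1+|p|²)^{3/2})) h² ] dp dx, where r = |x| and U₀'(r) is the radial derivative of the spherically symmetric potential U₀. -/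
/-!
The proof completes the square along the characteristic vector field. Write `s = √(1+|p|²)`,
`D = {E, ·}`, `W = 1/|φ'(E)|`, `a = x·p` and `b = D a`. Off the null set `a = 0`,

  `(D h)² = a² (D (h/a))² + D (h² b / a) - h² (D b) / a`.

Since `U₀` is radial, `D b = -a (ΔU₀ / s + U₀'/(r s³))`. As `D` is divergence free and kills
functions of `E`, the term `D (h² b / a)` should integrate to zero against `W`. The function
`h² b / a` is singular where `a = 0`, but a half-turn about a suitable axis shows that a rotation
invariant `h`, odd in `p`, vanishes where `x ⟂ p`; hence `h b` and `h² D b` are bounded by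
multiples of `|a|`, and `h² b a / (a² + ε)` can be used with dominated convergence
(`limit_identity`). Altogether

  `½ ∬ W (D h)² = (right-hand side) + ½ ∬ W h² ΔU₀ / s`.

It remains to bound the field energy of `D h` by the last term. The density of `D h` is `-div j`
with the current `j(x) = ∫ h p/s dp`. By rotation equivariance `j` is radial, hence curl free, so
the field generated by `D h` is the local quantity `-4π j` (`gradUf_eq`) and the field energy is
`2π ∫ |j|²`. An integration by parts in momentum gives `∫ (p·e)² |φ'(E)| / s dp = ρ₀(x)` for unit
vectors `e` (`flux_identity`), so Cauchy–Schwarz yields `|j|² ≤ ρ₀ ∫ W h²/s dp` (`curr_sq_le`).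
Poisson's equation `ΔU₀ = 4π ρ₀`, derived almost everywhere from the Newtonian potential formula by
testing against smooth functions (`poisson_ae`), finishes the comparison.
-/


open MeasureTheory Set Filter Topology
open scoped ENNReal RealInnerProductSpace

noncomputable section

/-- Position/momentum space `ℝ³`. -/
abbrev V3 : Type := EuclideanSpace ℝ (Fin 3)

/-- A rotation: a linear isometry of `ℝ³` with determinant `1` (an element of SO(3)). -/
def IsRot (A : V3 ≃ₗᵢ[ℝ] V3) : Prop :=
  LinearMap.det (A.toLinearEquiv : V3 →ₗ[ℝ] V3) = 1

/-- The Poisson bracket `{g,h} = ∂_x g · ∂_p h − ∂_p g · ∂_x h`. -/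
def pbracket (g h : V3 × V3 → ℝ) (z : V3 × V3) : ℝ :=
  ⟪gradient (fun x => g (x, z.2)) z.1, gradient (fun p => h (z.1, p)) z.2⟫
  - ⟪gradient (fun p => g (z.1, p)) z.2, gradient (fun x => h (x, z.2)) z.1⟫

/-- The relativistic particle energy `E(x,p) = √(1+|p|²) + U₀(x)`. -/
def Erel (U₀ : V3 → ℝ) (z : V3 × V3) : ℝ := Real.sqrt (1 + ‖z.2‖ ^ 2) + U₀ z.1

/-- The polytropic ansatz `φ(E) = (E₀−E)₊^k`. -/
def polyAnsatz (E₀ k e : ℝ) : ℝ := max (E₀ - e) 0 ^ k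

/-- The derivative `φ'` of the polytropic ansatz. -/
def polyAnsatz' (E₀ k : ℝ) (e : ℝ) : ℝ := deriv (fun s => polyAnsatz E₀ k s) e

/-- The spatial density of a (signed) phase-space density. -/
def rhoOf (g : V3 × V3 → ℝ) (x : V3) : ℝ := ∫ p : V3, g (x, p)

/-- The field `∇U_g(x) = ∫ ρ_g(y)(x−y)|x−y|⁻³ dy`. -/
def gradUf (g : V3 × V3 → ℝ) (x : V3) : V3 :=
  ∫ y : V3, (rhoOf g y / ‖x - y‖ ^ 3) • (x - y)

/-- The second variation of the energy–Casimir functional at the steady state `f₀`: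
`D²H_C(f₀)(g,g) = (1/2)∬_{f₀>0} g²/|φ'(E)| dp dx − (1/8π)∫ |∇U_g|² dx`. -/
def D2HC (U₀ : V3 → ℝ) (E₀ k : ℝ) (g : V3 × V3 → ℝ) : ℝ :=
  (1 / 2) * (∫ z in {z : V3 × V3 | 0 < polyAnsatz E₀ k (Erel U₀ z)},
      (g z) ^ 2 / |polyAnsatz' E₀ k (Erel U₀ z)|) -
    (1 / (8 * Real.pi)) * ∫ x : V3, ‖gradUf g x‖ ^ 2

open scoped NNReal

/-! ### Polar coordinates and the Coulomb kernel -/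

lemma finrank_V3 : Module.finrank ℝ V3 = 3 := by simp

/-- Integration in polar coordinates on `ℝ³`. -/
lemma integral_polar (f : V3 → ℝ) (hf : Integrable f) :
    ∫ x, f x = ∫ ω : Metric.sphere (0 : V3) 1,
      ∫ r in Ioi (0 : ℝ), r ^ 2 * f (r • (ω : V3)) ∂volume ∂(volume : Measure V3).toSphere := by
  have hmp := (volume : Measure V3).measurePreserving_homeomorphUnitSphereProd
  have hemb := (homeomorphUnitSphereProd V3).measurableEmbedding
  have h1 : ∫ x, f x = ∫ x : ({(0 : V3)}ᶜ : Set V3), f x ∂((volume : Measure V3).comap (↑)) := by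
    rw [integral_subtype_comap (measurableSet_singleton _).compl f, restrict_compl_singleton]
  have key := hmp.integral_comp hemb
    (fun q => f ((homeomorphUnitSphereProd V3).symm q : V3))
  have keyi := hmp.integrable_comp_emb hemb
    (g := fun q => f ((homeomorphUnitSphereProd V3).symm q : V3))
  have h2 : Integrable (fun x : ({(0 : V3)}ᶜ : Set V3) => f x)
      ((volume : Measure V3).comap (↑)) := by
    have := (integrableOn_iff_comap_subtypeVal (f := f) (μ := (volume : Measure V3))
      (s := {(0 : V3)}ᶜ) (measurableSet_singleton _).compl).1 hf.integrableOn
    exact this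
  have h3 : Integrable (fun q => f ((homeomorphUnitSphereProd V3).symm q : V3))
      ((volume : Measure V3).toSphere.prod (.volumeIoiPow (Module.finrank ℝ V3 - 1))) := by
    rw [← keyi]
    refine h2.congr (Eventually.of_forall fun x => ?_)
    simp only [Function.comp_def, Homeomorph.symm_apply_apply]
  rw [h1]
  have h4 : ∫ x : ({(0 : V3)}ᶜ : Set V3), f x ∂((volume : Measure V3).comap (↑)) =
    ∫ x : ({(0 : V3)}ᶜ : Set V3), f ((homeomorphUnitSphereProd V3).symm
      (homeomorphUnitSphereProd V3 x) : V3) ∂((volume : Measure V3).comap (↑)) := by simp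
  rw [h4, key, integral_prod _ h3]
  congr 1
  ext ω
  simp only [homeomorphUnitSphereProd_symm_apply_coe, Measure.volumeIoiPow, ENNReal.ofReal]
  rw [integral_withDensity_eq_integral_smul (by fun_prop), finrank_V3]
  rw [integral_subtype_comap measurableSet_Ioi
    (fun r : ℝ => (Real.toNNReal (r ^ (3 - 1))) • f (r • (ω : V3)))]
  refine setIntegral_congr_fun measurableSet_Ioi fun r hr => ?_
  simp only [NNReal.smul_def, smul_eq_mul]
  rw [Real.coe_toNNReal _ (pow_nonneg (le_of_lt hr) _)]

lemma toSphere_real_univ : (volume : Measure V3).toSphere.real univ = 4 * Real.pi := by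
  rw [Measure.toSphere_real_apply_univ, finrank_V3, Measure.real,
    EuclideanSpace.volume_ball_fin_three]
  simp [ENNReal.toReal_ofReal (show 0 ≤ Real.pi * 4 / 3 by positivity)]
  ring

/-- `|z|⁻²` is integrable on balls of `ℝ³`. -/
lemma integrableOn_inv_sq (R : ℝ) :
    IntegrableOn (fun z : V3 => 1 / ‖z‖ ^ 2) (Metric.ball 0 R) := by
  rw [integrableOn_fun_norm_addHaar (volume : Measure V3) (f := fun y => 1 / y ^ 2), finrank_V3]
  refine (integrableOn_congr_fun (g := fun _ => (1 : ℝ)) ?_ measurableSet_Ioo).2 ?_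
  · intro y hy
    have : y ≠ 0 := hy.1.ne'
    simp; field_simp
  · simp

lemma HasCompactSupport.exists_ball {E F : Type*} [NormedAddCommGroup E] [Zero F] {f : E → F}
    (hf : HasCompactSupport f) : ∃ R > 0, ∀ x, R ≤ ‖x‖ → f x = 0 := by
  obtain ⟨R, hR0, hR⟩ := hf.isBounded.exists_pos_norm_lt
  refine ⟨R, hR0, fun x hx => ?_⟩
  by_contra hne
  exact absurd (hR x (subset_tsupport _ hne)) (not_lt.2 hx)

lemma HasCompactSupport.exists_bound_cont {E F : Type*} [NormedAddCommGroup E]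
    [NormedAddCommGroup F] {f : E → F} (hf : HasCompactSupport f) (hc : Continuous f) :
    ∃ C > 0, ∀ x, ‖f x‖ ≤ C := by
  obtain ⟨C, hC⟩ := hf.exists_bound_of_continuous hc
  exact ⟨max C 1, by positivity, fun x => (hC x).trans (le_max_left _ _)⟩

/-- A continuous compactly supported density against a kernel dominated by `|y-x|⁻²`. -/
lemma integrable_dom {F : Type*} [NormedAddCommGroup F] (x : V3) (g : V3 → F) (hg : AEStronglyMeasurable g) (C R : ℝ)
    (hR : ∀ y, R ≤ ‖y - x‖ → g y = 0) (hC : ∀ y, ‖g y‖ ≤ C * (1 / ‖y - x‖ ^ 2)) :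
    Integrable g := by
  have h0 : Integrable (fun z : V3 =>
      (Metric.ball (0 : V3) R).indicator (fun z : V3 => C * (1 / ‖z‖ ^ 2)) z) :=
    (integrable_indicator_iff measurableSet_ball).2 ((integrableOn_inv_sq R).const_mul C)
  refine (h0.comp_sub_right x).mono' hg (Eventually.of_forall fun y => ?_)
  by_cases hy : y - x ∈ Metric.ball (0 : V3) R
  · simpa only [indicator_of_mem hy] using hC y
  · simp only [indicator_of_notMem hy]
    rw [hR y (by simpa using hy)]; simp

/-- `-(1/4π) z/|z|³` is the fundamental solution of (minus) the gradient. -/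
lemma integral_fderiv_kernel (G : V3 → ℝ) (hG : ContDiff ℝ 1 G) (hGc : HasCompactSupport G)
    (x : V3) : ∫ y, fderiv ℝ G y (y - x) / ‖y - x‖ ^ 3 = -(4 * Real.pi) * G x := by
  have hcont : Continuous (fderiv ℝ G) := hG.continuous_fderiv (by norm_num)
  obtain ⟨C, hC0, hC⟩ := (hGc.fderiv ℝ).exists_bound_cont hcont
  obtain ⟨R, hR0, hR⟩ := hGc.exists_ball
  obtain ⟨R', hR'0, hR'⟩ := (hGc.fderiv ℝ).exists_ball
  have hint : Integrable (fun y => fderiv ℝ G y (y - x) / ‖y - x‖ ^ 3) := by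
    refine integrable_dom x _ ?_ C (R' + ‖x‖) ?_ ?_
    · exact Measurable.aestronglyMeasurable (by fun_prop)
    · intro y hy
      rw [hR' y (by have := norm_sub_le y x; linarith)]
      simp
    · intro y
      rcases eq_or_ne (y - x) 0 with h | h
      · simp [h]
      have h' : 0 < ‖y - x‖ := norm_pos_iff.2 h
      rw [norm_div, norm_pow, norm_norm, mul_one_div, div_le_div_iff₀ (by positivity) (by positivity)]
      calc ‖fderiv ℝ G y (y - x)‖ * ‖y - x‖ ^ 2 ≤ (C * ‖y - x‖) * ‖y - x‖ ^ 2 := by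
            gcongr; exact (ContinuousLinearMap.le_opNorm _ _).trans (by gcongr; exact hC y)
        _ = _ := by ring
  rw [← integral_add_right_eq_self _ x, integral_polar _ (hint.comp_add_right x)]
  have : ∀ ω : Metric.sphere (0 : V3) 1, ∫ r in Ioi (0 : ℝ), r ^ 2 *
      (fderiv ℝ G (r • (ω : V3) + x) (r • (ω : V3) + x - x) / ‖r • (ω : V3) + x - x‖ ^ 3)
      = - G x := by
    intro ω
    have hω : ‖(ω : V3)‖ = 1 := by simp
    have e1 : ∫ r in Ioi (0 : ℝ), r ^ 2 *
      (fderiv ℝ G (r • (ω : V3) + x) (r • (ω : V3) + x - x) / ‖r • (ω : V3) + x - x‖ ^ 3)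
      = ∫ r in Ioi (0 : ℝ), fderiv ℝ G (r • (ω : V3) + x) (ω : V3) := by
      refine setIntegral_congr_fun measurableSet_Ioi fun r hr => ?_
      have hr : (0 : ℝ) < r := hr
      simp only [add_sub_cancel_right, norm_smul, hω, map_smul, smul_eq_mul, Real.norm_eq_abs,
        abs_of_pos hr]
      field_simp
    rw [e1]
    have hd : ∀ r : ℝ, HasDerivAt (fun r : ℝ => G (r • (ω : V3) + x))
        (fderiv ℝ G (r • (ω : V3) + x) (ω : V3)) r := by
      intro r
      have h1 := (hG.differentiable (by norm_num) (r • (ω : V3) + x)).hasFDerivAt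
      have h2 : HasDerivAt (fun r : ℝ => r • (ω : V3) + x) ((1 : ℝ) • (ω : V3)) r :=
        ((hasDerivAt_id r).smul_const _).add_const _
      have := h1.comp_hasDerivAt r h2
      simpa [Function.comp_def] using! this
    have hnorm : ∀ r : ℝ, |r| ≤ ‖r • (ω : V3) + x‖ + ‖x‖ := by
      intro r
      have := norm_sub_le (r • (ω : V3) + x) x
      simpa [norm_smul, hω] using this
    have hc : HasCompactSupport (fun r : ℝ => fderiv ℝ G (r • (ω : V3) + x) (ω : V3)) := by
      refine HasCompactSupport.intro (isCompact_Icc (a := -(R' + ‖x‖)) (b := R' + ‖x‖)) ?_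
      intro r hr
      rw [hR']; · simp
      by_contra hlt
      exact hr (abs_le.1 (by have := hnorm r; linarith))
    have := integral_Ioi_of_hasDerivAt_of_tendsto' (a := 0) (m := 0) (fun r _ => hd r)
      ((Continuous.integrable_of_hasCompactSupport (by fun_prop) hc).integrableOn)
      (tendsto_const_nhds.congr' (by
        filter_upwards [eventually_ge_atTop (R + ‖x‖)] with r hr
        symm; apply hR
        have := hnorm r
        have := le_abs_self r
        linarith))
    rw [this]; simp
  simp_rw [this]
  rw [integral_const, toSphere_real_univ]
  simp

/-! ### Recovering a curl-free field from its divergence -/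

/-- The standard basis vectors of `ℝ³`. -/
def e3 (i : Fin 3) : V3 := EuclideanSpace.single i (1 : ℝ)

/-- The divergence of a vector field on `ℝ³`. -/
def divg (F : V3 → V3) (x : V3) : ℝ := ∑ i, fderiv ℝ F x (e3 i) i

lemma inner_e3 (v : V3) (i : Fin 3) : ⟪v, e3 i⟫ = v i := by
  simp [e3, EuclideanSpace.inner_single_right]

lemma sum_e3 (v : V3) : ∑ i, v i • e3 i = v := by
  ext k; simp [e3, Finset.sum_apply, Pi.single_apply]

lemma clm_sum_e3 (L : V3 →L[ℝ] ℝ) (v : V3) : L v = ∑ i, L (e3 i) * v i := by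
  conv_lhs => rw [← sum_e3 v]
  simp [map_sum, mul_comm]

lemma fderiv_coord {E : Type*} [NormedAddCommGroup E] [NormedSpace ℝ E] {F : E → V3} {x : E}
    (hF : DifferentiableAt ℝ F x) (k : Fin 3) (v : E) :
    fderiv ℝ (fun y => F y k) x v = fderiv ℝ F x v k := by
  have := ((EuclideanSpace.proj (𝕜 := ℝ) k).hasFDerivAt.comp x hF.hasFDerivAt).fderiv
  have h2 : fderiv ℝ (fun y => F y k) x =
    (EuclideanSpace.proj (𝕜 := ℝ) k).comp (fderiv ℝ F x) := by
    rw [← this]; rfl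
  rw [h2]; rfl

lemma contDiff_coord {n : WithTop ℕ∞} {E : Type*} [NormedAddCommGroup E] [NormedSpace ℝ E]
    {F : E → V3} (hF : ContDiff ℝ n F) (k : Fin 3) : ContDiff ℝ n (fun y => F y k) :=
  (EuclideanSpace.proj (𝕜 := ℝ) k).contDiff.comp hF

/-- Integration by parts, only one factor being compactly supported. -/
lemma ibp {E : Type*} [NormedAddCommGroup E] [NormedSpace ℝ E] [FiniteDimensional ℝ E]
    [MeasurableSpace E] [BorelSpace E] (μ : Measure E) [μ.IsAddHaarMeasure]
    {f g : E → ℝ} (hf : ContDiff ℝ 1 f)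
    (hfc : HasCompactSupport f) (hg : ContDiff ℝ 1 g) (v : E) :
    ∫ x, fderiv ℝ f x v * g x ∂μ = - ∫ x, f x * fderiv ℝ g x v ∂μ := by
  have c1 : Continuous (fderiv ℝ f) := hf.continuous_fderiv (by norm_num)
  have c2 : Continuous (fderiv ℝ g) := hg.continuous_fderiv (by norm_num)
  have c3 := hf.continuous
  have c4 := hg.continuous
  rw [integral_mul_fderiv_eq_neg_fderiv_mul_of_integrable, neg_neg]
  · exact Continuous.integrable_of_hasCompactSupport (by fun_prop) ((hfc.fderiv_apply ℝ v).mul_right)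
  · exact Continuous.integrable_of_hasCompactSupport (by fun_prop) hfc.mul_right
  · exact Continuous.integrable_of_hasCompactSupport (by fun_prop) hfc.mul_right
  · exact fun x _ => hf.differentiable (by norm_num) x
  · exact fun x _ => hg.differentiable (by norm_num) x

/-- Second derivatives commute, in weak form. -/
lemma ibp_swap {f N : V3 → ℝ} (hf : ContDiff ℝ 1 f) (hfc : HasCompactSupport f)
    (hN : ContDiff ℝ 2 N) (v w : V3) :
    ∫ y, fderiv ℝ f y v * fderiv ℝ N y w = ∫ y, fderiv ℝ f y w * fderiv ℝ N y v := by
  have hN1 : ContDiff ℝ 1 (fderiv ℝ N) := hN.fderiv_right (by norm_num)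
  have hN' : ∀ u : V3, ContDiff ℝ 1 (fun y => fderiv ℝ N y u) := fun u =>
    hN1.clm_apply contDiff_const
  rw [ibp volume hf hfc (hN' w), ibp volume hf hfc (hN' v)]
  congr 2
  ext y
  have hd : DifferentiableAt ℝ (fderiv ℝ N) y := hN1.differentiable (by norm_num) y
  have e : ∀ u u' : V3, fderiv ℝ (fun y => fderiv ℝ N y u) y u' = fderiv ℝ (fderiv ℝ N) y u' u := by
    intro u u'
    rw [fderiv_clm_apply hd (by fun_prop)]
    simp
  rw [e, e]
  congr 1
  exact (hN.contDiffAt.isSymmSndFDerivAt (by simp)).eq v w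

/-- The regularised Newtonian kernel `(|y-x|²+ε)^{-1/2}`. -/
def newt (ε : ℝ) (x y : V3) : ℝ := (Real.sqrt (‖y - x‖ ^ 2 + ε))⁻¹

lemma newt_contDiff {ε : ℝ} (hε : 0 < ε) (x : V3) : ContDiff ℝ 2 (newt ε x) := by
  unfold newt
  have h1 : ContDiff ℝ 2 (fun y : V3 => ‖y - x‖ ^ 2 + ε) :=
    ((contDiff_id.sub contDiff_const).norm_sq ℝ).add contDiff_const
  exact (h1.sqrt fun y => by positivity).inv fun y => by positivity

lemma newt_fderiv {ε : ℝ} (hε : 0 < ε) (x y v : V3) :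
    fderiv ℝ (newt ε x) y v = -(⟪y - x, v⟫ / (Real.sqrt (‖y - x‖ ^ 2 + ε)) ^ 3) := by
  have h0 : HasFDerivAt (fun y : V3 => y - x) (ContinuousLinearMap.id ℝ V3) y :=
    (hasFDerivAt_id y).sub_const x
  have h1 := (h0.norm_sq.add_const ε)
  have hpos : 0 < ‖y - x‖ ^ 2 + ε := by positivity
  have h2 := (h1.sqrt hpos.ne')
  have h3 := (hasDerivAt_inv (Real.sqrt_pos.2 hpos).ne').comp_hasFDerivAt y h2
  have h4 : fderiv ℝ (newt ε x) y = _ := h3.fderiv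
  rw [h4]
  have := Real.sqrt_pos.2 hpos
  simp
  field_simp
  rw [inner_sub_left]

/-- Removing the regularisation in the gradient of the Newtonian kernel. -/
lemma kernel_tendsto (x : V3) (g : V3 → ℝ) (hg : Continuous g) (hgc : HasCompactSupport g)
    (w : V3) : Tendsto (fun ε => ∫ y, g y * fderiv ℝ (newt ε x) y w) (𝓝[>] 0)
      (𝓝 (∫ y, g y * -(⟪y - x, w⟫ / ‖y - x‖ ^ 3))) := by
  obtain ⟨C, hC0, hC⟩ := hgc.exists_bound_cont hg
  obtain ⟨R, hR0, hR⟩ := hgc.exists_ball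
  have hbi : Integrable (fun y => ‖g y‖ * (‖w‖ * (1 / ‖y - x‖ ^ 2))) := by
    refine integrable_dom x _ (Measurable.aestronglyMeasurable (by fun_prop)) (C * ‖w‖)
      (R + ‖x‖) ?_ ?_
    · intro y hy
      rw [hR y (by have := norm_sub_le y x; linarith)]
      simp
    · intro y
      rw [Real.norm_of_nonneg (by positivity), mul_assoc]
      gcongr; exact hC y
  refine tendsto_integral_filter_of_dominated_convergence _ ?_ ?_ hbi ?_
  · filter_upwards [self_mem_nhdsWithin] with ε hε
    have : Continuous (fderiv ℝ (newt ε x)) := (newt_contDiff hε x).continuous_fderiv (by norm_num)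
    exact Continuous.aestronglyMeasurable (by fun_prop)
  · filter_upwards [self_mem_nhdsWithin] with ε hε
    refine Eventually.of_forall fun y => ?_
    have hε : 0 < ε := hε
    rw [newt_fderiv hε, norm_mul]
    gcongr
    rcases eq_or_ne (y - x) 0 with h | h
    · simp [h]
    have h' : 0 < ‖y - x‖ := norm_pos_iff.2 h
    have h2 : ‖y - x‖ ≤ √(‖y - x‖ ^ 2 + ε) := by
      apply Real.le_sqrt_of_sq_le; linarith
    rw [norm_neg, norm_div, norm_pow, Real.norm_of_nonneg (Real.sqrt_nonneg _)]
    calc ‖⟪y - x, w⟫‖ / √(‖y - x‖ ^ 2 + ε) ^ 3 ≤ (‖y - x‖ * ‖w‖) / ‖y - x‖ ^ 3 := by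
          gcongr; exact norm_inner_le_norm _ _
      _ = _ := by field_simp
  · refine Eventually.of_forall fun y => ?_
    rcases eq_or_ne (y - x) 0 with h | h
    · refine tendsto_const_nhds.congr' ?_
      filter_upwards [self_mem_nhdsWithin] with ε hε
      rw [newt_fderiv hε]; simp [h]
    have h' : 0 < ‖y - x‖ := norm_pos_iff.2 h
    have h3 : Tendsto (fun ε => g y * -(⟪y - x, w⟫ / √(‖y - x‖ ^ 2 + ε) ^ 3)) (𝓝[>] 0)
        (𝓝 (g y * -(⟪y - x, w⟫ / √(‖y - x‖ ^ 2 + 0) ^ 3))) := by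
      refine Tendsto.mono_left ?_ nhdsWithin_le_nhds
      refine ContinuousAt.tendsto (f := fun ε => g y * -(⟪y - x, w⟫ / √(‖y - x‖ ^ 2 + ε) ^ 3)) ?_
      have : √(‖y - x‖ ^ 2 + 0) ^ 3 ≠ 0 := by simp [h'.ne']
      fun_prop (disch := assumption)
    rw [add_zero, Real.sqrt_sq h'.le] at h3
    refine h3.congr' ?_
    filter_upwards [self_mem_nhdsWithin] with ε hε
    rw [newt_fderiv hε]

/-- Mixed derivatives commute also against the singular kernel: `∂_v f` against `∂_w |y-x|⁻¹`
equals `∂_w f` against `∂_v |y-x|⁻¹`. -/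
lemma kernel_swap (x : V3) {f : V3 → ℝ} (hf : ContDiff ℝ 1 f) (hfc : HasCompactSupport f)
    (v w : V3) : ∫ y, fderiv ℝ f y v * -(⟪y - x, w⟫ / ‖y - x‖ ^ 3) =
      ∫ y, fderiv ℝ f y w * -(⟪y - x, v⟫ / ‖y - x‖ ^ 3) := by
  have c1 : Continuous (fderiv ℝ f) := hf.continuous_fderiv (by norm_num)
  have h1 := kernel_tendsto x (fun y => fderiv ℝ f y v) (by fun_prop) (hfc.fderiv_apply ℝ v) w
  have h2 := kernel_tendsto x (fun y => fderiv ℝ f y w) (by fun_prop) (hfc.fderiv_apply ℝ w) v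
  refine tendsto_nhds_unique h1 (h2.congr' ?_)
  filter_upwards [self_mem_nhdsWithin] with ε hε
  exact (ibp_swap hf hfc (newt_contDiff hε x) v w).symm

lemma kernel_integrable (x w : V3) (g : V3 → ℝ) (hg : Continuous g) (hgc : HasCompactSupport g) :
    Integrable (fun y => g y * -(⟪y - x, w⟫ / ‖y - x‖ ^ 3)) := by
  obtain ⟨C, hC0, hC⟩ := hgc.exists_bound_cont hg
  obtain ⟨R, hR0, hR⟩ := hgc.exists_ball
  refine integrable_dom x _ (Measurable.aestronglyMeasurable (by fun_prop)) (C * ‖w‖)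
      (R + ‖x‖) ?_ ?_
  · intro y hy
    rw [hR y (by have := norm_sub_le y x; linarith)]
    simp
  · intro y
    rw [norm_mul, mul_assoc]
    gcongr
    · exact hC y
    rcases eq_or_ne (y - x) 0 with h | h
    · simp [h]
    have h' : 0 < ‖y - x‖ := norm_pos_iff.2 h
    rw [norm_neg, norm_div, norm_pow, norm_norm]
    calc ‖⟪y - x, w⟫‖ / ‖y - x‖ ^ 3 ≤ (‖y - x‖ * ‖w‖) / ‖y - x‖ ^ 3 := by
          gcongr; exact norm_inner_le_norm _ _
      _ = _ := by field_simp

lemma sum_kernel (x : V3) {f : V3 → ℝ} (hf : ContDiff ℝ 1 f) (hfc : HasCompactSupport f) :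
    ∑ i, ∫ y, fderiv ℝ f y (e3 i) * -(⟪y - x, e3 i⟫ / ‖y - x‖ ^ 3) = 4 * Real.pi * f x := by
  have c1 : Continuous (fderiv ℝ f) := hf.continuous_fderiv (by norm_num)
  rw [← integral_finsetSum]
  · have := integral_fderiv_kernel f hf hfc x
    rw [show 4 * Real.pi * f x = -∫ y, fderiv ℝ f y (y - x) / ‖y - x‖ ^ 3 by rw [this]; ring,
      ← integral_neg]
    congr 1; ext y
    rw [clm_sum_e3 (fderiv ℝ f y) (y - x), Finset.sum_div, ← Finset.sum_neg_distrib]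
    refine Finset.sum_congr rfl fun i _ => ?_
    rw [inner_e3]; ring
  · exact fun i _ => kernel_integrable x _ _ (by fun_prop) (hfc.fderiv_apply ℝ _)

/-- A compactly supported curl-free field is recovered from its divergence by convolution with
the Coulomb kernel. -/
lemma field_div (j : V3 → V3) (hj : ContDiff ℝ 1 j) (hjc : HasCompactSupport j)
    (hsym : ∀ᵐ y, ∀ i k, fderiv ℝ j y (e3 i) k = fderiv ℝ j y (e3 k) i) (x : V3) :
    ∫ y, (divg j y / ‖x - y‖ ^ 3) • (x - y) = (4 * Real.pi) • j x := by
  have c1 : Continuous (fderiv ℝ j) := hj.continuous_fderiv (by norm_num)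
  have c2 : Continuous (divg j) := by unfold divg; fun_prop
  have hc2 : HasCompactSupport (divg j) := (hjc.fderiv ℝ).comp_left
    (g := fun L : V3 →L[ℝ] V3 => ∑ i, L (e3 i) i) (by simp)
  have hjk : ∀ k, ContDiff ℝ 1 (fun y => j y k) := fun k => contDiff_coord hj k
  have hjkc : ∀ k, HasCompactSupport (fun y => j y k) := fun k => hjc.comp_left
    (g := fun v : V3 => v k) (by simp)
  have hd : ∀ y, DifferentiableAt ℝ j y := hj.differentiable (by norm_num)
  have hint : Integrable (fun y => (divg j y / ‖x - y‖ ^ 3) • (x - y)) := by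
    obtain ⟨C, hC0, hC⟩ := hc2.exists_bound_cont c2
    obtain ⟨R, hR0, hR⟩ := hc2.exists_ball
    refine integrable_dom x _ (Measurable.aestronglyMeasurable (by fun_prop)) C (R + ‖x‖) ?_ ?_
    · intro y hy
      rw [hR y (by have := norm_sub_le y x; linarith)]
      simp
    · intro y
      rw [norm_sub_rev y x]
      rcases eq_or_ne (x - y) 0 with h | h
      · simp [h]
      have h' : 0 < ‖x - y‖ := norm_pos_iff.2 h
      rw [norm_smul, norm_div, norm_pow, norm_norm]
      calc ‖divg j y‖ / ‖x - y‖ ^ 3 * ‖x - y‖ ≤ C / ‖x - y‖ ^ 3 * ‖x - y‖ := by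
            gcongr; exact hC y
        _ = _ := by field_simp
  ext k
  have h1 : (∫ y, (divg j y / ‖x - y‖ ^ 3) • (x - y)) k =
      ∫ y, ((divg j y / ‖x - y‖ ^ 3) • (x - y)) k :=
    ((EuclideanSpace.proj (𝕜 := ℝ) k).integral_comp_comm hint).symm
  rw [h1]
  calc ∫ y, ((divg j y / ‖x - y‖ ^ 3) • (x - y)) k
      = ∫ y, ∑ i, fderiv ℝ (fun y => j y i) y (e3 i) * -(⟪y - x, e3 k⟫ / ‖y - x‖ ^ 3) := by
        congr 1; ext y
        simp only [PiLp.smul_apply, smul_eq_mul, inner_e3, PiLp.sub_apply]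
        rw [← Finset.sum_mul, norm_sub_rev y x]
        simp only [fderiv_coord (hd y)]
        unfold divg
        ring
    _ = ∑ i, ∫ y, fderiv ℝ (fun y => j y i) y (e3 i) * -(⟪y - x, e3 k⟫ / ‖y - x‖ ^ 3) := by
        refine integral_finsetSum _ fun i _ => kernel_integrable x _ _ ?_ ((hjkc i).fderiv_apply ℝ _)
        have : Continuous (fderiv ℝ (fun y => j y i)) := (hjk i).continuous_fderiv (by norm_num)
        fun_prop
    _ = ∑ i, ∫ y, fderiv ℝ (fun y => j y i) y (e3 k) * -(⟪y - x, e3 i⟫ / ‖y - x‖ ^ 3) :=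
        Finset.sum_congr rfl fun i _ => kernel_swap x (hjk i) (hjkc i) _ _
    _ = ∑ i, ∫ y, fderiv ℝ (fun y => j y k) y (e3 i) * -(⟪y - x, e3 i⟫ / ‖y - x‖ ^ 3) := by
        refine Finset.sum_congr rfl fun i _ => integral_congr_ae ?_
        filter_upwards [hsym] with y hy
        simp only [fderiv_coord (hd y)]
        rw [hy k i]
    _ = 4 * Real.pi * j x k := sum_kernel x (hjk k) (hjkc k)
    _ = _ := by simp

/-! ### Poisson's equation for the Newtonian potential -/

lemma newt_tendsto (x : V3) (g : V3 → ℝ) (hg : Continuous g) (hgc : HasCompactSupport g) :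
    Tendsto (fun ε => ∫ y, g y * newt ε x y) (𝓝[>] 0) (𝓝 (∫ y, g y * ‖y - x‖⁻¹)) := by
  obtain ⟨C, hC0, hC⟩ := hgc.exists_bound_cont hg
  obtain ⟨R, hR0, hR⟩ := hgc.exists_ball
  have hbi : Integrable (fun y => ‖g y‖ * ‖y - x‖⁻¹) := by
    refine integrable_dom x _ (Measurable.aestronglyMeasurable (by fun_prop)) (C * (R + ‖x‖))
      (R + ‖x‖) ?_ ?_
    · intro y hy
      rw [hR y (by have := norm_sub_le y x; linarith)]
      simp
    · intro y
      rw [Real.norm_of_nonneg (by positivity), mul_assoc]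
      rcases eq_or_ne (g y) 0 with h0 | h0
      · rw [h0]; simp only [norm_zero, zero_mul]; positivity
      have hy : ‖y‖ < R := by by_contra h; exact h0 (hR y (not_lt.1 h))
      gcongr
      · exact hC y
      rcases eq_or_ne (y - x) 0 with h | h
      · simp [h]
      have h' : 0 < ‖y - x‖ := norm_pos_iff.2 h
      rw [mul_one_div, inv_eq_one_div, div_le_div_iff₀ h' (by positivity)]
      have : ‖y - x‖ ≤ R + ‖x‖ := (norm_sub_le y x).trans (by linarith)
      nlinarith
  refine tendsto_integral_filter_of_dominated_convergence _ ?_ ?_ hbi ?_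
  · filter_upwards [self_mem_nhdsWithin] with ε hε
    have : Continuous (newt ε x) := (newt_contDiff hε x).continuous
    exact Continuous.aestronglyMeasurable (by fun_prop)
  · filter_upwards [self_mem_nhdsWithin] with ε hε
    have hε : 0 < ε := hε
    -- the inequality fails at the single point `y = x`, where `‖y - x‖⁻¹ = 0`
    filter_upwards [compl_mem_ae_iff.2 (measure_singleton x)] with y hy
    have h' : 0 < ‖y - x‖ := norm_pos_iff.2 (sub_ne_zero.2 hy)
    rw [norm_mul]
    gcongr
    unfold newt
    rw [Real.norm_of_nonneg (by positivity)]
    gcongr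
    apply Real.le_sqrt_of_sq_le; linarith
  · filter_upwards [compl_mem_ae_iff.2 (measure_singleton x)] with y hy
    have h' : 0 < ‖y - x‖ := norm_pos_iff.2 (sub_ne_zero.2 hy)
    have h3 : Tendsto (fun ε => g y * (√(‖y - x‖ ^ 2 + ε))⁻¹) (𝓝[>] 0)
        (𝓝 (g y * (√(‖y - x‖ ^ 2 + 0))⁻¹)) := by
      refine Tendsto.mono_left ?_ nhdsWithin_le_nhds
      refine ContinuousAt.tendsto (f := fun ε => g y * (√(‖y - x‖ ^ 2 + ε))⁻¹) ?_
      have : √(‖y - x‖ ^ 2 + 0) ≠ 0 := by simp [h'.ne']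
      fun_prop (disch := assumption)
    rw [add_zero, Real.sqrt_sq h'.le] at h3
    exact h3

/-- The Laplacian of a function on `ℝ³`. -/
def lap3 (ψ : V3 → ℝ) (x : V3) : ℝ :=
  ∑ i, fderiv ℝ (fun x => fderiv ℝ ψ x (e3 i)) x (e3 i)

lemma contDiff_partial {ψ : V3 → ℝ} (hψ : ContDiff ℝ 2 ψ) (v : V3) :
    ContDiff ℝ 1 (fun x => fderiv ℝ ψ x v) :=
  (hψ.fderiv_right (m := 1) (by norm_num)).clm_apply contDiff_const

lemma continuous_partial2 {ψ : V3 → ℝ} (hψ : ContDiff ℝ 2 ψ) (v : V3) :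
    Continuous (fun x => fderiv ℝ (fun x => fderiv ℝ ψ x v) x v) := by
  have := (contDiff_partial hψ v).continuous_fderiv (by norm_num)
  fun_prop

lemma lap3_continuous {ψ : V3 → ℝ} (hψ : ContDiff ℝ 2 ψ) : Continuous (lap3 ψ) :=
  continuous_finsetSum _ fun i _ => continuous_partial2 hψ (e3 i)

lemma lap3_compact {ψ : V3 → ℝ} (hψ : HasCompactSupport ψ) : HasCompactSupport (lap3 ψ) := by
  have h : ∀ i, HasCompactSupport
      (fun x => fderiv ℝ (fun x => fderiv ℝ ψ x (e3 i)) x (e3 i)) := fun i =>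
    (hψ.fderiv_apply ℝ (e3 i)).fderiv_apply ℝ (e3 i)
  have : lap3 ψ = fun x => fderiv ℝ (fun x => fderiv ℝ ψ x (e3 0)) x (e3 0) +
      fderiv ℝ (fun x => fderiv ℝ ψ x (e3 1)) x (e3 1) +
      fderiv ℝ (fun x => fderiv ℝ ψ x (e3 2)) x (e3 2) := by
    ext x; simp [lap3, Fin.sum_univ_three]
  rw [this]
  exact ((h 0).add (h 1)).add (h 2)

/-- `-1/(4π|x|)` is the fundamental solution of the Laplacian. -/
lemma lap_newton (ψ : V3 → ℝ) (hψ : ContDiff ℝ 2 ψ) (hψc : HasCompactSupport ψ) (y : V3) :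
    ∫ x, lap3 ψ x * ‖x - y‖⁻¹ = -(4 * Real.pi * ψ y) := by
  have h1 := newt_tendsto y (lap3 ψ) (lap3_continuous hψ) (lap3_compact hψc)
  have c1 : Continuous (fderiv ℝ ψ) := hψ.continuous_fderiv (by norm_num)
  have h2 : Tendsto (fun ε => -∑ i, ∫ x, fderiv ℝ ψ x (e3 i) * fderiv ℝ (newt ε y) x (e3 i))
      (𝓝[>] 0) (𝓝 (-∑ i, ∫ x, fderiv ℝ ψ x (e3 i) * -(⟪x - y, e3 i⟫ / ‖x - y‖ ^ 3))) :=
    (tendsto_finsetSum _ fun i _ => kernel_tendsto y (fun x => fderiv ℝ ψ x (e3 i)) (by fun_prop)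
      (hψc.fderiv_apply ℝ (e3 i)) (e3 i)).neg
  rw [sum_kernel y (hψ.of_le (by norm_num)) hψc] at h2
  refine tendsto_nhds_unique h1 (h2.congr' ?_)
  filter_upwards [self_mem_nhdsWithin] with ε hε
  have cn : ContDiff ℝ 1 (newt ε y) := (newt_contDiff hε y).of_le (by norm_num)
  have cn0 := cn.continuous
  unfold lap3
  simp_rw [Finset.sum_mul]
  rw [integral_finsetSum, ← Finset.sum_neg_distrib]
  · refine Finset.sum_congr rfl fun i _ => ?_
    rw [ibp volume (contDiff_partial hψ (e3 i)) (hψc.fderiv_apply ℝ (e3 i)) cn]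
  · intro i _
    have := continuous_partial2 hψ (e3 i)
    exact Continuous.integrable_of_hasCompactSupport (by fun_prop)
      (((hψc.fderiv_apply ℝ (e3 i)).fderiv_apply ℝ (e3 i)).mul_right)

/-- Poisson's equation `ΔU = 4πρ` (almost everywhere) for a `C²` Newtonian potential. -/
lemma poisson_ae (U ρ : V3 → ℝ) (hU : ContDiff ℝ 2 U) (hρ : Integrable ρ)
    (hP : ∀ x, U x = -∫ y, ρ y / ‖x - y‖) : ∀ᵐ x, lap3 U x = 4 * Real.pi * ρ x := by
  refine ae_eq_of_integral_contDiff_smul_eq (lap3_continuous hU).locallyIntegrable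
    (hρ.const_mul _).locallyIntegrable ?_
  intro ψ hψ hψc
  have hψ2 : ContDiff ℝ 2 ψ := contDiff_infty.1 hψ 2
  have hψ1 : ContDiff ℝ 1 ψ := hψ.of_le (by exact_mod_cast le_top)
  have hU1 : ContDiff ℝ 1 U := hU.of_le (by norm_num)
  have cU := hU.continuous
  -- two integrations by parts
  have e1 : ∫ x, ψ x • lap3 U x = ∫ x, lap3 ψ x * U x := by
    unfold lap3
    simp_rw [Finset.sum_mul, smul_eq_mul, Finset.mul_sum]
    rw [integral_finsetSum, integral_finsetSum]
    · refine Finset.sum_congr rfl fun i _ => ?_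
      rw [ibp volume (contDiff_partial hψ2 (e3 i)) (hψc.fderiv_apply ℝ (e3 i)) hU1,
        ibp volume hψ1 hψc (contDiff_partial hU (e3 i)), neg_neg]
    · intro i _
      have := continuous_partial2 hψ2 (e3 i)
      exact Continuous.integrable_of_hasCompactSupport (by fun_prop)
        (((hψc.fderiv_apply ℝ (e3 i)).fderiv_apply ℝ (e3 i)).mul_right)
    · intro i _
      have := continuous_partial2 hU (e3 i)
      have := hψ.continuous
      exact Continuous.integrable_of_hasCompactSupport (by fun_prop) hψc.mul_right
  have cL := lap3_continuous hψ2
  have hLc := lap3_compact hψc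
  have hLi : Integrable (lap3 ψ) := cL.integrable_of_hasCompactSupport hLc
  obtain ⟨C, hC0, hC⟩ := hLc.exists_bound_cont cL
  have hprod : Integrable (fun q : V3 × V3 => lap3 ψ q.1 * (ρ q.2 / ‖q.1 - q.2‖))
      ((volume : Measure V3).prod volume) := by
    have hκ : Integrable (fun z : V3 =>
        (Metric.ball (0 : V3) 1).indicator (fun z : V3 => 1 / ‖z‖ ^ 2) z) :=
      (integrable_indicator_iff measurableSet_ball).2 (integrableOn_inv_sq 1)
    have i1 : Integrable (fun q : V3 × V3 => ‖ρ q.2‖ *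
        (Metric.ball (0 : V3) 1).indicator (fun z : V3 => 1 / ‖z‖ ^ 2) (q.1 - q.2))
        ((volume : Measure V3).prod volume) :=
      hρ.norm.convolution_integrand (ContinuousLinearMap.mul ℝ ℝ) hκ
    have i2 : Integrable (fun q : V3 × V3 => ‖lap3 ψ q.1‖ * ‖ρ q.2‖)
        ((volume : Measure V3).prod volume) := hLi.norm.mul_prod hρ.norm
    refine ((i1.const_mul C).add i2).mono' ?_ (Eventually.of_forall fun q => ?_)
    · refine AEStronglyMeasurable.mul (by fun_prop) ?_
      have hm : AEStronglyMeasurable (fun q : V3 × V3 => ρ q.2)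
        ((volume : Measure V3).prod volume) := hρ.aestronglyMeasurable.comp_snd
      simp_rw [div_eq_mul_inv]
      exact hm.mul (Measurable.aestronglyMeasurable (by fun_prop))
    · simp only [Pi.add_apply]
      rw [norm_mul, norm_div, norm_norm]
      by_cases hq : q.1 - q.2 ∈ Metric.ball (0 : V3) 1
      · rw [indicator_of_mem hq]
        have : ‖lap3 ψ q.1‖ * (‖ρ q.2‖ / ‖q.1 - q.2‖) ≤ C * (‖ρ q.2‖ * (1 / ‖q.1 - q.2‖ ^ 2)) := by
          have hk : 1 / ‖q.1 - q.2‖ ≤ 1 / ‖q.1 - q.2‖ ^ 2 := by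
            rcases eq_or_ne (q.1 - q.2) 0 with h | h
            · simp [h]
            have h' : 0 < ‖q.1 - q.2‖ := norm_pos_iff.2 h
            have h1 : ‖q.1 - q.2‖ < 1 := by simpa using hq
            rw [div_le_div_iff₀ h' (by positivity)]
            nlinarith
          rw [div_eq_mul_one_div]
          exact mul_le_mul (hC _) (mul_le_mul_of_nonneg_left hk (norm_nonneg _)) (by positivity)
            hC0.le
        have h3 : 0 ≤ ‖lap3 ψ q.1‖ * ‖ρ q.2‖ := by positivity
        linarith
      · rw [indicator_of_notMem hq]
        have h1 : 1 ≤ ‖q.1 - q.2‖ := by simpa using hq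
        have : ‖ρ q.2‖ / ‖q.1 - q.2‖ ≤ ‖ρ q.2‖ := div_le_self (norm_nonneg _) h1
        have : ‖lap3 ψ q.1‖ * (‖ρ q.2‖ / ‖q.1 - q.2‖) ≤ ‖lap3 ψ q.1‖ * ‖ρ q.2‖ := by gcongr
        simpa using this
  rw [e1]
  calc ∫ x, lap3 ψ x * U x = ∫ x, -∫ y, lap3 ψ x * (ρ y / ‖x - y‖) := by
        congr 1; ext x; rw [hP x, integral_const_mul]; ring
    _ = - ∫ y, ∫ x, lap3 ψ x * (ρ y / ‖x - y‖) := by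
        rw [integral_neg, integral_integral_swap hprod]
    _ = ∫ y, ψ y • (4 * Real.pi * ρ y) := by
        rw [← integral_neg]
        congr 1; ext y
        have : ∫ x, lap3 ψ x * (ρ y / ‖x - y‖) = ρ y * ∫ x, lap3 ψ x * ‖x - y‖⁻¹ := by
          rw [← integral_const_mul]; congr 1; ext x; ring
        rw [this, lap_newton ψ hψ2 hψc y, smul_eq_mul]; ring

/-! ### Rotations, radial fields and the vanishing of odd functions -/

/-- The half-turn about the axis spanned by `w`. -/
def halfTurn (w : V3) : V3 ≃ₗᵢ[ℝ] V3 := (ℝ ∙ w).reflection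

lemma halfTurn_isRot {w : V3} (hw : w ≠ 0) : IsRot (halfTurn w) := by
  have h1 : Module.finrank ℝ (ℝ ∙ w)ᗮ = 2 := by
    have := (ℝ ∙ w).finrank_add_finrank_orthogonal
    rw [finrank_V3, finrank_span_singleton hw] at this
    omega
  have := (ℝ ∙ w).det_reflection
  rw [h1] at this
  unfold IsRot halfTurn
  rw [show ((-1 : ℝ)) ^ 2 = 1 by norm_num] at this
  exact this

lemma halfTurn_self (w : V3) : halfTurn w w = w :=
  Submodule.reflection_mem_subspace_eq_self (Submodule.mem_span_singleton_self w)

lemma halfTurn_perp {w v : V3} (h : ⟪w, v⟫ = 0) : halfTurn w v = -v :=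
  Submodule.reflection_mem_subspace_orthogonalComplement_eq_neg
    ((Submodule.mem_orthogonal_singleton_iff_inner_right).2 h)

lemma exists_perp (x : V3) : ∃ w : V3, w ≠ 0 ∧ ⟪w, x⟫ = 0 := by
  have h1 : 0 < Module.finrank ℝ (ℝ ∙ x)ᗮ := by
    have := (ℝ ∙ x).finrank_add_finrank_orthogonal
    have h2 := finrank_span_le_card (R := ℝ) ({x} : Set V3)
    rw [finrank_V3] at this
    simp at h2
    omega
  have := Module.finrank_pos_iff.1 h1
  obtain ⟨⟨w, hw⟩, hne⟩ := exists_ne (0 : (ℝ ∙ x)ᗮ)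
  exact ⟨w, fun h => hne (Subtype.ext h), Submodule.mem_orthogonal_singleton_iff_inner_left.1 hw⟩

/-- Rotations act transitively on spheres. -/
lemma exists_rot {x y : V3} (h : ‖x‖ = ‖y‖) : ∃ A : V3 ≃ₗᵢ[ℝ] V3, IsRot A ∧ A x = y := by
  by_cases hs : x + y = 0
  · obtain ⟨w, hw, hwx⟩ := exists_perp x
    exact ⟨halfTurn w, halfTurn_isRot hw, by
      rw [halfTurn_perp hwx]; exact neg_eq_of_add_eq_zero_right hs⟩
  · refine ⟨halfTurn (x + y), halfTurn_isRot hs, ?_⟩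
    have h1 : ⟪x + y, x - y⟫ = 0 := by
      rw [inner_add_left, inner_sub_right, inner_sub_right, real_inner_self_eq_norm_sq,
        real_inner_self_eq_norm_sq, real_inner_comm x y, h]
      ring
    have h2 : x = (2⁻¹ : ℝ) • (x + y) + (2⁻¹ : ℝ) • (x - y) := by
      rw [← smul_add]; simp [← two_smul ℝ x]
    have h3 : y = (2⁻¹ : ℝ) • (x + y) + (2⁻¹ : ℝ) • (-(x - y)) := by
      rw [← smul_add, neg_sub, show x + y + (y - x) = (2 : ℝ) • y by rw [two_smul]; abel]
      simp
    calc halfTurn (x + y) x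
        = halfTurn (x + y) ((2⁻¹ : ℝ) • (x + y) + (2⁻¹ : ℝ) • (x - y)) := by rw [← h2]
      _ = (2⁻¹ : ℝ) • (x + y) + (2⁻¹ : ℝ) • (-(x - y)) := by
          rw [map_add, map_smul, map_smul, halfTurn_self, halfTurn_perp h1]
      _ = y := h3.symm

/-- A rotation-equivariant vector field is radial. -/
lemma equivariant_radial (j : V3 → V3)
    (hj : ∀ A : V3 ≃ₗᵢ[ℝ] V3, IsRot A → ∀ x, j (A x) = A (j x)) :
    ∃ l : ℝ → ℝ, ∀ x, x ≠ 0 → j x = l ‖x‖ • x := by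
  have hpar : ∀ x : V3, x ≠ 0 → ∃ c : ℝ, c • x = j x := by
    intro x hx
    have h1 := hj (halfTurn x) (halfTurn_isRot hx) x
    rw [halfTurn_self] at h1
    exact Submodule.mem_span_singleton.1 ((Submodule.reflection_eq_self_iff _).1 h1.symm)
  choose! c hc using hpar
  refine ⟨fun r => c (r • e3 0), fun x hx => ?_⟩
  have hu : ‖e3 0‖ = 1 := by simp [e3]
  have hn : ‖‖x‖ • e3 0‖ = ‖x‖ := by rw [norm_smul, hu]; simp
  obtain ⟨A, hA, hAx⟩ := exists_rot hn
  have hne : ‖x‖ • e3 0 ≠ 0 := by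
    intro h0; rw [h0, norm_zero] at hn; exact hx (norm_eq_zero.1 hn.symm)
  conv_lhs => rw [← hAx, hj A hA, ← hc _ hne, map_smul, hAx]

/-- The derivative of a radial vector field `l(|y|) y` is `l(|x|) Id + c x ⊗ x`. -/
lemma radial_fderiv {F : V3 → V3} {l : ℝ → ℝ} (hF : ∀ y, y ≠ 0 → F y = l ‖y‖ • y) {x : V3}
    (hx : x ≠ 0) (hd : DifferentiableAt ℝ F x) :
    ∃ c : ℝ, ∀ v, fderiv ℝ F x v = l ‖x‖ • v + (c * ⟪x, v⟫) • x := by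
  have hxn : 0 < ‖x‖ := norm_pos_iff.2 hx
  set e : V3 := ‖x‖⁻¹ • x with he
  have hen : ‖e‖ = 1 := by rw [he, norm_smul]; simp [hxn.ne']
  have hxe : ‖x‖ • e = x := by rw [he, smul_smul, mul_inv_cancel₀ hxn.ne', one_smul]
  -- `l` is recovered from `F` along the ray through `x`, hence differentiable
  have hl : DifferentiableAt ℝ l ‖x‖ := by
    have h1 : DifferentiableAt ℝ (fun r : ℝ => ⟪F (r • e), e⟫ / r) ‖x‖ := by
      have h2 : DifferentiableAt ℝ (fun r : ℝ => F (r • e)) ‖x‖ := by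
        have h3 : DifferentiableAt ℝ F (‖x‖ • e) := by rw [hxe]; exact hd
        exact h3.comp (f := fun r : ℝ => r • e) ‖x‖ (by fun_prop)
      exact (h2.inner ℝ (differentiableAt_const e)).div differentiableAt_id hxn.ne'
    refine h1.congr_of_eventuallyEq ?_
    filter_upwards [lt_mem_nhds hxn] with r hr
    have hne : r • e ≠ 0 := smul_ne_zero hr.ne' (by rw [← norm_pos_iff, hen]; norm_num)
    rw [hF _ hne, norm_smul, hen, inner_smul_left, inner_smul_left, real_inner_self_eq_norm_sq, hen]
    simp [abs_of_pos hr, hr.ne']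
  have hn : HasFDerivAt (fun y : V3 => ‖y‖) (‖x‖⁻¹ • innerSL ℝ x) x := by
    have h1 : HasFDerivAt (fun y : V3 => ‖y‖ ^ 2) (2 • innerSL ℝ x) x :=
      (hasStrictFDerivAt_norm_sq x).hasFDerivAt
    have h2 := h1.sqrt (by positivity)
    have h3 : (fun y : V3 => √(‖y‖ ^ 2)) = fun y => ‖y‖ := by
      ext y; exact Real.sqrt_sq (norm_nonneg y)
    rw [h3, Real.sqrt_sq hxn.le] at h2
    convert! h2 using 1
    ext v; simp; field_simp
  have h5 : HasFDerivAt (fun y : V3 => l ‖y‖ • y) _ x :=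
    (hl.hasDerivAt.comp_hasFDerivAt x hn).smul (hasFDerivAt_id x)
  have h6 : fderiv ℝ F x = _ := (h5.congr_of_eventuallyEq (by
    filter_upwards [isOpen_ne.mem_nhds hx] with y hy using hF y hy)).fderiv
  refine ⟨deriv l ‖x‖ * ‖x‖⁻¹, fun v => ?_⟩
  rw [h6]
  simp [mul_assoc]

/-- A radial vector field is curl free away from the origin. -/
lemma radial_symm {F : V3 → V3} {l : ℝ → ℝ} (hF : ∀ y, y ≠ 0 → F y = l ‖y‖ • y) {x : V3}
    (hx : x ≠ 0) (hd : DifferentiableAt ℝ F x) (i k : Fin 3) :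
    fderiv ℝ F x (e3 i) k = fderiv ℝ F x (e3 k) i := by
  obtain ⟨c, hc⟩ := radial_fderiv hF hx hd
  rw [hc, hc, inner_e3, inner_e3]
  by_cases hik : i = k
  · subst hik; rfl
  · simp [e3, hik, Ne.symm hik]; ring

/-- A rotation invariant function, odd in `p`, vanishes where `x ⟂ p`. -/
lemma vanish_perp {h : V3 × V3 → ℝ}
    (hsym : ∀ A : V3 ≃ₗᵢ[ℝ] V3, IsRot A → ∀ x p : V3, h (A x, A p) = h (x, p))
    (hodd : ∀ x p : V3, h (x, -p) = -h (x, p)) (x p : V3) (hxp : ⟪x, p⟫ = 0) :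
    h (x, p) = 0 := by
  have key : ∀ w : V3, w ≠ 0 → halfTurn w x = x → halfTurn w p = -p → h (x, p) = 0 := by
    intro w hw h1 h2
    have := hsym _ (halfTurn_isRot hw) x p
    rw [h1, h2, hodd] at this
    linarith
  by_cases hx : x = 0
  · obtain ⟨w, hw, hwp⟩ := exists_perp p
    exact key w hw (by rw [hx, map_zero]) (halfTurn_perp hwp)
  · exact key x hx (halfTurn_self x) (halfTurn_perp hxp)

/-- Quantitative form of `vanish_perp`, obtained by moving `(x,p)` to the cone `x ⟂ p`. -/
lemma bound_perp {h : V3 × V3 → ℝ}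
    (hsym : ∀ A : V3 ≃ₗᵢ[ℝ] V3, IsRot A → ∀ x p : V3, h (A x, A p) = h (x, p))
    (hodd : ∀ x p : V3, h (x, -p) = -h (x, p)) (hh : ContDiff ℝ 1 h) (hc : HasCompactSupport h) :
    ∃ L > 0, ∀ x p : V3, |h (x, p)| * ‖x‖ ≤ L * |⟪x, p⟫| ∧ |h (x, p)| * ‖p‖ ≤ L * |⟪x, p⟫| := by
  obtain ⟨K, hK⟩ := hh.lipschitzWith_of_hasCompactSupport hc (by norm_num)
  refine ⟨K + 1, by positivity, fun x p => ⟨?_, ?_⟩⟩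
  · rcases eq_or_ne x 0 with hx | hx
    · simp [hx]
    have hx' : 0 < ‖x‖ := norm_pos_iff.2 hx
    set p' := p - (⟪x, p⟫ / ‖x‖ ^ 2) • x with hp'
    have h0 : h (x, p') = 0 := vanish_perp hsym hodd _ _ (by
      rw [hp', inner_sub_right, inner_smul_right, real_inner_self_eq_norm_sq]; field_simp; ring)
    have h1 := hK.dist_le_mul (x, p) (x, p')
    rw [h0, Real.dist_eq, sub_zero, Prod.dist_eq] at h1
    simp only [dist_self] at h1
    rw [max_eq_right dist_nonneg, dist_eq_norm, hp', sub_sub_cancel, norm_smul, norm_div,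
      norm_pow, norm_norm, Real.norm_eq_abs] at h1
    calc |h (x, p)| * ‖x‖ ≤ (K * (|⟪x, p⟫| / ‖x‖ ^ 2 * ‖x‖)) * ‖x‖ := by gcongr
      _ = K * |⟪x, p⟫| := by field_simp
      _ ≤ _ := by nlinarith [abs_nonneg ⟪x, p⟫]
  · rcases eq_or_ne p 0 with hx | hx
    · simp [hx]
    have hx' : 0 < ‖p‖ := norm_pos_iff.2 hx
    set p' := x - (⟪x, p⟫ / ‖p‖ ^ 2) • p with hp'
    have h0 : h (p', p) = 0 := vanish_perp hsym hodd _ _ (by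
      rw [hp', inner_sub_left, inner_smul_left, real_inner_self_eq_norm_sq]
      simp; field_simp; ring)
    have h1 := hK.dist_le_mul (x, p) (p', p)
    rw [h0, Real.dist_eq, sub_zero, Prod.dist_eq] at h1
    simp only [dist_self] at h1
    rw [max_eq_left dist_nonneg, dist_eq_norm, hp', sub_sub_cancel, norm_smul, norm_div,
      norm_pow, norm_norm, Real.norm_eq_abs] at h1
    calc |h (x, p)| * ‖p‖ ≤ (K * (|⟪x, p⟫| / ‖p‖ ^ 2 * ‖p‖)) * ‖p‖ := by gcongr
      _ = K * |⟪x, p⟫| := by field_simp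
      _ ≤ _ := by nlinarith [abs_nonneg ⟪x, p⟫]

/-! ### The characteristic vector field -/

/-- The relativistic velocity `p/√(1+|p|²)`. -/
def vel (p : V3) : V3 := (√(1 + ‖p‖ ^ 2))⁻¹ • p

/-- The characteristic vector field with the sign for which `{E, g} = dg(X)`. -/
def charX (U : V3 → ℝ) (z : V3 × V3) : V3 × V3 := (-vel z.2, gradient U z.1)

/-- The derivative `{E, g}` along the characteristic vector field. -/
def DX (U : V3 → ℝ) (g : V3 × V3 → ℝ) (z : V3 × V3) : ℝ := fderiv ℝ g z (charX U z)

lemma inner_grad (U : V3 → ℝ) (x w : V3) : ⟪gradient U x, w⟫ = fderiv ℝ U x w := by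
  simp [gradient, InnerProductSpace.toDual_symm_apply]

lemma sqrt_contDiff {n : WithTop ℕ∞} : ContDiff ℝ n (fun p : V3 => √(1 + ‖p‖ ^ 2)) :=
  (contDiff_const.add (contDiff_id.norm_sq ℝ)).sqrt fun p => by positivity

lemma vel_contDiff {n : WithTop ℕ∞} : ContDiff ℝ n vel :=
  (sqrt_contDiff.inv fun p => by positivity).smul contDiff_id

lemma grad_contDiff {U : V3 → ℝ} (hU : ContDiff ℝ 2 U) : ContDiff ℝ 1 (gradient U) := by
  unfold gradient
  exact ((InnerProductSpace.toDual ℝ V3).symm.contDiff).comp (hU.fderiv_right (m := 1) (by norm_num))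

lemma Erel_contDiff {U : V3 → ℝ} (hU : ContDiff ℝ 2 U) : ContDiff ℝ 2 (Erel U) :=
  (sqrt_contDiff.comp contDiff_snd).add (hU.comp contDiff_fst)

lemma charX_contDiff {U : V3 → ℝ} (hU : ContDiff ℝ 2 U) : ContDiff ℝ 1 (charX U) :=
  ((vel_contDiff.comp contDiff_snd).neg).prodMk ((grad_contDiff hU).comp contDiff_fst)

lemma grad_fst {g : V3 × V3 → ℝ} {z : V3 × V3} (hg : DifferentiableAt ℝ g z) (w : V3) :
    ⟪gradient (fun x => g (x, z.2)) z.1, w⟫ = fderiv ℝ g z (w, 0) := by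
  rw [inner_grad]
  have h1 : HasFDerivAt (fun x : V3 => (x, z.2)) ((ContinuousLinearMap.id ℝ V3).prod 0) z.1 :=
    (hasFDerivAt_id z.1).prodMk (hasFDerivAt_const z.2 z.1)
  have h2 := (hg.hasFDerivAt.comp (f := fun x : V3 => (x, z.2)) z.1 h1).fderiv
  have h3 : fderiv ℝ (fun x => g (x, z.2)) z.1 = _ := h2
  rw [h3]; simp

lemma grad_snd {g : V3 × V3 → ℝ} {z : V3 × V3} (hg : DifferentiableAt ℝ g z) (w : V3) :
    ⟪gradient (fun p => g (z.1, p)) z.2, w⟫ = fderiv ℝ g z (0, w) := by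
  rw [inner_grad]
  have h1 : HasFDerivAt (fun p : V3 => (z.1, p))
      ((0 : V3 →L[ℝ] V3).prod (ContinuousLinearMap.id ℝ V3)) z.2 :=
    (hasFDerivAt_const z.1 z.2).prodMk (hasFDerivAt_id z.2)
  have h2 := (hg.hasFDerivAt.comp (f := fun p : V3 => (z.1, p)) z.2 h1).fderiv
  have h3 : fderiv ℝ (fun p => g (z.1, p)) z.2 = _ := h2
  rw [h3]; simp

lemma sqrt_hasFDerivAt (p : V3) : HasFDerivAt (fun p : V3 => √(1 + ‖p‖ ^ 2))
    ((√(1 + ‖p‖ ^ 2))⁻¹ • innerSL ℝ p) p := by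
  have h1 : HasFDerivAt (fun p : V3 => 1 + ‖p‖ ^ 2) (2 • innerSL ℝ p) p :=
    ((hasStrictFDerivAt_norm_sq p).hasFDerivAt).const_add 1
  convert! h1.sqrt (by positivity) using 1
  ext v; simp; field_simp

lemma Erel_fderiv {U : V3 → ℝ} (hU : ContDiff ℝ 2 U) (z w : V3 × V3) :
    fderiv ℝ (Erel U) z w = ⟪vel z.2, w.2⟫ + ⟪gradient U z.1, w.1⟫ := by
  have h1 : HasFDerivAt (fun z : V3 × V3 => √(1 + ‖z.2‖ ^ 2)) _ z :=
    (sqrt_hasFDerivAt z.2).comp z hasFDerivAt_snd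
  have h2 : HasFDerivAt (fun z : V3 × V3 => U z.1) _ z :=
    ((hU.differentiable (by norm_num) z.1).hasFDerivAt).comp z hasFDerivAt_fst
  have h3 : fderiv ℝ (Erel U) z = _ := (h1.add h2).fderiv
  rw [h3, inner_grad]
  simp [vel, inner_smul_left]

/-- The Poisson bracket with the energy is the derivative along the characteristic field. -/
lemma pbracket_eq {U : V3 → ℝ} (hU : ContDiff ℝ 2 U) {g : V3 × V3 → ℝ} {z : V3 × V3}
    (hg : DifferentiableAt ℝ g z) : pbracket (Erel U) g z = DX U g z := by
  have hE : DifferentiableAt ℝ (Erel U) z := (Erel_contDiff hU).differentiable (by norm_num) z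
  have h1 : gradient (fun x => Erel U (x, z.2)) z.1 = gradient U z.1 := by
    refine ext_inner_right ℝ fun w => ?_
    rw [grad_fst hE, Erel_fderiv hU]; simp
  have h2 : gradient (fun p => Erel U (z.1, p)) z.2 = vel z.2 := by
    refine ext_inner_right ℝ fun w => ?_
    rw [grad_snd hE, Erel_fderiv hU]; simp
  unfold pbracket DX
  rw [h1, h2, real_inner_comm, grad_snd hg, real_inner_comm, grad_fst hg, ← map_sub]
  simp [charX]

/-- The energy is conserved by the characteristic flow. -/
lemma DX_E {U : V3 → ℝ} (hU : ContDiff ℝ 2 U) (z : V3 × V3) : DX U (Erel U) z = 0 := by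
  unfold DX
  rw [Erel_fderiv hU]
  simp [charX]

lemma DX_continuous {U : V3 → ℝ} (hU : ContDiff ℝ 2 U) {g : V3 × V3 → ℝ} (hg : ContDiff ℝ 1 g) :
    Continuous (DX U g) := by
  have h1 := hg.continuous_fderiv (by norm_num)
  have h2 := (charX_contDiff hU).continuous
  exact h1.clm_apply h2

/-- The characteristic derivative as a one-variable derivative, from which its calculus rules are
inherited. -/
lemma DX_line {U : V3 → ℝ} {g : V3 × V3 → ℝ} {z : V3 × V3} (hg : DifferentiableAt ℝ g z) :
    HasDerivAt (fun t : ℝ => g (z + t • charX U z)) (DX U g z) 0 :=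
  hg.hasFDerivAt.hasLineDerivAt (charX U z)

/-- The characteristic flow preserves volume. -/
lemma integral_DX {U : V3 → ℝ} (hU : ContDiff ℝ 2 U) {G : V3 × V3 → ℝ} (hG : ContDiff ℝ 1 G)
    (hGc : HasCompactSupport G) : ∫ z, DX U G z = 0 := by
  have cX := charX_contDiff hU
  have cG := hG.continuous_fderiv (by norm_num)
  have hN := grad_contDiff hU
  have hsplit : ∀ z, DX U G z =
      ∑ i, (fderiv ℝ G z (0, e3 i) * gradient U z.1 i - fderiv ℝ G z (e3 i, 0) * vel z.2 i) := by
    intro z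
    have h1 := clm_sum_e3 ((fderiv ℝ G z).comp (ContinuousLinearMap.inr ℝ V3 V3)) (gradient U z.1)
    have h2 := clm_sum_e3 ((fderiv ℝ G z).comp (ContinuousLinearMap.inl ℝ V3 V3)) (vel z.2)
    simp only [ContinuousLinearMap.comp_apply, ContinuousLinearMap.inr_apply,
      ContinuousLinearMap.inl_apply] at h1 h2
    rw [Finset.sum_sub_distrib, ← h1, ← h2, ← map_sub]
    simp [DX, charX]
  have hA : ∀ i, ContDiff ℝ 1 (fun z : V3 × V3 => gradient U z.1 i) := fun i =>
    (contDiff_coord hN i).comp contDiff_fst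
  have hB : ∀ i, ContDiff ℝ 1 (fun z : V3 × V3 => vel z.2 i) := fun i =>
    (contDiff_coord (n := 1) vel_contDiff i).comp contDiff_snd
  have hAf : ∀ i z w, fderiv ℝ (fun z : V3 × V3 => gradient U z.1 i) z (0, w) = 0 := by
    intro i z w
    have h1 : HasFDerivAt (fun z : V3 × V3 => gradient U z.1 i) _ z :=
      (((contDiff_coord hN i).differentiable (by norm_num) z.1).hasFDerivAt).comp z hasFDerivAt_fst
    rw [h1.fderiv]; simp
  have hBf : ∀ i z w, fderiv ℝ (fun z : V3 × V3 => vel z.2 i) z (w, 0) = 0 := by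
    intro i z w
    have h1 : HasFDerivAt (fun z : V3 × V3 => vel z.2 i) _ z :=
      (((contDiff_coord (n := 1) vel_contDiff i).differentiable (by norm_num) z.2).hasFDerivAt).comp
        z hasFDerivAt_snd
    rw [h1.fderiv]; simp
  have cA : ∀ i, Continuous (fun z : V3 × V3 => gradient U z.1 i) := fun i => (hA i).continuous
  have cB : ∀ i, Continuous (fun z : V3 × V3 => vel z.2 i) := fun i => (hB i).continuous
  have iA : ∀ i, Integrable (fun z => fderiv ℝ G z (0, e3 i) * gradient U z.1 i) := fun i =>
    Continuous.integrable_of_hasCompactSupport ((cG.clm_apply continuous_const).mul (cA i))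
      ((hGc.fderiv_apply ℝ _).mul_right)
  have iB : ∀ i, Integrable (fun z => fderiv ℝ G z (e3 i, 0) * vel z.2 i) := fun i =>
    Continuous.integrable_of_hasCompactSupport ((cG.clm_apply continuous_const).mul (cB i))
      ((hGc.fderiv_apply ℝ _).mul_right)
  simp_rw [hsplit]
  rw [integral_finsetSum]
  swap
  · intro i _; exact (iA i).sub (iB i)
  refine Finset.sum_eq_zero fun i _ => ?_
  have hHaar : (volume : Measure (V3 × V3)).IsAddHaarMeasure := by
    rw [Measure.volume_eq_prod]; infer_instance
  rw [integral_sub (iA i) (iB i), ibp volume hG hGc (hA i), ibp volume hG hGc (hB i)]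
  simp [hAf, hBf]

/-- The characteristic derivative integrates to zero against functions of the energy. -/
lemma integral_weight_DX {U : V3 → ℝ} (hU : ContDiff ℝ 2 U) {W F : V3 × V3 → ℝ}
    (hF : ContDiff ℝ 1 F) (hFc : HasCompactSupport F)
    (hW : ∀ z ∈ tsupport F, ContDiffAt ℝ 1 W z ∧ DX U W z = 0) :
    ∫ z, W z * DX U F z = 0 := by
  have hG : ContDiff ℝ 1 (fun z => W z * F z) := by
    refine contDiff_iff_contDiffAt.2 fun z => ?_
    by_cases hz : z ∈ tsupport F
    · exact (hW z hz).1.mul hF.contDiffAt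
    · have h0 : (fun z => W z * F z) =ᶠ[𝓝 z] fun _ => 0 := by
        filter_upwards [notMem_tsupport_iff_eventuallyEq.1 hz] with y hy
        simp [hy]
      exact contDiffAt_const.congr_of_eventuallyEq h0
  rw [← integral_DX hU hG hFc.mul_left]
  congr 1; ext z
  by_cases hz : z ∈ tsupport F
  · have h1 := (hW z hz).1.differentiableAt (by norm_num)
    have h2 : DifferentiableAt ℝ F z := hF.differentiable (by norm_num) z
    have h3 := (hW z hz).2
    unfold DX at h3 ⊢
    rw [fderiv_fun_mul h1 h2]
    simp [h3]
  · have h1 : fderiv ℝ F z = 0 := by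
      by_contra hne
      exact hz (support_fderiv_subset ℝ hne)
    have h2 : fderiv ℝ (fun z => W z * F z) z = 0 := by
      by_contra hne
      exact hz (tsupport_mul_subset_right (support_fderiv_subset ℝ hne))
    simp [DX, h1, h2]

/-! ### The characteristic derivatives of `x·p` -/

/-- The radial momentum weight `x·p`. -/
def aa (z : V3 × V3) : ℝ := ⟪z.1, z.2⟫

/-- The derivative of `x·p` along the characteristic vector field. -/
def bb (U : V3 → ℝ) (z : V3 × V3) : ℝ :=
  ⟪z.1, gradient U z.1⟫ - ‖z.2‖ ^ 2 * (√(1 + ‖z.2‖ ^ 2))⁻¹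

lemma aa_contDiff {n : WithTop ℕ∞} : ContDiff ℝ n aa := contDiff_fst.inner ℝ contDiff_snd

lemma bb_contDiff {U : V3 → ℝ} (hU : ContDiff ℝ 2 U) : ContDiff ℝ 1 (bb U) :=
  (contDiff_fst.inner ℝ ((grad_contDiff hU).comp contDiff_fst)).sub
    ((contDiff_snd.norm_sq ℝ).mul ((sqrt_contDiff.inv fun p => by positivity).comp contDiff_snd))

lemma DX_aa (U : V3 → ℝ) (z : V3 × V3) : DX U aa z = bb U z := by
  have h1 : HasFDerivAt aa _ z := hasFDerivAt_fst.inner ℝ hasFDerivAt_snd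
  unfold DX
  rw [h1.fderiv]
  simp [charX, bb, vel, inner_smul_left]
  ring

lemma divg_radial {N : V3 → V3} {x : V3} {l c : ℝ}
    (hN : ∀ v, fderiv ℝ N x v = l • v + (c * ⟪x, v⟫) • x) : divg N x = 3 * l + c * ‖x‖ ^ 2 := by
  simp only [divg, hN, inner_e3]
  simp [e3, Finset.sum_add_distrib, EuclideanSpace.norm_sq_eq, Finset.mul_sum]
  simp [Fin.sum_univ_three]
  ring

/-- The radial structure of the potential turns the derivative of `bb` into a multiple of
`x·p`. -/
lemma DX_bb {U : V3 → ℝ} (hU : ContDiff ℝ 2 U) {l : ℝ → ℝ}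
    (hN : ∀ x, x ≠ 0 → gradient U x = l ‖x‖ • x) {z : V3 × V3} (hz : z.1 ≠ 0) :
    DX U (bb U) z = -aa z * (divg (gradient U) z.1 / √(1 + ‖z.2‖ ^ 2) +
      l ‖z.1‖ / √(1 + ‖z.2‖ ^ 2) ^ 3) := by
  have hd : DifferentiableAt ℝ (gradient U) z.1 :=
    (grad_contDiff hU).differentiable (by norm_num) z.1
  obtain ⟨c, hc⟩ := radial_fderiv hN hz hd
  have h1 : HasFDerivAt (fun z : V3 × V3 => ⟪z.1, gradient U z.1⟫) _ z :=
    hasFDerivAt_fst.inner ℝ (hd.hasFDerivAt.comp z hasFDerivAt_fst)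
  have h2 : HasFDerivAt (fun z : V3 × V3 => ‖z.2‖ ^ 2)
      ((2 • innerSL ℝ z.2).comp (ContinuousLinearMap.snd ℝ V3 V3)) z :=
    ((hasStrictFDerivAt_norm_sq z.2).hasFDerivAt).comp z hasFDerivAt_snd
  have hs : 0 < √(1 + ‖z.2‖ ^ 2) := by positivity
  have h3 : HasFDerivAt (fun z : V3 × V3 => √(1 + ‖z.2‖ ^ 2)) _ z :=
    (sqrt_hasFDerivAt z.2).comp z hasFDerivAt_snd
  have h4 := (hasDerivAt_inv hs.ne').comp_hasFDerivAt z h3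
  have h5 : HasFDerivAt (bb U) _ z := h1.sub (h2.mul h4)
  have hsq : √(1 + ‖z.2‖ ^ 2) ^ 2 = 1 + ‖z.2‖ ^ 2 := Real.sq_sqrt (by positivity)
  have hdiv := divg_radial hc
  unfold DX
  rw [h5.fderiv, hdiv]
  simp only [charX, hN z.1 hz]
  simp [hc, vel, inner_smul_left, inner_smul_right, aa, real_inner_comm z.1 z.2,
    inner_add_right, inner_neg_right, inner_neg_left]
  set s := √(1 + ‖z.2‖ ^ 2) with hsdef
  have hp : ‖z.2‖ ^ 2 = s ^ 2 - 1 := by linarith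
  rw [hp]
  field_simp
  ring

/-- The radial coefficient is an eigenvalue of the derivative, on vectors orthogonal to `x`. -/
lemma radial_coeff_le {N : V3 → V3} {x : V3} {l c : ℝ}
    (hN : ∀ v, fderiv ℝ N x v = l • v + (c * ⟪x, v⟫) • x) : |l| ≤ ‖fderiv ℝ N x‖ := by
  obtain ⟨w, hw, hp⟩ := exists_perp x
  have h1 := (fderiv ℝ N x).le_opNorm w
  rw [hN w, real_inner_comm, hp] at h1
  simp [norm_smul] at h1
  exact le_of_mul_le_mul_right h1 (norm_pos_iff.2 hw)

/-- The set where `x·p` vanishes is negligible. -/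
lemma aa_ne_zero_ae : ∀ᵐ z : V3 × V3, aa z ≠ 0 := by
  have hm : MeasurableSet {z : V3 × V3 | aa z = 0} :=
    (isClosed_singleton (x := (0 : ℝ)).preimage (aa_contDiff (n := 0)).continuous).measurableSet
  rw [ae_iff]
  simp only [not_not]
  rw [Measure.volume_eq_prod, Measure.measure_prod_null hm]
  have h0 : ∀ᵐ x : V3, x ≠ 0 := by simp [ae_iff]
  filter_upwards [h0] with x hx
  have h1 : Prod.mk x ⁻¹' {z : V3 × V3 | aa z = 0} =
      (LinearMap.ker (innerSL ℝ x : V3 →L[ℝ] ℝ).toLinearMap : Set V3) := by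
    ext p; simp [aa]
  rw [h1]
  refine Measure.addHaar_submodule _ _ fun htop => hx ?_
  have : x ∈ LinearMap.ker (innerSL ℝ x : V3 →L[ℝ] ℝ).toLinearMap := by rw [htop]; trivial
  simpa using this

lemma diff_div {a b : V3 × V3 → ℝ} {z : V3 × V3} (ha : DifferentiableAt ℝ a z)
    (hb : DifferentiableAt ℝ b z) (h0 : b z ≠ 0) :
    DifferentiableAt ℝ (fun z => a z / b z) z := by
  simp_rw [div_eq_mul_inv]
  exact ha.mul (hb.fun_inv h0)

/-- Product and quotient rules for `h² b a / (a² + ε)` when `b` is the derivative of `a`. -/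
lemma DX_reg {U : V3 → ℝ} {h a b : V3 × V3 → ℝ} {z : V3 × V3} (hh : DifferentiableAt ℝ h z)
    (ha : DifferentiableAt ℝ a z) (hb : DifferentiableAt ℝ b z) (hab : DX U a z = b z) {ε : ℝ}
    (hε : 0 < ε) :
    DX U (fun z => h z ^ 2 * b z * (a z / (a z ^ 2 + ε))) z =
      2 * (h z * b z) * DX U h z * (a z / (a z ^ 2 + ε)) +
      h z ^ 2 * DX U b z * (a z / (a z ^ 2 + ε)) +
      (h z * b z) ^ 2 * ((ε - a z ^ 2) / (a z ^ 2 + ε) ^ 2) := by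
  have hp : 0 < a z ^ 2 + ε := by positivity
  have hd : DifferentiableAt ℝ (fun z => h z ^ 2 * b z * (a z / (a z ^ 2 + ε))) z := by
    have : DifferentiableAt ℝ (fun z => a z / (a z ^ 2 + ε)) z :=
      diff_div ha ((ha.pow 2).add_const ε) hp.ne'
    exact ((hh.pow 2).mul hb).mul this
  have e1 := DX_line (U := U) hh
  have e2 := DX_line (U := U) ha
  have e3 := DX_line (U := U) hb
  have e4 := DX_line (U := U) hd
  have hp' : a (z + (0 : ℝ) • charX U z) ^ 2 + ε ≠ 0 := by simpa using hp.ne'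
  have e5 := ((e1.fun_pow 2).fun_mul e3).fun_mul (e2.fun_div ((e2.fun_pow 2).add_const ε) hp')
  rw [e4.unique e5, hab]
  simp
  field_simp
  ring

lemma DX_quot {U : V3 → ℝ} {h a : V3 × V3 → ℝ} {z : V3 × V3} (hh : DifferentiableAt ℝ h z)
    (ha : DifferentiableAt ℝ a z) (h0 : a z ≠ 0) :
    DX U (fun z => h z / a z) z = (DX U h z * a z - h z * DX U a z) / a z ^ 2 := by
  have e1 := DX_line (U := U) hh
  have e2 := DX_line (U := U) ha
  have e4 := DX_line (U := U) (diff_div hh ha h0)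
  have hp' : a (z + (0 : ℝ) • charX U z) ≠ 0 := by simpa using h0
  rw [e4.unique (e1.fun_div e2 hp')]
  simp

/-! ### A total derivative with a removable singularity -/

/-- The derivative of `h² b / a` along the characteristic vector field, `b` being the derivative
of `a`, in a form with the value zero where `a` vanishes. -/
def QQ (U : V3 → ℝ) (h a b : V3 × V3 → ℝ) (z : V3 × V3) : ℝ :=
  2 * (h z * b z) * DX U h z * (a z)⁻¹ + h z ^ 2 * DX U b z * (a z)⁻¹ -
    (h z * b z) ^ 2 * ((a z)⁻¹) ^ 2

/-- If `x = O(a)` and `r` is at most `1/|a|`, then `x r` is bounded. -/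
lemma abs_reg_le {C x a r : ℝ} (hx : |x| ≤ C * |a|) (hC : 0 ≤ C) (hr : |a * r| ≤ 1) :
    |x * r| ≤ C := by
  rw [abs_mul] at hr ⊢
  calc |x| * |r| ≤ C * |a| * |r| := by gcongr
    _ = C * (|a| * |r|) := by ring
    _ ≤ C * 1 := by gcongr
    _ = C := mul_one C

/-- Although `h² b / a` is singular where `a` vanishes, its characteristic derivative integrates
to zero against a function of the energy: the singular function is the limit of
`h² b a / (a² + ε)`, and the vanishing of `h b` to the order of `a` dominates the derivatives. -/
lemma limit_identity {U : V3 → ℝ} (hU : ContDiff ℝ 2 U) {W h a b : V3 × V3 → ℝ}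
    (hh : ContDiff ℝ 1 h) (hc : HasCompactSupport h) (ha : ContDiff ℝ 1 a) (hb : ContDiff ℝ 1 b)
    (hab : ∀ z, DX U a z = b z) (hWm : Measurable W)
    (hW : ∀ z ∈ tsupport h, ContDiffAt ℝ 1 W z ∧ DX U W z = 0)
    {M : ℝ} (hM : ∀ z ∈ tsupport h, |W z| ≤ M)
    {C C' : ℝ} (hC0 : 0 ≤ C) (hC0' : 0 ≤ C') (hC : ∀ z, |h z * b z| ≤ C * |a z|)
    (hC' : ∀ z, |h z ^ 2 * DX U b z| ≤ C' * |a z|) (hae : ∀ᵐ z, a z ≠ 0) :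
    Integrable (fun z => W z * QQ U h a b z) ∧ ∫ z, W z * QQ U h a b z = 0 := by
  have cDh := DX_continuous hU hh
  have cDb := DX_continuous hU hb
  have hDc : HasCompactSupport (DX U h) := by
    refine hc.mono' fun z hz => ?_
    by_contra hne
    have h1 : fderiv ℝ h z = 0 := by
      by_contra h2
      exact hne (support_fderiv_subset ℝ h2)
    exact hz (by simp [DX, h1])
  obtain ⟨B, hB0, hB⟩ := hDc.exists_bound_cont cDh
  have hM0 : ∀ z ∈ tsupport h, 0 ≤ M := fun z hz => (abs_nonneg _).trans (hM z hz)
  -- a common bound for the regularised and the limiting integrands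
  set T : ℝ := M * (2 * C * B + C' + C ^ 2) with hT
  have key : ∀ z r q, |a z * r| ≤ 1 → |q| ≤ r ^ 2 ∨ |a z ^ 2 * q| ≤ 1 →
      |W z * (2 * (h z * b z) * DX U h z * r + h z ^ 2 * DX U b z * r + (h z * b z) ^ 2 * q)| ≤
        (tsupport h).indicator (fun _ => T) z := by
    intro z r q hr hq
    by_cases hz : z ∈ tsupport h
    · rw [indicator_of_mem hz]
      have e1 : |2 * (h z * b z) * DX U h z * r| ≤ 2 * C * B := by
        have := abs_reg_le (hC z) hC0 hr
        calc _ = 2 * |h z * b z * r| * |DX U h z| := by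
              rw [show 2 * (h z * b z) * DX U h z * r = 2 * (h z * b z * r) * DX U h z by ring,
                abs_mul, abs_mul, abs_two]
          _ ≤ 2 * C * B := by
              have := hB z
              rw [Real.norm_eq_abs] at this
              gcongr
      have e2 := abs_reg_le (hC' z) hC0' hr
      have e4 : |a z ^ 2 * q| ≤ 1 := by
        rcases hq with hq | hq
        · rw [abs_mul]
          calc |a z ^ 2| * |q| ≤ |a z ^ 2| * r ^ 2 := by gcongr
            _ = |a z * r| ^ 2 := by rw [abs_pow, sq_abs, sq_abs]; ring
            _ ≤ 1 := pow_le_one₀ (abs_nonneg _) hr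
        · exact hq
      have e3 : |(h z * b z) ^ 2 * q| ≤ C ^ 2 := by
        refine abs_reg_le (a := a z ^ 2) ?_ (by positivity) e4
        rw [abs_pow, abs_pow, ← mul_pow]
        exact pow_le_pow_left₀ (abs_nonneg _) (hC z) 2
      rw [abs_mul, hT]
      have := hM0 z hz
      gcongr
      · exact hM z hz
      · exact (abs_add_le _ _).trans (add_le_add ((abs_add_le _ _).trans (add_le_add e1 e2)) e3)
    · have h0 : h z = 0 := image_eq_zero_of_notMem_tsupport hz
      simp [h0, indicator_of_notMem hz]
  have hdom : Integrable ((tsupport h).indicator fun _ => T) := by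
    refine IntegrableOn.integrable_indicator ?_ (isClosed_tsupport h).measurableSet
    exact integrableOn_const hc.isCompact.measure_lt_top.ne
  have mh := hh.continuous.measurable
  have ma := ha.continuous.measurable
  have mb := hb.continuous.measurable
  have mDh := cDh.measurable
  have mDb := cDb.measurable
  have hQ : ∀ z, |W z * QQ U h a b z| ≤ (tsupport h).indicator (fun _ => T) z := by
    intro z
    have h1 := key z (a z)⁻¹ (-((a z)⁻¹) ^ 2) (by
      by_cases h0 : a z = 0
      · simp [h0]
      · simp [h0]) (Or.inl (by simp))
    convert! h1 using 3
    unfold QQ; ring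
  have mQ : Measurable (fun z => W z * QQ U h a b z) := by
    unfold QQ; fun_prop
  refine ⟨hdom.mono' mQ.aestronglyMeasurable (ae_of_all _ hQ), ?_⟩
  let ε : ℕ → ℝ := fun n => 1 / ((n : ℝ) + 1)
  have hε : ∀ n, 0 < ε n := fun n => by positivity
  have hεl : Tendsto ε atTop (𝓝 0) := tendsto_one_div_add_atTop_nhds_zero_nat
  let F : ℕ → V3 × V3 → ℝ := fun n z => h z ^ 2 * b z * (a z / (a z ^ 2 + ε n))
  have hp : ∀ n z, 0 < a z ^ 2 + ε n := fun n z => by have := hε n; positivity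
  have hF : ∀ n, ContDiff ℝ 1 (F n) := fun n =>
    ((hh.pow 2).mul hb).mul (ha.div ((ha.pow 2).add contDiff_const) fun z => (hp n z).ne')
  have hFz : ∀ n, F n = fun z => h z * (h z * b z * (a z / (a z ^ 2 + ε n))) := fun n => by
    ext z; simp only [F]; ring
  have hFc : ∀ n, HasCompactSupport (F n) := fun n => by
    rw [hFz]; exact hc.mul_right
  have hFs : ∀ n, tsupport (F n) ⊆ tsupport h := fun n => by
    rw [hFz]; exact tsupport_mul_subset_left
  have hI : ∀ n, ∫ z, W z * DX U (F n) z = 0 := fun n =>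
    integral_weight_DX hU (hF n) (hFc n) fun z hz => hW z (hFs n hz)
  have hform : ∀ n z, DX U (F n) z = 2 * (h z * b z) * DX U h z * (a z / (a z ^ 2 + ε n)) +
      h z ^ 2 * DX U b z * (a z / (a z ^ 2 + ε n)) +
      (h z * b z) ^ 2 * ((ε n - a z ^ 2) / (a z ^ 2 + ε n) ^ 2) := fun n z =>
    DX_reg (hh.differentiable (by norm_num) z) (ha.differentiable (by norm_num) z)
      (hb.differentiable (by norm_num) z) (hab z) (hε n)
  have hlim : Tendsto (fun n => ∫ z, W z * DX U (F n) z) atTop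
      (𝓝 (∫ z, W z * QQ U h a b z)) := by
    refine tendsto_integral_of_dominated_convergence ((tsupport h).indicator fun _ => T) ?_ hdom
      ?_ ?_
    · intro n
      refine Measurable.aestronglyMeasurable ?_
      simp_rw [hform]
      fun_prop
    · intro n
      refine ae_of_all _ fun z => ?_
      rw [hform, Real.norm_eq_abs]
      have hpos := hp n z
      have hεp := hε n
      refine key z _ _ ?_ (Or.inr ?_)
      · rw [← mul_div_assoc, abs_div, abs_of_pos hpos, div_le_one hpos, abs_mul, abs_mul_abs_self]
        nlinarith
      · rw [← mul_div_assoc, abs_div, abs_of_pos (pow_pos hpos 2), div_le_one (pow_pos hpos 2),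
          abs_mul, abs_of_nonneg (sq_nonneg (a z)), sq (a z ^ 2 + ε n)]
        refine mul_le_mul (by linarith) ?_ (abs_nonneg _) hpos.le
        rw [abs_le]; constructor <;> nlinarith [sq_nonneg (a z)]
    · filter_upwards [hae] with z hz
      have l1 : Tendsto (fun n => a z ^ 2 + ε n) atTop (𝓝 (a z ^ 2)) := by
        simpa using hεl.const_add (a z ^ 2)
      have h2 : a z ^ 2 ≠ 0 := pow_ne_zero 2 hz
      have l2 : Tendsto (fun n => a z / (a z ^ 2 + ε n)) atTop (𝓝 ((a z)⁻¹)) := by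
        have := (tendsto_const_nhds (x := a z)).div l1 h2
        convert! this using 2
        field_simp
      have l3 : Tendsto (fun n => (ε n - a z ^ 2) / (a z ^ 2 + ε n) ^ 2) atTop
          (𝓝 (-((a z)⁻¹) ^ 2)) := by
        have := (hεl.sub_const (a z ^ 2)).div (l1.pow 2) (pow_ne_zero 2 h2)
        convert! this using 2
        field_simp
        ring
      simp_rw [hform]
      have := (((l2.const_mul (2 * (h z * b z) * DX U h z)).add
        (l2.const_mul (h z ^ 2 * DX U b z))).add (l3.const_mul ((h z * b z) ^ 2))).const_mul (W z)
      convert! this using 2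
      unfold QQ; ring
  simp_rw [hI] at hlim
  exact tendsto_nhds_unique hlim tendsto_const_nhds

/-! ### The current density and the field it generates -/

/-- The current density `∫ h(x,p) p/√(1+|p|²) dp`. -/
def curr (h : V3 × V3 → ℝ) (x : V3) : V3 := ∫ p : V3, h (x, p) • vel p

section param
variable {F : Type*} [NormedAddCommGroup F] [NormedSpace ℝ F]

lemma slice_compact {F : Type*} [NormedAddCommGroup F] {H : V3 × V3 → F} (hHc : HasCompactSupport H) (x : V3) :
    HasCompactSupport fun p => H (x, p) := by
  obtain ⟨R, hR0, hR⟩ := hHc.exists_ball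
  refine HasCompactSupport.of_support_subset_isCompact (isCompact_closedBall (0 : V3) R) ?_
  intro p hp
  by_contra hne
  refine hp (hR (x, p) ?_)
  rw [mem_closedBall_zero_iff, not_le] at hne
  exact hne.le.trans (norm_snd_le (x, p))

lemma slice_integrable {F : Type*} [NormedAddCommGroup F] {H : V3 × V3 → F} (hHc : HasCompactSupport H) (hH : Continuous H) (x : V3) :
    Integrable fun p => H (x, p) :=
  Continuous.integrable_of_hasCompactSupport (by fun_prop) (slice_compact hHc x)

/-- The momentum slices of a compactly supported function are dominated by one integrable function. -/
lemma slice_dom {F : Type*} [NormedAddCommGroup F] {H : V3 × V3 → F} (hHc : HasCompactSupport H) (hH : Continuous H) :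
    ∃ B : V3 → ℝ, Integrable B ∧ ∀ x p, ‖H (x, p)‖ ≤ B p := by
  obtain ⟨R, hR0, hR⟩ := hHc.exists_ball
  obtain ⟨C, hC0, hC⟩ := hHc.exists_bound_cont hH
  refine ⟨(Metric.closedBall (0 : V3) R).indicator fun _ => C, ?_, fun x p => ?_⟩
  · exact (integrableOn_const (isCompact_closedBall (0 : V3) R).measure_lt_top.ne).integrable_indicator
      Metric.isClosed_closedBall.measurableSet
  · by_cases hp : p ∈ Metric.closedBall (0 : V3) R
    · rw [indicator_of_mem hp]; exact hC _
    · rw [indicator_of_notMem hp]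
      rw [mem_closedBall_zero_iff, not_le] at hp
      rw [hR (x, p) (hp.le.trans (norm_snd_le (x, p))), norm_zero]

lemma param_continuous {H : V3 × V3 → F} (hHc : HasCompactSupport H) (hH : Continuous H) :
    Continuous fun x => ∫ p, H (x, p) := by
  obtain ⟨B, hB, hHB⟩ := slice_dom hHc hH
  refine continuous_of_dominated (bound := B) ?_ ?_ hB ?_
  · intro x; exact (slice_integrable hHc hH x).aestronglyMeasurable
  · intro x; exact ae_of_all _ (hHB x)
  · exact ae_of_all _ fun p => by fun_prop

lemma param_compact {H : V3 × V3 → F} (hHc : HasCompactSupport H) :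
    HasCompactSupport fun x => ∫ p, H (x, p) := by
  obtain ⟨R, hR0, hR⟩ := hHc.exists_ball
  refine HasCompactSupport.of_support_subset_isCompact (isCompact_closedBall (0 : V3) R) ?_
  intro x hx
  by_contra hne
  rw [mem_closedBall_zero_iff, not_le] at hne
  refine hx ?_
  have : ∀ p, H (x, p) = 0 := fun p => hR (x, p) (hne.le.trans (norm_fst_le (x, p)))
  simp [this]

/-- The derivative in the parameter direction. -/
def dfst (H : V3 × V3 → F) (z : V3 × V3) : V3 →L[ℝ] F :=
  (fderiv ℝ H z).comp (ContinuousLinearMap.inl ℝ V3 V3)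

lemma dfst_continuous {H : V3 × V3 → F} (hH : ContDiff ℝ 1 H) : Continuous (dfst H) :=
  (hH.continuous_fderiv (by norm_num)).clm_comp continuous_const

lemma dfst_compact {H : V3 × V3 → F} (hHc : HasCompactSupport H) : HasCompactSupport (dfst H) :=
  (hHc.fderiv ℝ).comp_left (g := fun L : V3 × V3 →L[ℝ] F =>
    L.comp (ContinuousLinearMap.inl ℝ V3 V3)) (by simp)

lemma param_hasFDerivAt {H : V3 × V3 → F} (hHc : HasCompactSupport H)
    (hH : ContDiff ℝ 1 H) (x : V3) :
    HasFDerivAt (fun x => ∫ p, H (x, p)) (∫ p, dfst H (x, p)) x := by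
  obtain ⟨B, hB, hHB⟩ := slice_dom (dfst_compact hHc) (dfst_continuous hH)
  refine hasFDerivAt_integral_of_dominated_of_fderiv_le (bound := B) (s := univ)
    (F' := fun x p => dfst H (x, p)) univ_mem ?_ ?_ ?_ ?_ hB ?_
  · exact Eventually.of_forall fun x => (slice_integrable hHc hH.continuous x).aestronglyMeasurable
  · exact slice_integrable hHc hH.continuous x
  · exact (slice_integrable (dfst_compact hHc) (dfst_continuous hH) x).aestronglyMeasurable
  · exact ae_of_all _ fun p y _ => hHB y p
  · refine ae_of_all _ fun p y _ => ?_
    have h1 : HasFDerivAt (fun x : V3 => (x, p)) (ContinuousLinearMap.inl ℝ V3 V3) y :=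
      (hasFDerivAt_id y).prodMk (hasFDerivAt_const p y)
    exact (hH.differentiable (by norm_num) (y, p)).hasFDerivAt.comp y h1

lemma param_contDiff {H : V3 × V3 → F} (hHc : HasCompactSupport H)
    (hH : ContDiff ℝ 1 H) : ContDiff ℝ 1 fun x => ∫ p, H (x, p) := by
  rw [contDiff_one_iff_fderiv]
  refine ⟨fun x => (param_hasFDerivAt hHc hH x).differentiableAt, ?_⟩
  have : fderiv ℝ (fun x => ∫ p, H (x, p)) = fun x => ∫ p, dfst H (x, p) :=
    funext fun x => (param_hasFDerivAt hHc hH x).fderiv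
  rw [this]
  exact param_continuous (dfst_compact hHc) (dfst_continuous hH)

end param

lemma currInt_contDiff {h : V3 × V3 → ℝ} (hh : ContDiff ℝ 1 h) :
    ContDiff ℝ 1 fun z : V3 × V3 => h z • vel z.2 :=
  hh.smul (vel_contDiff.comp contDiff_snd)

lemma curr_divg {h : V3 × V3 → ℝ} (hh : ContDiff ℝ 1 h) (hc : HasCompactSupport h) (x : V3) :
    divg (curr h) x = ∫ p, fderiv ℝ h (x, p) (vel p, 0) := by
  have hH := currInt_contDiff hh
  have hHc : HasCompactSupport fun z : V3 × V3 => h z • vel z.2 := hc.smul_right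
  have h1 : fderiv ℝ (curr h) x = _ := (param_hasFDerivAt hHc hH x).fderiv
  let T : (V3 →L[ℝ] V3) →L[ℝ] ℝ := ∑ i, (EuclideanSpace.proj i : V3 →L[ℝ] ℝ).comp
    (ContinuousLinearMap.apply ℝ V3 (e3 i))
  have hT : ∀ L : V3 →L[ℝ] V3, T L = ∑ i, L (e3 i) i := fun L => by
    simp [T]
  unfold divg
  rw [h1, ← hT, ← T.integral_comp_comm (slice_integrable (dfst_compact hHc) (dfst_continuous hH) x)]
  congr 1; ext p
  rw [hT]
  have hv : HasFDerivAt vel (fderiv ℝ vel p) p :=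
    ((vel_contDiff (n := 1)).differentiable (by norm_num) p).hasFDerivAt
  have hv2 : HasFDerivAt (fun z : V3 × V3 => vel z.2)
      ((fderiv ℝ vel p).comp (ContinuousLinearMap.snd ℝ V3 V3)) (x, p) :=
    HasFDerivAt.comp (g := vel) (x, p) hv hasFDerivAt_snd
  have h2 : HasFDerivAt (fun z : V3 × V3 => h z • vel z.2) _ (x, p) :=
    (hh.differentiable (by norm_num) (x, p)).hasFDerivAt.smul hv2
  have h3 := clm_sum_e3 ((fderiv ℝ h (x, p)).comp (ContinuousLinearMap.inl ℝ V3 V3)) (vel p)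
  simp only [dfst, h2.fderiv]
  simpa using h3.symm

/-- The continuity equation for `{E,h}`. -/
lemma rho_bracket {U : V3 → ℝ} (hU : ContDiff ℝ 2 U) {h : V3 × V3 → ℝ} (hh : ContDiff ℝ 1 h)
    (hc : HasCompactSupport h) (x : V3) :
    rhoOf (pbracket (Erel U) h) x = -divg (curr h) x := by
  have cD := hh.continuous_fderiv (by norm_num)
  have h1 : ∀ p, pbracket (Erel U) h (x, p) =
      fderiv ℝ h (x, p) (0, gradient U x) - fderiv ℝ h (x, p) (vel p, 0) := fun p => by
    rw [pbracket_eq hU (hh.differentiable (by norm_num) _), DX, ← map_sub]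
    simp [charX]
  have i1 : Integrable fun p => fderiv ℝ h (x, p) (0, gradient U x) :=
    slice_integrable (H := fun z => fderiv ℝ h z (0, gradient U x)) (hc.fderiv_apply ℝ _)
      (cD.clm_apply continuous_const) x
  have cv : Continuous vel := (vel_contDiff (n := 1)).continuous
  have i2 : Integrable fun p => fderiv ℝ h (x, p) (vel p, 0) := by
    refine slice_integrable (H := fun z => fderiv ℝ h z (vel z.2, 0)) ?_
      (cD.clm_apply ((cv.comp continuous_snd).prodMk continuous_const)) x
    refine (hc.fderiv ℝ).mono fun z hz hne => hz ?_
    simp [hne]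
  have hsl : ContDiff ℝ 1 fun p => h (x, p) := hh.comp (contDiff_const.prodMk contDiff_id)
  have h2 : ∫ p, fderiv ℝ h (x, p) (0, gradient U x) = 0 := by
    have h3 := ibp volume hsl (slice_compact hc x) (contDiff_const (c := (1 : ℝ))) (gradient U x)
    have h4 : ∀ p, fderiv ℝ (fun p => h (x, p)) p (gradient U x) =
        fderiv ℝ h (x, p) (0, gradient U x) := fun p => by
      have h5 : HasFDerivAt (fun p : V3 => (x, p)) (ContinuousLinearMap.inr ℝ V3 V3) p :=
        (hasFDerivAt_const x p).prodMk (hasFDerivAt_id p)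
      have h6 : fderiv ℝ (fun p => h (x, p)) p = _ :=
        ((hh.differentiable (by norm_num) (x, p)).hasFDerivAt.comp p h5).fderiv
      rw [h6]; simp
    simpa [h4] using h3
  unfold rhoOf
  simp_rw [h1]
  rw [integral_sub i1 i2, h2, curr_divg hh hc, zero_sub]

lemma curr_equivariant {h : V3 × V3 → ℝ}
    (hsym : ∀ A : V3 ≃ₗᵢ[ℝ] V3, IsRot A → ∀ x p : V3, h (A x, A p) = h (x, p))
    (A : V3 ≃ₗᵢ[ℝ] V3) (hA : IsRot A) (x : V3) : curr h (A x) = A (curr h x) := by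
  have h1 : ∀ p, h (A x, A p) • vel (A p) = A.toContinuousLinearEquiv (h (x, p) • vel p) :=
    fun p => by
      rw [hsym A hA]; simp [vel, A.norm_map]
  unfold curr
  rw [← A.measurePreserving.integral_comp A.toHomeomorph.measurableEmbedding]
  simp_rw [h1]
  exact ContinuousLinearEquiv.integral_comp_comm _ _

lemma curr_contDiff {h : V3 × V3 → ℝ} (hh : ContDiff ℝ 1 h) (hc : HasCompactSupport h) :
    ContDiff ℝ 1 (curr h) := by
  have hHc : HasCompactSupport fun z : V3 × V3 => h z • vel z.2 := hc.smul_right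
  exact param_contDiff hHc (currInt_contDiff hh)

lemma curr_compact {h : V3 × V3 → ℝ} (hc : HasCompactSupport h) :
    HasCompactSupport (curr h) := by
  have hHc : HasCompactSupport fun z : V3 × V3 => h z • vel z.2 := hc.smul_right
  have h1 := param_compact hHc
  unfold curr
  exact h1

/-- In spherical symmetry the field of `{E,h}` is the local quantity `-4π j`. -/
lemma gradUf_eq {U : V3 → ℝ} (hU : ContDiff ℝ 2 U) {h : V3 × V3 → ℝ} (hh : ContDiff ℝ 1 h)
    (hc : HasCompactSupport h)
    (hsym : ∀ A : V3 ≃ₗᵢ[ℝ] V3, IsRot A → ∀ x p : V3, h (A x, A p) = h (x, p)) (x : V3) :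
    gradUf (pbracket (Erel U) h) x = -((4 * Real.pi) • curr h x) := by
  have hj := curr_contDiff hh hc
  have hjc := curr_compact hc
  obtain ⟨l, hl⟩ := equivariant_radial (curr h) (curr_equivariant hsym)
  have h0 : ∀ᵐ y : V3, y ≠ 0 := by simp [ae_iff]
  have hs : ∀ᵐ y, ∀ i k, fderiv ℝ (curr h) y (e3 i) k = fderiv ℝ (curr h) y (e3 k) i := by
    filter_upwards [h0] with y hy i k
    exact radial_symm hl hy (hj.differentiable (by norm_num) y) i k
  have hf := field_div (curr h) hj hjc hs x
  have hr : ∀ y, (rhoOf (pbracket (Erel U) h) y / ‖x - y‖ ^ 3) • (x - y) =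
      -((divg (curr h) y / ‖x - y‖ ^ 3) • (x - y)) := fun y => by
    rw [rho_bracket hU hh hc, neg_div, neg_smul]
  unfold gradUf
  simp_rw [hr]
  rw [integral_neg, hf]

/-! ### The momentum flux of the steady state -/

lemma poly_hasDerivAt {E₀ k e : ℝ} (h : e < E₀) :
    HasDerivAt (polyAnsatz E₀ k) (-(k * (E₀ - e) ^ (k - 1))) e := by
  have h1 : HasDerivAt (fun s => (E₀ - s) ^ k) (-(k * (E₀ - e) ^ (k - 1))) e := by
    have := ((hasDerivAt_id e).const_sub E₀).rpow_const (p := k)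
      (Or.inl (by simp; linarith))
    convert! this using 1
    simp
  refine h1.congr_of_eventuallyEq ?_
  filter_upwards [Iio_mem_nhds h] with s hs
  rw [mem_Iio] at hs
  simp only [polyAnsatz]
  rw [max_eq_left (by linarith)]

lemma poly_hasDerivAt' {E₀ k e : ℝ} (hk : 1 ≤ k) (h : E₀ < e) :
    HasDerivAt (polyAnsatz E₀ k) 0 e := by
  refine (hasDerivAt_const e 0).congr_of_eventuallyEq ?_
  filter_upwards [Ioi_mem_nhds h] with s hs
  rw [mem_Ioi] at hs
  simp only [polyAnsatz]
  rw [max_eq_right (by linarith), Real.zero_rpow (by linarith)]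

lemma poly'_inside {E₀ k e : ℝ} (h : e < E₀) :
    polyAnsatz' E₀ k e = -(k * (E₀ - e) ^ (k - 1)) := (poly_hasDerivAt h).deriv

lemma poly'_outside {E₀ k e : ℝ} (hk : 1 ≤ k) (h : E₀ < e) : polyAnsatz' E₀ k e = 0 :=
  (poly_hasDerivAt' hk h).deriv

lemma poly_nonneg (E₀ k e : ℝ) : 0 ≤ polyAnsatz E₀ k e :=
  Real.rpow_nonneg (le_max_right _ _) _

lemma poly_pos_iff {E₀ k e : ℝ} (hk : 1 ≤ k) : 0 < polyAnsatz E₀ k e ↔ e < E₀ := by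
  unfold polyAnsatz
  constructor
  · intro h
    by_contra hne
    rw [max_eq_right (by linarith), Real.zero_rpow (by linarith)] at h
    exact h.false
  · intro h
    exact Real.rpow_pos_of_pos (lt_max_of_lt_left (by linarith)) _

lemma norm_le_sqrt (p : V3) : ‖p‖ ≤ √(1 + ‖p‖ ^ 2) := by
  refine Real.le_sqrt_of_sq_le ?_
  linarith

lemma sqrt_lip : LipschitzWith 1 (fun p : V3 => √(1 + ‖p‖ ^ 2)) := by
  refine lipschitzWith_of_nnnorm_fderiv_le (𝕜 := ℝ)
    ((sqrt_contDiff (n := 1)).differentiable (by norm_num)) fun p => ?_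
  rw [← NNReal.coe_le_coe, coe_nnnorm, (sqrt_hasFDerivAt p).fderiv, norm_smul, innerSL_apply_norm,
    norm_inv, Real.norm_of_nonneg (Real.sqrt_nonneg _)]
  have h0 : 0 < √(1 + ‖p‖ ^ 2) := by positivity
  rw [inv_mul_le_iff₀ h0]
  simpa using norm_le_sqrt p

/-- For exponents `k ≥ 1` the momentum profile is Lipschitz, also when `k = 1`, where it has a
corner at the cut-off. -/
lemma slice_lip {E₀ k : ℝ} (hk : 1 ≤ k) (U : V3 → ℝ) (x : V3) :
    ∃ D, LipschitzWith D (fun p : V3 => polyAnsatz E₀ k (Erel U (x, p))) := by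
  set T := max (E₀ - U x) 0 with hT
  have h1 : LipschitzWith 1 (fun p : V3 => max (E₀ - Erel U (x, p)) 0) := by
    refine LipschitzWith.max_const (LipschitzWith.of_dist_le_mul fun p q => ?_) 0
    have := sqrt_lip.dist_le_mul q p
    rw [Real.dist_eq] at this ⊢
    rw [dist_comm] at this
    convert! this using 2
    simp only [Erel]; ring
  have h2 : MapsTo (fun p : V3 => max (E₀ - Erel U (x, p)) 0) univ (Icc 0 T) := by
    intro p _
    refine ⟨le_max_right _ _, max_le_max ?_ le_rfl⟩
    have := Real.sqrt_nonneg (1 + ‖p‖ ^ 2)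
    simp only [Erel]; linarith
  have hk0 : 0 ≤ k := by linarith
  have h3 : LipschitzOnWith (Real.toNNReal (k * T ^ (k - 1))) (fun y : ℝ => y ^ k) (Icc 0 T) := by
    refine (convex_Icc 0 T).lipschitzOnWith_of_nnnorm_hasDerivWithin_le
      (f' := fun y => k * y ^ (k - 1))
      (fun y _ => (Real.hasDerivAt_rpow_const (Or.inr hk)).hasDerivWithinAt) fun y hy => ?_
    have hy0 : 0 ≤ k * y ^ (k - 1) := mul_nonneg hk0 (Real.rpow_nonneg hy.1 _)
    rw [← NNReal.coe_le_coe, coe_nnnorm, Real.norm_of_nonneg hy0]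
    refine le_trans ?_ (Real.le_coe_toNNReal _)
    have := Real.rpow_le_rpow hy.1 hy.2 (z := k - 1) (by linarith)
    gcongr
  exact ⟨_, lipschitzOnWith_univ.1 (h3.comp (lipschitzOnWith_univ.2 h1) h2)⟩

lemma slice_poly_zero {E₀ : ℝ} (U : V3 → ℝ) (x p : V3) (hp : E₀ - U x < ‖p‖) :
    E₀ < Erel U (x, p) := by
  have := norm_le_sqrt p
  simp only [Erel]; linarith

lemma slice_poly_compact {E₀ k : ℝ} (hk : 1 ≤ k) (U : V3 → ℝ) (x : V3) :
    HasCompactSupport (fun p : V3 => polyAnsatz E₀ k (Erel U (x, p))) := by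
  refine HasCompactSupport.of_support_subset_isCompact
    (isCompact_closedBall (0 : V3) (E₀ - U x)) fun p hp => ?_
  rw [mem_closedBall_zero_iff]
  by_contra hne
  have h1 := slice_poly_zero U x p (not_le.1 hne)
  refine hp (le_antisymm ?_ (poly_nonneg _ _ _))
  by_contra h2
  exact absurd ((poly_pos_iff hk).1 (not_le.1 h2)) (not_lt.2 h1.le)

/-- The energy surface is negligible in each momentum slice. -/
lemma energy_surface_null (E₀ : ℝ) (U : V3 → ℝ) (x : V3) :
    ∀ᵐ p : V3, Erel U (x, p) ≠ E₀ := by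
  rw [ae_iff]
  refine measure_mono_null (t := Metric.sphere (0 : V3) √((E₀ - U x) ^ 2 - 1)) ?_
    (Measure.addHaar_sphere _ _ _)
  intro p hp
  simp only [mem_ofPred_eq, not_not, Erel] at hp
  have h1 : √(1 + ‖p‖ ^ 2) = E₀ - U x := by linarith
  rw [mem_sphere_zero_iff_norm, ← h1, Real.sq_sqrt (by positivity)]
  simp

lemma slice_lineDeriv {E₀ k : ℝ} (hk : 1 ≤ k) {U : V3 → ℝ} (x e p : V3)
    (hp : Erel U (x, p) ≠ E₀) :
    lineDeriv ℝ (fun p : V3 => polyAnsatz E₀ k (Erel U (x, p))) p (-e) =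
      ⟪e, p⟫ * |polyAnsatz' E₀ k (Erel U (x, p))| / √(1 + ‖p‖ ^ 2) := by
  have h1 : HasFDerivAt (fun p : V3 => Erel U (x, p)) ((√(1 + ‖p‖ ^ 2))⁻¹ • innerSL ℝ p) p :=
    (sqrt_hasFDerivAt p).add_const (U x)
  have h2 : HasDerivAt (polyAnsatz E₀ k) (-|polyAnsatz' E₀ k (Erel U (x, p))|) (Erel U (x, p)) := by
    rcases lt_or_gt_of_ne hp with h | h
    · rw [poly'_inside h, abs_neg, abs_of_nonneg]
      · exact poly_hasDerivAt h
      · exact mul_nonneg (by linarith) (Real.rpow_nonneg (by linarith) _)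
    · rw [poly'_outside hk h]; simpa using poly_hasDerivAt' hk h
  have h3 := (h2.comp_hasFDerivAt p h1).hasLineDerivAt (-e)
  have h4 := h3.lineDeriv
  simp only [Function.comp_def] at h4
  rw [h4, real_inner_comm]
  simp
  field_simp

/-- The parallel momentum flux of a steady state: `∫ (p·e)² |φ'(E)| / √(1+|p|²) dp = ρ₀(x)` for
every unit vector `e`. -/
lemma flux_identity {E₀ k : ℝ} (hk : 1 ≤ k) (U : V3 → ℝ) (x e : V3) (he : ‖e‖ = 1) :
    Integrable (fun p : V3 => ⟪e, p⟫ ^ 2 * |polyAnsatz' E₀ k (Erel U (x, p))| / √(1 + ‖p‖ ^ 2)) ∧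
    ∫ p : V3, ⟪e, p⟫ ^ 2 * |polyAnsatz' E₀ k (Erel U (x, p))| / √(1 + ‖p‖ ^ 2) =
      ∫ p : V3, polyAnsatz E₀ k (Erel U (x, p)) := by
  obtain ⟨D, hD⟩ := slice_lip (E₀ := E₀) hk U x
  have hgc := slice_poly_compact (E₀ := E₀) hk U x
  set g := fun p : V3 => polyAnsatz E₀ k (Erel U (x, p)) with hg
  have hf : LipschitzWith ‖innerSL ℝ e‖₊ (innerSL ℝ e) := (innerSL ℝ e).lipschitz
  have hI := hf.integral_lineDeriv_mul_eq (μ := volume) hD hgc e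
  have h1 : ∀ p : V3, lineDeriv ℝ (innerSL ℝ e) p e = 1 := fun p => by
    rw [((innerSL ℝ e).hasFDerivAt.hasLineDerivAt e).lineDeriv]
    simp [he]
  have hae : (fun p : V3 => lineDeriv ℝ g p (-e) * innerSL ℝ e p) =ᵐ[volume] fun p : V3 =>
      ⟪e, p⟫ ^ 2 * |polyAnsatz' E₀ k (Erel U (x, p))| / √(1 + ‖p‖ ^ 2) := by
    filter_upwards [energy_surface_null E₀ U x] with p hp
    rw [slice_lineDeriv hk x e p hp, innerSL_apply_apply]
    ring
  refine ⟨?_, ?_⟩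
  · set R := E₀ - U x
    have hdom : Integrable ((Metric.closedBall (0 : V3) R).indicator fun _ => (D : ℝ) * R) :=
      (integrableOn_const (isCompact_closedBall (0 : V3) R).measure_lt_top.ne).integrable_indicator
        Metric.isClosed_closedBall.measurableSet
    refine Integrable.congr (hdom.mono' ?_ ?_) hae
    · exact ((measurable_lineDeriv hD.continuous).mul
        (innerSL ℝ e).continuous.measurable).aestronglyMeasurable
    · filter_upwards [energy_surface_null E₀ U x] with p hp
      by_cases hR : ‖p‖ ≤ R
      · rw [indicator_of_mem (mem_closedBall_zero_iff.2 hR), norm_mul]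
        have e1 : ‖lineDeriv ℝ g p (-e)‖ ≤ D := by
          simpa [he] using norm_lineDeriv_le_of_lipschitz ℝ hD (x₀ := p) (v := -e)
        have e2 : ‖innerSL ℝ e p‖ ≤ R := by
          have := norm_inner_le_norm (𝕜 := ℝ) e p
          rw [he, one_mul] at this
          exact this.trans hR
        gcongr
      · rw [indicator_of_notMem (by rwa [mem_closedBall_zero_iff]),
          slice_lineDeriv hk x e p hp,
          poly'_outside hk (slice_poly_zero U x p (not_le.1 hR))]
        simp
  · rw [← integral_congr_ae hae, ← hI]
    simp_rw [h1, one_mul]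

/-- Cauchy–Schwarz for `b² ≤ a c`, the hypothesis being the non-negativity of the quadratic form. -/
lemma cauchy_schwarz_quad {α : Type*} [MeasurableSpace α] {μ : Measure α} {a b c : α → ℝ}
    (ha : Integrable a μ) (hb : Integrable b μ) (hc : Integrable c μ)
    (hq : ∀ t : ℝ, ∀ x, 0 ≤ t * t * a x - 2 * t * b x + c x) :
    (∫ x, b x ∂μ) ^ 2 ≤ (∫ x, a x ∂μ) * ∫ x, c x ∂μ := by
  have h1 := discrim_le_zero (a := ∫ x, a x ∂μ) (b := -2 * ∫ x, b x ∂μ) (c := ∫ x, c x ∂μ)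
    fun t => by
      have h2 : 0 ≤ ∫ x, t * t * a x - 2 * t * b x + c x ∂μ := integral_nonneg (hq t)
      have hab : Integrable (fun x => t * t * a x - 2 * t * b x) μ :=
        (ha.const_mul _).sub (hb.const_mul _)
      rw [integral_add hab hc, integral_sub (ha.const_mul _) (hb.const_mul _), integral_const_mul, integral_const_mul] at h2
      linarith
  unfold discrim at h1
  linarith

/-- Kandrup's estimate of the current by the density of the steady state. -/
lemma curr_sq_le {E₀ k : ℝ} (hk : 1 ≤ k) (U : V3 → ℝ) {h : V3 × V3 → ℝ} (hh : Continuous h)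
    (hc : HasCompactSupport h)
    (hsupp : ∀ z, h z ≠ 0 → Erel U z < E₀)
    (hsym : ∀ A : V3 ≃ₗᵢ[ℝ] V3, IsRot A → ∀ x p : V3, h (A x, A p) = h (x, p))
    {x : V3} (hx : x ≠ 0)
    (hi : Integrable fun p : V3 =>
      1 / |polyAnsatz' E₀ k (Erel U (x, p))| * h (x, p) ^ 2 / √(1 + ‖p‖ ^ 2)) :
    ‖curr h x‖ ^ 2 ≤ rhoOf (fun z => polyAnsatz E₀ k (Erel U z)) x *
      ∫ p : V3, 1 / |polyAnsatz' E₀ k (Erel U (x, p))| * h (x, p) ^ 2 / √(1 + ‖p‖ ^ 2) := by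
  obtain ⟨l, hl⟩ := equivariant_radial (curr h) (curr_equivariant hsym)
  have hx0 : ‖x‖ ≠ 0 := norm_ne_zero_iff.2 hx
  set e : V3 := ‖x‖⁻¹ • x with he_def
  have he : ‖e‖ = 1 := by rw [he_def, norm_smul, norm_inv, norm_norm, inv_mul_cancel₀ hx0]
  have cv : Continuous vel := (vel_contDiff (n := 1)).continuous
  have hHc : HasCompactSupport fun z : V3 × V3 => h z • vel z.2 := hc.smul_right
  have hHi : Integrable fun p : V3 => h (x, p) • vel p :=
    slice_integrable hHc (hh.smul (cv.comp continuous_snd)) x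
  have h1 : ⟪e, curr h x⟫ = ∫ p : V3, ⟪e, p⟫ * h (x, p) / √(1 + ‖p‖ ^ 2) := by
    unfold curr
    rw [← integral_inner hHi]
    congr 1; ext p
    simp only [vel, inner_smul_right]
    field_simp
  have h2 : ‖curr h x‖ ^ 2 = (∫ p : V3, ⟪e, p⟫ * h (x, p) / √(1 + ‖p‖ ^ 2)) ^ 2 := by
    rw [← h1, hl x hx, norm_smul, inner_smul_right, he_def, real_inner_smul_left,
      real_inner_self_eq_norm_sq, mul_pow, Real.norm_eq_abs, sq_abs]
    field_simp
  obtain ⟨hA, hA'⟩ := flux_identity (E₀ := E₀) hk U x e he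
  have hB : Integrable fun p : V3 => ⟪e, p⟫ * h (x, p) / √(1 + ‖p‖ ^ 2) := by
    refine (hHi.const_inner (𝕜 := ℝ) e).congr (ae_of_all _ fun p => ?_)
    simp only [vel, inner_smul_right]
    field_simp
  rw [h2, rhoOf, ← hA']
  refine cauchy_schwarz_quad hA hB hi fun t p => ?_
  have hs : 0 < √(1 + ‖p‖ ^ 2) := by positivity
  by_cases h0 : h (x, p) = 0
  · rw [h0]
    have : 0 ≤ t * t * (⟪e, p⟫ ^ 2 * |polyAnsatz' E₀ k (Erel U (x, p))| / √(1 + ‖p‖ ^ 2)) :=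
      mul_nonneg (mul_self_nonneg t) (by positivity)
    simpa using this
  · have hE := hsupp _ h0
    have hφ : 0 < |polyAnsatz' E₀ k (Erel U (x, p))| := by
      rw [poly'_inside hE, abs_neg]
      have := Real.rpow_pos_of_pos (sub_pos.2 hE) (k - 1)
      have : 0 < k := by linarith
      positivity
    set φ := |polyAnsatz' E₀ k (Erel U (x, p))|
    have : t * t * (⟪e, p⟫ ^ 2 * φ / √(1 + ‖p‖ ^ 2)) -
        2 * t * (⟪e, p⟫ * h (x, p) / √(1 + ‖p‖ ^ 2)) + 1 / φ * h (x, p) ^ 2 / √(1 + ‖p‖ ^ 2) =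
        (t * ⟪e, p⟫ * φ - h (x, p)) ^ 2 / (φ * √(1 + ‖p‖ ^ 2)) := by
      field_simp
      ring
    rw [this]
    positivity

/-! ### The weight and the order of vanishing -/

lemma lap3_eq_divg {U : V3 → ℝ} (hU : ContDiff ℝ 2 U) (x : V3) :
    lap3 U x = divg (gradient U) x := by
  unfold lap3 divg
  refine Finset.sum_congr rfl fun i _ => ?_
  rw [← fderiv_coord ((grad_contDiff hU).differentiable (by norm_num) x)]
  congr 2; ext y
  rw [← inner_e3, inner_grad]

lemma divg_continuous {N : V3 → V3} (hN : ContDiff ℝ 1 N) : Continuous (divg N) := by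
  have := hN.continuous_fderiv (by norm_num)
  unfold divg; fun_prop

/-- The weight `1/|φ'(E)|`. -/
def wt (E₀ k : ℝ) (U : V3 → ℝ) (z : V3 × V3) : ℝ := 1 / |polyAnsatz' E₀ k (Erel U z)|

lemma wt_measurable (E₀ k : ℝ) {U : V3 → ℝ} (hU : ContDiff ℝ 2 U) : Measurable (wt E₀ k U) := by
  have h1 : Measurable (polyAnsatz' E₀ k) := measurable_deriv _
  have h2 := (Erel_contDiff hU).continuous.measurable
  unfold wt
  exact measurable_const.div (_root_.continuous_abs.measurable.comp (h1.comp h2))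

/-- Inside the support of the steady state the weight is a smooth function of the energy. -/
lemma wt_smooth {E₀ k : ℝ} (hk : 1 ≤ k) {U : V3 → ℝ} (hU : ContDiff ℝ 2 U) {z : V3 × V3}
    (hz : Erel U z < E₀) : ContDiffAt ℝ 1 (wt E₀ k U) z ∧ DX U (wt E₀ k U) z = 0 := by
  let θ : ℝ → ℝ := fun e => (k * (E₀ - e) ^ (k - 1))⁻¹
  have hp := Real.rpow_pos_of_pos (sub_pos.2 hz) (k - 1)
  have hθ : ContDiffAt ℝ 1 θ (Erel U z) := by
    refine ContDiffAt.inv ?_ (by positivity)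
    exact contDiffAt_const.mul ((contDiffAt_const.sub contDiffAt_id).rpow_const_of_ne
      (sub_pos.2 hz).ne')
  have hE := (Erel_contDiff hU)
  have heq : wt E₀ k U =ᶠ[𝓝 z] θ ∘ Erel U := by
    filter_upwards [hE.continuous.continuousAt.preimage_mem_nhds (Iio_mem_nhds hz)] with y hy
    have hy' : Erel U y < E₀ := hy
    have := Real.rpow_pos_of_pos (sub_pos.2 hy') (k - 1)
    simp only [wt, θ, Function.comp, poly'_inside hy', abs_neg, one_div]
    rw [abs_of_nonneg (by positivity)]
  refine ⟨(hθ.comp z (hE.contDiffAt.of_le (by norm_num))).congr_of_eventuallyEq heq, ?_⟩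
  have h1 := ((hθ.differentiableAt (by norm_num)).hasDerivAt).comp_hasFDerivAt z
    (hE.differentiable (by norm_num) z).hasFDerivAt
  have h2 := DX_E hU z
  unfold DX at h2 ⊢
  rw [heq.fderiv_eq, h1.fderiv]
  simp [h2]

/-- The weight may be unbounded (or junk) at the cut-off energy, but only its values on the support
of `h` matter, and there it is bounded. -/
lemma wt_integrable {W h G : V3 × V3 → ℝ} (hWm : Measurable W) (hc : HasCompactSupport h) {M : ℝ}
    (hM : ∀ z ∈ tsupport h, |W z| ≤ M) (hG : Continuous G) (hGs : ∀ z ∉ tsupport h, G z = 0) :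
    Integrable fun z => W z * G z := by
  have hGc : HasCompactSupport G := HasCompactSupport.intro hc.isCompact hGs
  have hGi : Integrable G := hG.integrable_of_hasCompactSupport hGc
  refine (hGi.norm.const_mul M).mono' (hWm.mul hG.measurable).aestronglyMeasurable
    (ae_of_all _ fun z => ?_)
  by_cases hz : z ∈ tsupport h
  · rw [norm_mul]
    have := hM z hz
    rw [← Real.norm_eq_abs] at this
    gcongr
  · simp [hGs z hz]

/-- Since `h` vanishes where `x ⟂ p`, the products of `h` with `b = {E, x·p}` and of `h²` with
`{E, b}` vanish to the order of `x·p`. -/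
lemma sing_bounds {U : V3 → ℝ} (hU : ContDiff ℝ 2 U) {l : ℝ → ℝ}
    (hN : ∀ x, x ≠ 0 → gradient U x = l ‖x‖ • x) {h : V3 × V3 → ℝ}
    (hsym : ∀ A : V3 ≃ₗᵢ[ℝ] V3, IsRot A → ∀ x p : V3, h (A x, A p) = h (x, p))
    (hodd : ∀ x p : V3, h (x, -p) = -h (x, p)) (hh : ContDiff ℝ 1 h) (hc : HasCompactSupport h) :
    ∃ C C', 0 ≤ C ∧ 0 ≤ C' ∧ (∀ z, |h z * bb U z| ≤ C * |aa z|) ∧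
      ∀ z, |h z ^ 2 * DX U (bb U) z| ≤ C' * |aa z| := by
  obtain ⟨L, hL0, hL⟩ := bound_perp hsym hodd hh hc
  obtain ⟨R, hR0, hR⟩ := hc.exists_ball
  obtain ⟨H, hH0, hH⟩ := hc.exists_bound_cont hh.continuous
  have hNc := grad_contDiff hU
  have hK := isCompact_closedBall (0 : V3) R
  obtain ⟨B1, hB1⟩ := hK.exists_bound_of_continuousOn hNc.continuous.continuousOn
  obtain ⟨B2, hB2⟩ := hK.exists_bound_of_continuousOn
    (hNc.continuous_fderiv (by norm_num)).continuousOn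
  obtain ⟨B3, hB3⟩ := hK.exists_bound_of_continuousOn (divg_continuous hNc).continuousOn
  have h0K : (0 : V3) ∈ Metric.closedBall (0 : V3) R := Metric.mem_closedBall_self hR0.le
  have hB10 := (norm_nonneg _).trans (hB1 0 h0K)
  have hB20 := (norm_nonneg _).trans (hB2 0 h0K)
  have hB30 := (norm_nonneg _).trans (hB3 0 h0K)
  have hxK : ∀ z, h z ≠ 0 → z.1 ∈ Metric.closedBall (0 : V3) R := fun z hz => by
    rw [mem_closedBall_zero_iff]
    by_contra hne
    exact hz (hR z ((not_le.1 hne).le.trans (norm_fst_le z)))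
  refine ⟨L * B1 + L, H ^ 2 * (B3 + B2), by positivity, by positivity, fun z => ?_, fun z => ?_⟩
  · by_cases hz : h z = 0
    · rw [hz]; simp; positivity
    · have e1 : |bb U z| ≤ ‖z.1‖ * B1 + ‖z.2‖ := by
        unfold bb
        refine (abs_sub _ _).trans (add_le_add ?_ ?_)
        · refine (abs_real_inner_le_norm _ _).trans ?_
          have := hB1 z.1 (hxK z hz)
          gcongr
        · have hs : 0 < √(1 + ‖z.2‖ ^ 2) := by positivity
          rw [abs_of_nonneg (by positivity), ← div_eq_mul_inv, div_le_iff₀ hs]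
          have := mul_le_mul_of_nonneg_left (norm_le_sqrt z.2) (norm_nonneg z.2)
          linarith [sq ‖z.2‖]
      obtain ⟨a1, a2⟩ := hL z.1 z.2
      rw [abs_mul]
      calc |h z| * |bb U z| ≤ |h z| * (‖z.1‖ * B1 + ‖z.2‖) := by gcongr
        _ = (|h z| * ‖z.1‖) * B1 + |h z| * ‖z.2‖ := by ring
        _ ≤ (L * |aa z|) * B1 + L * |aa z| := by
            have a1' : |h z| * ‖z.1‖ ≤ L * |aa z| := a1
            have a2' : |h z| * ‖z.2‖ ≤ L * |aa z| := a2
            gcongr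
        _ = (L * B1 + L) * |aa z| := by ring
  · by_cases hz : h z = 0
    · rw [hz]; simp; positivity
    · have hz1 : z.1 ≠ 0 := by
        intro h0
        apply hz
        obtain ⟨x, p⟩ := z
        simp only at h0
        subst h0
        by_cases hp : p = 0
        · have := hodd 0 0
          subst hp
          rw [neg_zero] at this
          linarith
        · have := (hL 0 p).2
          rw [inner_zero_left, abs_zero, mul_zero] at this
          have hp' := norm_pos_iff.2 hp
          by_contra hne
          have := mul_pos (abs_pos.2 hne) hp'
          linarith
      have hs1 : 1 ≤ √(1 + ‖z.2‖ ^ 2) := Real.one_le_sqrt.2 (by nlinarith [sq_nonneg ‖z.2‖])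
      obtain ⟨c, hcc⟩ := radial_fderiv hN hz1 (hNc.differentiable (by norm_num) z.1)
      have e1 : |l ‖z.1‖| ≤ B2 := (radial_coeff_le hcc).trans (hB2 z.1 (hxK z hz))
      have e2 : |divg (gradient U) z.1| ≤ B3 := hB3 z.1 (hxK z hz)
      have e3 : |divg (gradient U) z.1 / √(1 + ‖z.2‖ ^ 2) + l ‖z.1‖ / √(1 + ‖z.2‖ ^ 2) ^ 3| ≤
          B3 + B2 := by
        refine (abs_add_le _ _).trans (add_le_add ?_ ?_)
        · rw [abs_div, abs_of_pos (by positivity : 0 < √(1 + ‖z.2‖ ^ 2))]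
          exact (div_le_self (abs_nonneg _) hs1).trans e2
        · rw [abs_div, abs_of_pos (by positivity : 0 < √(1 + ‖z.2‖ ^ 2) ^ 3)]
          exact (div_le_self (abs_nonneg _) (one_le_pow₀ hs1)).trans e1
      have e4 : h z ^ 2 ≤ H ^ 2 := by
        rw [← sq_abs]; exact pow_le_pow_left₀ (abs_nonneg _) (hH z) 2
      rw [DX_bb hU hN hz1, abs_mul, abs_mul, abs_neg, abs_of_nonneg (sq_nonneg (h z))]
      calc _ ≤ H ^ 2 * (|aa z| * (B3 + B2)) := by gcongr
        _ = _ := by ring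

/-! ### The energy balance -/

lemma DX_zero_off {U : V3 → ℝ} {h : V3 × V3 → ℝ} {z : V3 × V3} (hz : z ∉ tsupport h) :
    DX U h z = 0 := by
  have h1 : fderiv ℝ h z = 0 := by
    by_contra h2
    exact hz (support_fderiv_subset ℝ h2)
  simp [DX, h1]

lemma rpow_three_half (p : V3) : (1 + ‖p‖ ^ 2) ^ ((3 : ℝ) / 2) = √(1 + ‖p‖ ^ 2) ^ 3 := by
  have hy : 0 ≤ 1 + ‖p‖ ^ 2 := by positivity
  generalize 1 + ‖p‖ ^ 2 = y at hy ⊢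
  rw [Real.sqrt_eq_rpow, ← Real.rpow_natCast, ← Real.rpow_mul hy]
  norm_num

/-- **Positivity of the second variation on linearly dynamically accessible states
for (RVP) (Kandrup-type inequality).**  Here `(f₀,U₀)` is a compactly supported
polytropic steady state of the relativistic Vlasov–Poisson system with
`f₀ = (E₀−E)₊^k`, `1 ≤ k < 7/2`, `E₀ < 0`, and `u'` is the radial derivative of the
spherically symmetric potential `U₀`. -/
theorem stmt_7 (k E₀ : ℝ) (hk : 1 ≤ k) (hk' : k < 7 / 2) (hE₀ : E₀ < 0)
    (U₀ : V3 → ℝ) (hU₀smooth : ContDiff ℝ 2 U₀)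
    (hU₀rad : ∀ x y : V3, ‖x‖ = ‖y‖ → U₀ x = U₀ y)
    (hU₀inf : Tendsto U₀ (Filter.cocompact V3) (nhds 0))
    (f₀ : V3 × V3 → ℝ) (hf₀ : f₀ = fun z => polyAnsatz E₀ k (Erel U₀ z))
    (hcpt : HasCompactSupport f₀) (hint : Integrable f₀ volume)
    (hpoisson : ∀ x : V3, U₀ x = -∫ y : V3, rhoOf f₀ y / ‖x - y‖)
    (u' : ℝ → ℝ) (hu' : ∀ x : V3, x ≠ 0 → gradient U₀ x = (u' ‖x‖ / ‖x‖) • x)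
    (h : V3 × V3 → ℝ) (hhsmooth : ContDiff ℝ (⊤ : ℕ∞) h) (hhcpt : HasCompactSupport h)
    (hhsupp : tsupport h ⊆ {z : V3 × V3 | 0 < f₀ z})
    (hhsym : ∀ A : V3 ≃ₗᵢ[ℝ] V3, IsRot A → ∀ x p : V3, h (A x, A p) = h (x, p))
    (hhodd : ∀ x p : V3, h (x, -p) = -h (x, p)) :
    D2HC U₀ E₀ k (pbracket (Erel U₀) h) ≥
      (1 / 2) * ∫ z : V3 × V3, (1 / |polyAnsatz' E₀ k (Erel U₀ z)|) *
        ((⟪z.1, z.2⟫) ^ 2 *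
            (pbracket (Erel U₀) (fun z' => h z' / ⟪z'.1, z'.2⟫) z) ^ 2 +
          u' ‖z.1‖ / (‖z.1‖ * (1 + ‖z.2‖ ^ 2) ^ ((3 : ℝ) / 2)) * (h z) ^ 2) := by
  have hU := hU₀smooth
  have hh : ContDiff ℝ 1 h := hhsmooth.of_le (by exact_mod_cast le_top)
  have hdh : ∀ z, DifferentiableAt ℝ h z := fun z => hh.differentiable (by norm_num) z
  have hda : ∀ z, DifferentiableAt ℝ aa z := fun z =>
    (aa_contDiff (n := 1)).differentiable (by norm_num) z
  let l : ℝ → ℝ := fun r => u' r / r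
  have hN : ∀ x, x ≠ 0 → gradient U₀ x = l ‖x‖ • x := hu'
  have hNc := grad_contDiff hU
  have hsuppE : ∀ z ∈ tsupport h, Erel U₀ z < E₀ := fun z hz => by
    have := hhsupp hz
    rw [hf₀] at this
    exact (poly_pos_iff hk).1 this
  set W := wt E₀ k U₀ with hWdef
  have hWm : Measurable W := wt_measurable E₀ k hU
  have hW : ∀ z ∈ tsupport h, ContDiffAt ℝ 1 W z ∧ DX U₀ W z = 0 := fun z hz =>
    wt_smooth hk hU (hsuppE z hz)
  obtain ⟨M, hM⟩ := hhcpt.isCompact.exists_bound_of_continuousOn (f := W) fun z hz =>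
    (hW z hz).1.continuousAt.continuousWithinAt
  obtain ⟨C, C', hC0, hC0', hC, hC'⟩ := sing_bounds hU hN hhsym hhodd hh hhcpt
  obtain ⟨hQi, hQ0⟩ := limit_identity hU hh hhcpt aa_contDiff (bb_contDiff hU) (DX_aa U₀) hWm hW hM
    hC0 hC0' hC hC' aa_ne_zero_ae
  have cDh := DX_continuous hU hh
  have csq : Continuous fun z : V3 × V3 => √(1 + ‖z.2‖ ^ 2) :=
    (sqrt_contDiff (n := 0)).continuous.comp continuous_snd
  have hspos : ∀ z : V3 × V3, 0 < √(1 + ‖z.2‖ ^ 2) := fun z => by positivity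
  have cdiv := divg_continuous hNc
  have ch := hh.continuous
  have h0off : ∀ z ∉ tsupport h, h z = 0 := fun z hz => image_eq_zero_of_notMem_tsupport hz
  -- the kinetic term
  have i1 : Integrable fun z => W z * DX U₀ h z ^ 2 :=
    wt_integrable hWm hhcpt hM (cDh.pow 2) fun z hz => by simp [DX_zero_off hz]
  have i3 : Integrable fun z => W z * (h z ^ 2 / √(1 + ‖z.2‖ ^ 2)) :=
    wt_integrable hWm hhcpt hM ((ch.pow 2).div csq fun z => (hspos z).ne') fun z hz => by
      simp [h0off z hz]
  have i2 : Integrable fun z : V3 × V3 =>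
      W z * (divg (gradient U₀) z.1 * (h z ^ 2 / √(1 + ‖z.2‖ ^ 2))) :=
    wt_integrable hWm hhcpt hM ((cdiv.comp continuous_fst).mul
      ((ch.pow 2).div csq fun z => (hspos z).ne')) fun z hz => by simp [h0off z hz]
  have hfirst : ∫ z in {z : V3 × V3 | 0 < polyAnsatz E₀ k (Erel U₀ z)},
      (pbracket (Erel U₀) h z) ^ 2 / |polyAnsatz' E₀ k (Erel U₀ z)| =
      ∫ z, W z * DX U₀ h z ^ 2 := by
    have e1 : ∀ z, (pbracket (Erel U₀) h z) ^ 2 / |polyAnsatz' E₀ k (Erel U₀ z)| =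
        W z * DX U₀ h z ^ 2 := fun z => by
      rw [pbracket_eq hU (hdh z), hWdef]
      simp only [wt]; ring
    simp_rw [e1]
    refine setIntegral_eq_integral_of_forall_compl_eq_zero fun z hz => ?_
    have hz' : z ∉ tsupport h := fun hz2 => hz ((poly_pos_iff hk).2 (hsuppE z hz2))
    simp [DX_zero_off hz']
  -- completing the square
  have hrhs : ∫ z : V3 × V3, (1 / |polyAnsatz' E₀ k (Erel U₀ z)|) *
        ((⟪z.1, z.2⟫) ^ 2 *
            (pbracket (Erel U₀) (fun z' => h z' / ⟪z'.1, z'.2⟫) z) ^ 2 +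
          u' ‖z.1‖ / (‖z.1‖ * (1 + ‖z.2‖ ^ 2) ^ ((3 : ℝ) / 2)) * (h z) ^ 2) =
      (∫ z, W z * DX U₀ h z ^ 2) -
      ∫ z : V3 × V3, W z * (divg (gradient U₀) z.1 * (h z ^ 2 / √(1 + ‖z.2‖ ^ 2))) := by
    have e1 : (fun z : V3 × V3 => (1 / |polyAnsatz' E₀ k (Erel U₀ z)|) *
        ((⟪z.1, z.2⟫) ^ 2 *
            (pbracket (Erel U₀) (fun z' => h z' / ⟪z'.1, z'.2⟫) z) ^ 2 +
          u' ‖z.1‖ / (‖z.1‖ * (1 + ‖z.2‖ ^ 2) ^ ((3 : ℝ) / 2)) * (h z) ^ 2)) =ᵐ[volume]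
        fun z => (W z * DX U₀ h z ^ 2 -
          W z * (divg (gradient U₀) z.1 * (h z ^ 2 / √(1 + ‖z.2‖ ^ 2)))) -
          W z * QQ U₀ h aa (bb U₀) z := by
      filter_upwards [aa_ne_zero_ae] with z hz
      have hz1 : z.1 ≠ 0 := fun h0 => hz (by simp [aa, h0])
      have hb : pbracket (Erel U₀) (fun z' => h z' / ⟪z'.1, z'.2⟫) z =
          (DX U₀ h z * aa z - h z * bb U₀ z) / aa z ^ 2 := by
        rw [← DX_aa, ← DX_quot (hdh z) (hda z) hz]
        exact pbracket_eq hU (diff_div (hdh z) (hda z) hz)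
      have hx := norm_ne_zero_iff.2 hz1
      have hs := (hspos z).ne'
      rw [hb, rpow_three_half, QQ, DX_bb hU hN hz1]
      change W z * (aa z ^ 2 * _ + _) = _
      simp only [l]
      field_simp
      ring
    have i12 : Integrable fun z : V3 × V3 => W z * DX U₀ h z ^ 2 -
        W z * (divg (gradient U₀) z.1 * (h z ^ 2 / √(1 + ‖z.2‖ ^ 2))) := i1.sub i2
    rw [integral_congr_ae e1, integral_sub i12 hQi, integral_sub i1 i2, hQ0, sub_zero]
  -- the field term
  have hpois : ∀ᵐ x : V3, divg (gradient U₀) x = 4 * Real.pi * rhoOf f₀ x := by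
    have hρ : Integrable (rhoOf f₀) := by
      rw [Measure.volume_eq_prod] at hint
      exact hint.integral_prod_left
    filter_upwards [poisson_ae U₀ _ hU hρ hpoisson] with x hx
    rw [← lap3_eq_divg hU, hx]
  have hslice : ∀ᵐ x : V3, Integrable fun p : V3 =>
      W (x, p) * (h (x, p) ^ 2 / √(1 + ‖p‖ ^ 2)) := by
    rw [Measure.volume_eq_prod] at i3
    exact i3.prod_right_ae
  have h0ae : ∀ᵐ x : V3, x ≠ 0 := by simp [ae_iff]
  have hcj := curr_contDiff hh hhcpt
  have hjc := curr_compact hhcpt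
  have ij : Integrable fun x => 4 * Real.pi * ‖curr h x‖ ^ 2 :=
    Continuous.integrable_of_hasCompactSupport (by have := hcj.continuous; fun_prop)
      (hjc.mono fun x hx hne => hx (by simp [hne]))
  have hfub : ∫ z : V3 × V3, W z * (divg (gradient U₀) z.1 * (h z ^ 2 / √(1 + ‖z.2‖ ^ 2))) =
      ∫ x : V3, divg (gradient U₀) x * ∫ p : V3, W (x, p) * (h (x, p) ^ 2 / √(1 + ‖p‖ ^ 2)) := by
    have i2' := i2
    rw [Measure.volume_eq_prod] at i2' ⊢
    rw [integral_prod _ i2']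
    congr 1; ext x
    rw [← integral_const_mul]
    congr 1; ext p
    ring
  have iJ : Integrable fun x : V3 =>
      divg (gradient U₀) x * ∫ p : V3, W (x, p) * (h (x, p) ^ 2 / √(1 + ‖p‖ ^ 2)) := by
    have i2' := i2
    rw [Measure.volume_eq_prod] at i2'
    refine i2'.integral_prod_left.congr (ae_of_all _ fun x => ?_)
    simp only
    rw [← integral_const_mul]
    congr 1; ext p
    ring
  have hmono : ∫ x, 4 * Real.pi * ‖curr h x‖ ^ 2 ≤
      ∫ x : V3, divg (gradient U₀) x * ∫ p : V3, W (x, p) * (h (x, p) ^ 2 / √(1 + ‖p‖ ^ 2)) := by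
    refine integral_mono_ae ij iJ ?_
    filter_upwards [hpois, hslice, h0ae] with x hx hi hx0
    have e1 : (fun p : V3 => W (x, p) * (h (x, p) ^ 2 / √(1 + ‖p‖ ^ 2))) = fun p : V3 =>
        1 / |polyAnsatz' E₀ k (Erel U₀ (x, p))| * h (x, p) ^ 2 / √(1 + ‖p‖ ^ 2) := by
      ext p; rw [← mul_div_assoc]; rfl
    rw [e1] at hi
    have := curr_sq_le (E₀ := E₀) hk U₀ ch hhcpt
      (fun z hz => hsuppE z (subset_tsupport h hz)) hhsym hx0 hi
    rw [hx, e1, hf₀, mul_assoc (4 * Real.pi)]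
    exact mul_le_mul_of_nonneg_left this (by positivity)
  have hfield : ∫ x : V3, ‖gradUf (pbracket (Erel U₀) h) x‖ ^ 2 =
      4 * Real.pi * ∫ x, 4 * Real.pi * ‖curr h x‖ ^ 2 := by
    rw [← integral_const_mul]
    congr 1; ext x
    rw [gradUf_eq hU hh hhcpt hhsym, norm_neg, norm_smul, mul_pow, Real.norm_eq_abs, sq_abs]
    ring
  unfold D2HC
  rw [hfirst, hrhs, hfield, hfub]
  have hpi := Real.pi_pos
  have e2 : 1 / (8 * Real.pi) * (4 * Real.pi * ∫ x, 4 * Real.pi * ‖curr h x‖ ^ 2) =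
      1 / 2 * ∫ x, 4 * Real.pi * ‖curr h x‖ ^ 2 := by
    field_simp
    ring
  rw [e2]
  linarith
end
end

section
/- Let φ : ℝ → [0,∞) be continuous, C² on (0,∞), with φ = 0 on (−∞,0], φ > 0 on (0,∞), and suppose φ(η) ≥ C η^k for η ∈ (0,η₀) for some constants C > 0, η₀ > 0, 0 < k < 3/2. Define g_N(y) = 4π√2 ∫₀^y φ(η)(y−η)^{1/2} dη for y > 0 and g_N(y) = 0 for y ≤ 0. Then for every κ > 0 there exists a unique function y = y_κ ∈ C²([0,∞)) with y(0) = κ and y'(0) = 0 solving y'(r) = −m(r)/r² for r > 0, where m(r) = 4π ∫₀^r g_N(y(s)) s² ds; moreover y is strictly decreasing, there is a unique radius R_κ ∈ (0,∞) with y(R_κ) = 0 (so that ρ_κ := g_N ∘ y_κ is supported in [0,R_κ]), ρ_κ ∈ C¹([0,∞)), and the total mass m(∞) = 4π ∫₀^{R_κ} ρ_κ(s) s² ds is finite. (This yields a one-parameter family of compactly supported, finite-mass steady states of the Vlasov–Poisson system, parameterized by κ = U_κ(R_κ) − U_κ(0).) -/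
/-!
The kernel of `gN` is desingularised by the substitution `η = y - u²` and an integration by parts
(`gN_eq_gReg`), which shows that `gN` is `C¹` for merely continuous `φ`. It vanishes on `(-∞, 0]`, so
once frozen above `κ` it becomes bounded and globally Lipschitz (`gCut`). Solutions stay below `κ`,
so the freezing changes nothing.

With `s = rτ` the field `m(r)/r²` becomes `4π r ∫₀¹ ρ(rτ) τ² dτ`, which is `C¹` through the origin
(`contDiff_fld`). The equation with data `κ` is equivalent to the Picard equation
`y = κ - ∫₀^r fld`, whose right-hand side is a contraction in a sup norm with Gaussian weight
(`picard_contract`, `exists_unique_picard`); this gives global existence and uniqueness at once.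

For the finite radius, `k < 3/2` gives `gN y ≥ c y³` on `(0, κ]` (`gN_cubic`). If `y` stayed positive,
then `y ≥ m/(4r)` and `m' = 4π r² gN(y) ≥ b m³/r`, so `1/m²` would have to become negative by the
divergence of `∫ dr/r` (`no_global_pos`).
-/

open MeasureTheory Set Filter Topology
open scoped ENNReal

noncomputable section

/-- The Newtonian profile `g_N(y) = 4π√2 ∫₀^y φ(η)(y−η)^{1/2} dη` for `y > 0`,
and `g_N(y) = 0` for `y ≤ 0`. -/
def gN (φ : ℝ → ℝ) (y : ℝ) : ℝ :=
  if 0 < y then 4 * Real.pi * Real.sqrt 2 * ∫ η in (0 : ℝ)..y, φ η * Real.sqrt (y - η)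
  else 0

/-- The mass function `m(r) = 4π ∫₀^r g_N(y(s)) s² ds`. -/
def mN (φ : ℝ → ℝ) (y : ℝ → ℝ) (r : ℝ) : ℝ :=
  4 * Real.pi * ∫ s in (0 : ℝ)..r, gN φ (y s) * s ^ 2

/-- `y` is a `C²` solution on `[0,∞)` of the stationary (VP) equation
`y' = −m/r²` with `y(0) = κ`, `y'(0) = 0`. -/
def IsVPSteady (φ : ℝ → ℝ) (κ : ℝ) (y : ℝ → ℝ) : Prop :=
  ContDiffOn ℝ 2 y (Ici 0) ∧ y 0 = κ ∧ derivWithin y (Ici 0) 0 = 0 ∧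
  ∀ r : ℝ, 0 < r → deriv y r = -(mN φ y r) / r ^ 2

/-! ### The profile `gN` -/

/-- A formula for `gN` without singular kernel, in terms of the primitive of `φ`. It agrees with
`gN φ` on `(-∞, M²]`; the parameter `M` makes the domain of integration independent of `y`. -/
def gReg (φ : ℝ → ℝ) (M : ℝ) (y : ℝ) : ℝ :=
  4 * Real.pi * Real.sqrt 2 * ∫ u in (0 : ℝ)..M, ∫ x in (0 : ℝ)..(y - u ^ 2), φ x

lemma gcoef_pos : 0 < 4 * Real.pi * Real.sqrt 2 := by positivity

lemma hasDerivAt_prim {φ : ℝ → ℝ} (hφ : Continuous φ) (x : ℝ) :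
    HasDerivAt (fun y => ∫ t in (0 : ℝ)..y, φ t) (φ x) x :=
  intervalIntegral.integral_hasDerivAt_right (hφ.intervalIntegrable _ _)
    (hφ.stronglyMeasurableAtFilter _ _) hφ.continuousAt

lemma continuous_prim {φ : ℝ → ℝ} (hφ : Continuous φ) :
    Continuous (fun y => ∫ t in (0 : ℝ)..y, φ t) :=
  continuous_iff_continuousAt.2 fun x => (hasDerivAt_prim hφ x).continuousAt

lemma prim_nonpos_eq_zero {φ : ℝ → ℝ} (hφ0 : ∀ η : ℝ, η ≤ 0 → φ η = 0) {y : ℝ} (hy : y ≤ 0) :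
    ∫ t in (0 : ℝ)..y, φ t = 0 := by
  rw [intervalIntegral.integral_congr (g := fun _ => (0 : ℝ))]
  · simp
  · intro t ht
    rw [uIcc_of_ge hy] at ht
    exact hφ0 t ht.2

/-- The substitution `η = y - u²` removes the square root, and integrating by parts in `u` moves the
derivative away from `φ`; the boundary terms vanish because `y ≤ M²` and `φ = 0` on `(-∞, 0]`. -/
lemma gN_eq_gReg {φ : ℝ → ℝ} (hφ : Continuous φ) (hφ0 : ∀ η : ℝ, η ≤ 0 → φ η = 0)
    {M y : ℝ} (hM : 0 ≤ M) (hy : y ≤ M ^ 2) : gN φ y = gReg φ M y := by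
  unfold gN gReg
  split_ifs with hpos
  · congr 1
    -- `φ` vanishes on `[y - M², 0]`, so the lower limit may be moved there
    have h1 : ∫ η in (0 : ℝ)..y, φ η * Real.sqrt (y - η)
        = ∫ η in (y - M ^ 2)..y, φ η * Real.sqrt (y - η) := by
      have hc : Continuous fun η => φ η * Real.sqrt (y - η) := by fun_prop
      rw [← intervalIntegral.integral_add_adjacent_intervals
        (hc.intervalIntegrable (y - M ^ 2) 0) (hc.intervalIntegrable 0 y)]
      rw [intervalIntegral.integral_congr (a := y - M ^ 2) (b := 0) (g := fun _ => (0 : ℝ))]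
      · simp
      · intro t ht
        rw [uIcc_of_le (by linarith)] at ht
        simp [hφ0 t ht.2]
    have h2 : ∫ η in (y - M ^ 2)..y, φ η * Real.sqrt (y - η)
        = ∫ s in (0 : ℝ)..M ^ 2, φ (y - s) * Real.sqrt s := by
      have := intervalIntegral.integral_comp_sub_left (a := 0) (b := M ^ 2)
        (fun η => φ η * Real.sqrt (y - η)) y
      simp only [sub_sub_cancel, sub_zero] at this
      exact this.symm
    have h3 : ∫ s in (0 : ℝ)..M ^ 2, φ (y - s) * Real.sqrt s
        = ∫ u in (0 : ℝ)..M, u * (φ (y - u ^ 2) * (2 * u)) := by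
      have := intervalIntegral.integral_comp_mul_deriv (a := 0) (b := M)
        (f := fun u : ℝ => u ^ 2) (f' := fun u => 2 * u)
        (g := fun s => φ (y - s) * Real.sqrt s)
        (fun x _ => by simpa using hasDerivAt_pow 2 x) (by fun_prop) (by fun_prop)
      rw [show (0 : ℝ) ^ 2 = 0 by norm_num] at this
      rw [← this]
      apply intervalIntegral.integral_congr
      intro u hu
      rw [uIcc_of_le hM] at hu
      simp only [Function.comp, Real.sqrt_sq hu.1]
      ring
    have h4 := intervalIntegral.integral_mul_deriv_eq_deriv_mul (a := 0) (b := M)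
      (u := fun u : ℝ => u) (u' := fun _ => 1)
      (v := fun u => -∫ x in (0 : ℝ)..(y - u ^ 2), φ x) (v' := fun u => φ (y - u ^ 2) * (2 * u))
      (fun x _ => hasDerivAt_id x)
      (fun x _ => by
        have hd : HasDerivAt (fun u : ℝ => y - u ^ 2) (-(2 * x)) x := by
          simpa using (hasDerivAt_pow 2 x).const_sub y
        have := ((hasDerivAt_prim hφ (y - x ^ 2)).comp x hd).neg
        exact this.congr_deriv (by ring))
      (continuous_const.intervalIntegrable _ _)
      (Continuous.intervalIntegrable (by fun_prop) _ _)
    rw [h1, h2, h3, h4, prim_nonpos_eq_zero hφ0 (y := y - M ^ 2) (by linarith)]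
    simp
  · rw [intervalIntegral.integral_congr (g := fun _ => (0 : ℝ))]
    · simp
    · intro u _
      exact prim_nonpos_eq_zero hφ0 (by nlinarith [sq_nonneg u])

/-- Differentiation under the integral sign. Only continuity of `φ` is needed, since its primitive is
`C¹`. -/
lemma hasDerivAt_gReg {φ : ℝ → ℝ} (hφ : Continuous φ) {M : ℝ} (hM : 0 ≤ M) (y : ℝ) :
    HasDerivAt (gReg φ M)
      (4 * Real.pi * Real.sqrt 2 * ∫ u in (0 : ℝ)..M, φ (y - u ^ 2)) y := by
  unfold gReg
  apply HasDerivAt.const_mul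
  have hp := continuous_prim hφ
  obtain ⟨B, hB⟩ := (isCompact_Icc (a := y - 1 - M ^ 2) (b := y + 1)).exists_bound_of_continuousOn
    hφ.continuousOn
  refine (intervalIntegral.hasDerivAt_integral_of_dominated_loc_of_deriv_le (bound := fun _ => B)
    (s := Metric.ball y 1) (F := fun y u => ∫ x in (0 : ℝ)..(y - u ^ 2), φ x)
    (F' := fun y u => φ (y - u ^ 2)) (Metric.ball_mem_nhds y one_pos) ?_ ?_ ?_ ?_ ?_ ?_).2
  · exact Eventually.of_forall fun x =>
      (hp.comp (by fun_prop : Continuous fun u : ℝ => x - u ^ 2)).aestronglyMeasurable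
  · exact (hp.comp (by fun_prop : Continuous fun u : ℝ => y - u ^ 2)).intervalIntegrable _ _
  · exact (by fun_prop : Continuous fun u : ℝ => φ (y - u ^ 2)).aestronglyMeasurable
  · refine Eventually.of_forall fun u hu x hx => hB _ ?_
    rw [uIoc_of_le hM] at hu
    rw [Metric.mem_ball, Real.dist_eq, abs_lt] at hx
    have : u ^ 2 ≤ M ^ 2 := pow_le_pow_left₀ hu.1.le hu.2 2
    constructor <;> nlinarith [sq_nonneg u]
  · exact intervalIntegrable_const
  · refine Eventually.of_forall fun u _ x _ => ?_
    exact ((hasDerivAt_prim hφ (x - u ^ 2)).comp x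
      ((hasDerivAt_id x).sub_const (u ^ 2))).congr_deriv (mul_one _)

lemma contDiff_gReg {φ : ℝ → ℝ} (hφ : Continuous φ) {M : ℝ} (hM : 0 ≤ M) :
    ContDiff ℝ 1 (gReg φ M) := by
  rw [contDiff_one_iff_deriv]
  refine ⟨fun y => (hasDerivAt_gReg hφ hM y).differentiableAt, ?_⟩
  rw [funext fun y => (hasDerivAt_gReg hφ hM y).deriv]
  refine continuous_const.mul ?_
  exact intervalIntegral.continuous_parametric_intervalIntegral_of_continuous' (by fun_prop) _ _

lemma gN_of_nonpos (φ : ℝ → ℝ) {y : ℝ} (hy : y ≤ 0) : gN φ y = 0 := if_neg hy.not_gt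

lemma gN_pos {φ : ℝ → ℝ} (hφ : Continuous φ) (hφpos : ∀ η : ℝ, 0 < η → 0 < φ η) {y : ℝ}
    (hy : 0 < y) : 0 < gN φ y := by
  rw [gN, if_pos hy]
  refine mul_pos gcoef_pos (intervalIntegral.intervalIntegral_pos_of_pos_on
    (Continuous.intervalIntegrable (by fun_prop) _ _) (fun x hx => ?_) hy)
  exact mul_pos (hφpos x hx.1) (Real.sqrt_pos.2 (by linarith [hx.2]))

lemma gN_nonneg {φ : ℝ → ℝ} (hφ : Continuous φ) (hφpos : ∀ η : ℝ, 0 < η → 0 < φ η) (y : ℝ) :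
    0 ≤ gN φ y := by
  rcases le_or_gt y 0 with hy | hy
  · rw [gN_of_nonpos φ hy]
  · exact (gN_pos hφ hφpos hy).le

lemma gReg_mono {φ : ℝ → ℝ} (hφ : Continuous φ) (hφ0 : ∀ η : ℝ, η ≤ 0 → φ η = 0)
    (hφpos : ∀ η : ℝ, 0 < η → 0 < φ η) {M : ℝ} (hM : 0 ≤ M) : Monotone (gReg φ M) := by
  refine monotone_of_deriv_nonneg (fun y => (hasDerivAt_gReg hφ hM y).differentiableAt)
    fun y => ?_
  rw [(hasDerivAt_gReg hφ hM y).deriv]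
  refine mul_nonneg gcoef_pos.le (intervalIntegral.integral_nonneg hM fun u _ => ?_)
  rcases le_or_gt (y - u ^ 2) 0 with h | h
  · rw [hφ0 _ h]
  · exact (hφpos _ h).le

/-- The profile frozen above `κ`, which is bounded and globally Lipschitz. -/
def gCut (φ : ℝ → ℝ) (κ : ℝ) (y : ℝ) : ℝ := gN φ (min y κ)

lemma gN_monotone {φ : ℝ → ℝ} (hφ : Continuous φ) (hφ0 : ∀ η : ℝ, η ≤ 0 → φ η = 0)
    (hφpos : ∀ η : ℝ, 0 < η → 0 < φ η) : Monotone (gN φ) := by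
  intro a b hab
  have hM : (0 : ℝ) ≤ |b| + 1 := by positivity
  have hb : b ≤ (|b| + 1) ^ 2 := by nlinarith [le_abs_self b, abs_nonneg b]
  rw [gN_eq_gReg hφ hφ0 hM hb, gN_eq_gReg hφ hφ0 hM (hab.trans hb)]
  exact gReg_mono hφ hφ0 hφpos hM hab

lemma gCut_nonneg {φ : ℝ → ℝ} (hφ : Continuous φ) (hφpos : ∀ η : ℝ, 0 < η → 0 < φ η) (κ y : ℝ) :
    0 ≤ gCut φ κ y := gN_nonneg hφ hφpos _

lemma gCut_le {φ : ℝ → ℝ} (hφ : Continuous φ) (hφ0 : ∀ η : ℝ, η ≤ 0 → φ η = 0)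
    (hφpos : ∀ η : ℝ, 0 < η → 0 < φ η) (κ y : ℝ) : gCut φ κ y ≤ gN φ κ :=
  gN_monotone hφ hφ0 hφpos (min_le_right _ _)

/-- The derivative of the profile vanishes on `(-∞, 0)` and is bounded on `[0, κ]` by compactness. -/
lemma gCut_lipschitz {φ : ℝ → ℝ} (hφ : Continuous φ) (hφ0 : ∀ η : ℝ, η ≤ 0 → φ η = 0)
    {κ : ℝ} (hκ : 0 < κ) : ∃ L : ℝ, 0 ≤ L ∧ ∀ a b, |gCut φ κ a - gCut φ κ b| ≤ L * |a - b| := by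
  have hM : (0 : ℝ) ≤ κ + 1 := by positivity
  have hκM : κ ≤ (κ + 1) ^ 2 := by nlinarith
  have hc : Continuous (deriv (gReg φ (κ + 1))) :=
    (contDiff_gReg hφ hM).continuous_deriv le_rfl
  obtain ⟨L, hL⟩ := (isCompact_Icc (a := 0) (b := κ)).exists_bound_of_continuousOn hc.continuousOn
  have hL0 : 0 ≤ L := (norm_nonneg _).trans (hL 0 ⟨le_rfl, hκ.le⟩)
  have hbd : ∀ x ∈ Iic κ, ‖deriv (gReg φ (κ + 1)) x‖ ≤ L := by
    intro x hx
    rcases le_or_gt 0 x with h0 | h0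
    · exact hL x ⟨h0, hx⟩
    · rw [(hasDerivAt_gReg hφ hM x).deriv]
      rw [intervalIntegral.integral_congr (g := fun _ => (0 : ℝ))]
      · simpa using hL0
      · intro u _
        exact hφ0 _ (by nlinarith [sq_nonneg u])
  refine ⟨L, hL0, fun a b => ?_⟩
  have h := (convex_Iic κ).norm_image_sub_le_of_norm_deriv_le (f := gReg φ (κ + 1))
    (fun x _ => (hasDerivAt_gReg hφ hM x).differentiableAt) hbd
    (min_le_right b κ) (min_le_right a κ)
  unfold gCut
  rw [gN_eq_gReg hφ hφ0 hM ((min_le_right a κ).trans hκM),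
    gN_eq_gReg hφ hφ0 hM ((min_le_right b κ).trans hκM)]
  refine h.trans (mul_le_mul_of_nonneg_left ?_ hL0)
  simpa using abs_min_sub_min_le_max a κ b κ

lemma continuous_gCut {φ : ℝ → ℝ} (hφ : Continuous φ) (hφ0 : ∀ η : ℝ, η ≤ 0 → φ η = 0)
    {κ : ℝ} (hκ : 0 < κ) : Continuous (gCut φ κ) := by
  have hM : (0 : ℝ) ≤ κ + 1 := by positivity
  have hκM : κ ≤ (κ + 1) ^ 2 := by nlinarith
  have h : gCut φ κ = fun y => gReg φ (κ + 1) (min y κ) :=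
    funext fun y => gN_eq_gReg hφ hφ0 hM ((min_le_right y κ).trans hκM)
  rw [h]
  have := (contDiff_gReg hφ hM).continuous
  fun_prop

/-! ### The radial field of a continuous density -/

/-- The field strength `m(r)/r²` generated by the radial density `q`, written in the scaled variable
`τ = s/r` as `4π r ∫₀¹ q(rτ) τ² dτ`, so that it makes sense (and is `C¹`) at `r = 0` and for `r < 0`. -/
def fld (q : ℝ → ℝ) (r : ℝ) : ℝ := 4 * Real.pi * r * ∫ τ in (0 : ℝ)..1, q (r * τ) * τ ^ 2

lemma fld_eq (q : ℝ → ℝ) {r : ℝ} (hr : r ≠ 0) :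
    fld q r = 4 * Real.pi * (∫ s in (0 : ℝ)..r, q s * s ^ 2) / r ^ 2 := by
  have h := intervalIntegral.smul_integral_comp_mul_left (a := 0) (b := 1)
    (fun s => q s * s ^ 2) r
  simp only [mul_zero, mul_one, smul_eq_mul] at h
  have h2 : ∫ τ in (0 : ℝ)..1, q (r * τ) * (r * τ) ^ 2
      = r ^ 2 * ∫ τ in (0 : ℝ)..1, q (r * τ) * τ ^ 2 := by
    rw [← intervalIntegral.integral_const_mul]
    congr 1; ext τ; ring
  rw [← h, h2, fld]
  field_simp

lemma continuous_avg {q : ℝ → ℝ} (hq : Continuous q) :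
    Continuous fun r : ℝ => ∫ τ in (0 : ℝ)..1, q (r * τ) * τ ^ 2 :=
  intervalIntegral.continuous_parametric_intervalIntegral_of_continuous' (by fun_prop) _ _

lemma continuous_fld {q : ℝ → ℝ} (hq : Continuous q) : Continuous (fld q) := by
  have := continuous_avg hq
  unfold fld
  fun_prop

/-- The derivative `4π q - 2m/r³` in scaled form. For `r ≠ 0` it comes from `m(r)/r²`; at the origin
both sides are `4π q(0)/3`. -/
lemma hasDerivAt_fld {q : ℝ → ℝ} (hq : Continuous q) (r : ℝ) :
    HasDerivAt (fld q)
      (4 * Real.pi * q r - 8 * Real.pi * ∫ τ in (0 : ℝ)..1, q (r * τ) * τ ^ 2) r := by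
  rcases eq_or_ne r 0 with rfl | hr
  · have hA := continuous_avg hq
    rw [hasDerivAt_iff_tendsto_slope]
    have h0 : ∫ τ in (0 : ℝ)..1, q (0 * τ) * τ ^ 2 = q 0 / 3 := by
      simp only [zero_mul, intervalIntegral.integral_const_mul, integral_pow]
      norm_num; ring
    have h1 : Tendsto (fun r : ℝ => 4 * Real.pi * ∫ τ in (0 : ℝ)..1, q (r * τ) * τ ^ 2)
        (𝓝[≠] 0) (𝓝 (4 * Real.pi * ∫ τ in (0 : ℝ)..1, q (0 * τ) * τ ^ 2)) :=
      ((continuous_const.mul hA).tendsto 0).mono_left nhdsWithin_le_nhds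
    have h2 : 4 * Real.pi * q 0 - 8 * Real.pi * ∫ τ in (0 : ℝ)..1, q (0 * τ) * τ ^ 2
        = 4 * Real.pi * ∫ τ in (0 : ℝ)..1, q (0 * τ) * τ ^ 2 := by rw [h0]; ring
    rw [h2]
    refine h1.congr' ?_
    filter_upwards [self_mem_nhdsWithin] with r hr
    have hr' : r ≠ 0 := hr
    simp only [slope_def_field, fld]
    field_simp
    ring
  · have hc : Continuous fun s => q s * s ^ 2 := by fun_prop
    have h1 := ((hasDerivAt_prim hc r).const_mul (4 * Real.pi)).div (hasDerivAt_pow 2 r)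
      (pow_ne_zero 2 hr)
    have h2 := fld_eq q hr
    have h3 : ∫ τ in (0 : ℝ)..1, q (r * τ) * τ ^ 2 = (∫ s in (0 : ℝ)..r, q s * s ^ 2) / r ^ 3 := by
      rw [fld] at h2
      field_simp at h2 ⊢
      have := Real.pi_pos.ne'
      linear_combination h2
    refine (h1.congr_of_eventuallyEq ?_).congr_deriv ?_
    · filter_upwards [isOpen_ne.mem_nhds hr] with s hs
      exact fld_eq q hs
    · rw [h3]
      field_simp
      push_cast
      ring

lemma contDiff_fld {q : ℝ → ℝ} (hq : Continuous q) : ContDiff ℝ 1 (fld q) := by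
  rw [contDiff_one_iff_deriv]
  refine ⟨fun r => (hasDerivAt_fld hq r).differentiableAt, ?_⟩
  rw [funext fun r => (hasDerivAt_fld hq r).deriv]
  have := continuous_avg hq
  fun_prop

lemma fld_sub_le {q p : ℝ → ℝ} (hq : Continuous q) (hp : Continuous p) {s D : ℝ} (hs : 0 ≤ s)
    (hD : ∀ t, 0 ≤ t → t ≤ s → |q t - p t| ≤ D) : |fld q s - fld p s| ≤ 4 * Real.pi * s * D := by
  have h1 : fld q s - fld p s
      = 4 * Real.pi * s * ∫ τ in (0 : ℝ)..1, (q (s * τ) - p (s * τ)) * τ ^ 2 := by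
    rw [fld, fld, ← mul_sub, ← intervalIntegral.integral_sub
      (Continuous.intervalIntegrable (by fun_prop) _ _)
      (Continuous.intervalIntegrable (by fun_prop) _ _)]
    congr 2; ext τ; ring
  have h2 := intervalIntegral.norm_integral_le_of_norm_le_const (a := 0) (b := 1) (C := D)
    (f := fun τ => (q (s * τ) - p (s * τ)) * τ ^ 2) (by
      intro τ hτ
      rw [uIoc_of_le zero_le_one] at hτ
      have h := hD (s * τ) (mul_nonneg hs hτ.1.le) (mul_le_of_le_one_right hs hτ.2)
      rw [Real.norm_eq_abs, abs_mul, abs_of_nonneg (sq_nonneg τ)]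
      have : τ ^ 2 ≤ 1 := pow_le_one₀ hτ.1.le hτ.2
      nlinarith [abs_nonneg (q (s * τ) - p (s * τ)), sq_nonneg τ])
  rw [h1, abs_mul, abs_of_nonneg (by positivity)]
  refine mul_le_mul_of_nonneg_left ?_ (by positivity)
  simpa using h2

lemma fld_zero : fld (fun _ => 0) = fun _ => 0 := by
  ext r; simp [fld]

/-! ### The integral equation -/

/-- The Picard operator for `y' = -fld (G ∘ y)`, `y 0 = κ`. -/
def picard (G : ℝ → ℝ) (κ : ℝ) (y : ℝ → ℝ) (r : ℝ) : ℝ :=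
  κ - ∫ s in (0 : ℝ)..r, fld (fun t => G (y t)) s

lemma continuous_picard {G : ℝ → ℝ} (hG : Continuous G) (κ : ℝ) {y : ℝ → ℝ} (hy : Continuous y) :
    Continuous (picard G κ y) := by
  unfold picard
  exact continuous_const.sub (continuous_prim (continuous_fld (by fun_prop)))

lemma picard_bound {G : ℝ → ℝ} (hG : Continuous G) {B : ℝ} (hB : ∀ x, |G x| ≤ B) (κ : ℝ)
    {y : ℝ → ℝ} (hy : Continuous y) {r : ℝ} (hr : 0 ≤ r) :
    |picard G κ y r| ≤ |κ| + 4 * Real.pi * B * r ^ 2 := by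
  have hB0 : 0 ≤ B := (abs_nonneg _).trans (hB 0)
  have h := intervalIntegral.norm_integral_le_of_norm_le_const (a := 0) (b := r)
    (C := 4 * Real.pi * r * B) (f := fld (fun t => G (y t))) (by
      intro s hs
      rw [uIoc_of_le hr] at hs
      have := fld_sub_le (q := fun t => G (y t)) (p := fun _ => 0) (by fun_prop) (by fun_prop)
        hs.1.le (D := B) (fun t _ _ => by simpa using hB _)
      rw [fld_zero, sub_zero] at this
      refine this.trans ?_
      have := hs.2
      gcongr)
  rw [sub_zero, abs_of_nonneg hr, Real.norm_eq_abs] at h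
  unfold picard
  refine (abs_sub _ _).trans ?_
  nlinarith

lemma picard_congr {G : ℝ → ℝ} {κ : ℝ} {y z : ℝ → ℝ} {r : ℝ} (hr : 0 ≤ r)
    (h : ∀ t, 0 ≤ t → t ≤ r → y t = z t) : picard G κ y r = picard G κ z r := by
  unfold picard
  congr 1
  apply intervalIntegral.integral_congr
  intro s hs
  rw [uIcc_of_le hr] at hs
  simp only [fld]
  congr 1
  apply intervalIntegral.integral_congr
  intro τ hτ
  rw [uIcc_of_le zero_le_one] at hτ
  simp only
  rw [h (s * τ) (mul_nonneg hs.1 hτ.1) ((mul_le_of_le_one_right hs.1 hτ.2).trans hs.2)]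

/-- With the Gaussian weight `exp (l r²)`, `l = 4πL + 1`, the Picard operator contracts by `1/2`: the
field difference is at most `4πLD s exp (l s²)`, and `2 l s exp (l s²)` is an exact derivative. -/
lemma picard_contract {G : ℝ → ℝ} (hG : Continuous G) {L : ℝ} (hL : 0 ≤ L)
    (hLip : ∀ a b, |G a - G b| ≤ L * |a - b|) (κ : ℝ) {y z : ℝ → ℝ} (hy : Continuous y)
    (hz : Continuous z) {D : ℝ} (hD0 : 0 ≤ D)
    (hD : ∀ t, 0 ≤ t → |y t - z t| ≤ D * Real.exp ((4 * Real.pi * L + 1) * t ^ 2))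
    {r : ℝ} (hr : 0 ≤ r) :
    |picard G κ y r - picard G κ z r| ≤ D / 2 * Real.exp ((4 * Real.pi * L + 1) * r ^ 2) := by
  set l := 4 * Real.pi * L + 1 with hl
  have hl0 : 0 < l := by positivity
  have hcy : Continuous fun t => G (y t) := by fun_prop
  have hcz : Continuous fun t => G (z t) := by fun_prop
  have h1 : picard G κ y r - picard G κ z r
      = ∫ s in (0 : ℝ)..r, (fld (fun t => G (z t)) s - fld (fun t => G (y t)) s) := by
    rw [intervalIntegral.integral_sub ((continuous_fld hcz).intervalIntegrable _ _)
      ((continuous_fld hcy).intervalIntegrable _ _)]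
    unfold picard; ring
  have h2 : ∀ s ∈ Ioc 0 r, ‖fld (fun t => G (z t)) s - fld (fun t => G (y t)) s‖
      ≤ D / 2 * (Real.exp (l * s ^ 2) * (l * (2 * s))) := by
    intro s hs
    have hs0 := hs.1.le
    have := fld_sub_le hcz hcy hs0 (D := L * (D * Real.exp (l * s ^ 2))) (by
      intro t ht hts
      refine (hLip _ _).trans (mul_le_mul_of_nonneg_left ?_ hL)
      rw [abs_sub_comm]
      refine (hD t ht).trans (mul_le_mul_of_nonneg_left (Real.exp_le_exp.2 ?_) hD0)
      gcongr)
    refine this.trans ?_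
    have hE := Real.exp_pos (l * s ^ 2)
    have : 0 ≤ s * D * Real.exp (l * s ^ 2) := by positivity
    rw [show D / 2 * (Real.exp (l * s ^ 2) * (l * (2 * s)))
      = l * (s * D * Real.exp (l * s ^ 2)) by ring]
    rw [show 4 * Real.pi * s * (L * (D * Real.exp (l * s ^ 2)))
      = (l - 1) * (s * D * Real.exp (l * s ^ 2)) by rw [hl]; ring]
    nlinarith
  have h3 : ∀ s ∈ uIcc 0 r, HasDerivAt (fun s => Real.exp (l * s ^ 2))
      (Real.exp (l * s ^ 2) * (l * (2 * s))) s := by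
    intro s _
    simpa using ((hasDerivAt_pow 2 s).const_mul l).exp
  have h4 : ∫ s in (0 : ℝ)..r, D / 2 * (Real.exp (l * s ^ 2) * (l * (2 * s)))
      = D / 2 * (Real.exp (l * r ^ 2) - 1) := by
    rw [intervalIntegral.integral_const_mul, intervalIntegral.integral_eq_sub_of_hasDerivAt h3
      (Continuous.intervalIntegrable (by fun_prop) _ _)]
    simp
  rw [h1]
  refine (intervalIntegral.norm_integral_le_of_norm_le hr (Eventually.of_forall h2)
    (Continuous.intervalIntegrable (by fun_prop) _ _)).trans ?_
  rw [h4]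
  nlinarith

/-- Global existence and uniqueness for the integral equation, by Banach's fixed point theorem for
`x = exp (-l r²) y` in the bounded continuous functions on `ℝ`. Evaluating the Picard operator at
`|r|` makes the fixed point even and keeps every integral on the half line. -/
lemma exists_unique_picard {G : ℝ → ℝ} (hG : Continuous G) {B L : ℝ} (hB : ∀ x, |G x| ≤ B)
    (hL : 0 ≤ L) (hLip : ∀ a b, |G a - G b| ≤ L * |a - b|) (κ : ℝ) :
    ∃ y : ℝ → ℝ, Continuous y ∧ (∀ r, 0 ≤ r → y r = picard G κ y r) ∧
      ∀ z : ℝ → ℝ, Continuous z → (∀ r, 0 ≤ r → z r = picard G κ z r) → EqOn y z (Ici 0) := by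
  set l := 4 * Real.pi * L + 1 with hl
  have hl1 : 1 ≤ l := by rw [hl]; have : 0 ≤ 4 * Real.pi * L := by positivity
                         linarith
  have hB0 : 0 ≤ B := (abs_nonneg _).trans (hB 0)
  -- Picard images grow at most quadratically, hence are bounded after weighting.
  have hbd : ∀ y : ℝ → ℝ, Continuous y → ∀ r,
      ‖Real.exp (-(l * r ^ 2)) * picard G κ y |r|‖ ≤ |κ| + 4 * Real.pi * B := by
    intro y hy r
    have h1 := picard_bound hG hB κ hy (abs_nonneg r)
    rw [sq_abs] at h1
    rw [norm_mul, Real.norm_eq_abs, Real.norm_eq_abs, abs_of_pos (Real.exp_pos _), Real.exp_neg,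
      inv_mul_le_iff₀ (Real.exp_pos _)]
    refine h1.trans ?_
    have h2 : l * r ^ 2 + 1 ≤ Real.exp (l * r ^ 2) := Real.add_one_le_exp _
    have h3 : r ^ 2 ≤ l * r ^ 2 := by nlinarith [sq_nonneg r]
    have h4 : 0 ≤ 4 * Real.pi * B := by positivity
    have h5 := abs_nonneg κ
    have h6 := sq_nonneg r
    have h7 : r ^ 2 ≤ Real.exp (l * r ^ 2) := by linarith
    have h8 : 1 ≤ Real.exp (l * r ^ 2) := by linarith
    nlinarith
  have hcont : ∀ y : ℝ → ℝ, Continuous y →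
      Continuous fun r => Real.exp (-(l * r ^ 2)) * picard G κ y |r| := by
    intro y hy
    have := continuous_picard hG κ hy
    fun_prop
  have hu : ∀ x : BoundedContinuousFunction ℝ ℝ,
      Continuous fun r => Real.exp (l * r ^ 2) * x r := by
    intro x
    have := x.continuous
    fun_prop
  let T : BoundedContinuousFunction ℝ ℝ → BoundedContinuousFunction ℝ ℝ := fun x =>
    BoundedContinuousFunction.ofNormedAddCommGroup _ (hcont _ (hu x)) _ (hbd _ (hu x))
  have hT : ∀ x r, T x r
      = Real.exp (-(l * r ^ 2)) * picard G κ (fun r => Real.exp (l * r ^ 2) * x r) |r| :=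
    fun x r => rfl
  have hcontr : ContractingWith (1 / 2) T := by
    refine ⟨by rw [← NNReal.coe_lt_coe]; norm_num, LipschitzWith.of_dist_le_mul fun x x' => ?_⟩
    rw [BoundedContinuousFunction.dist_le (by positivity)]
    intro r
    rw [hT, hT, Real.dist_eq, ← mul_sub, abs_mul, abs_of_pos (Real.exp_pos _), Real.exp_neg,
      inv_mul_le_iff₀ (Real.exp_pos _)]
    have := picard_contract hG hL hLip κ (hu x) (hu x') (D := dist x x') dist_nonneg (by
      intro t _
      rw [← mul_sub, abs_mul, abs_of_pos (Real.exp_pos _), mul_comm]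
      refine mul_le_mul_of_nonneg_right ?_ (Real.exp_pos _).le
      rw [← Real.dist_eq]
      exact BoundedContinuousFunction.dist_coe_le_dist t) (abs_nonneg r)
    rw [sq_abs] at this
    refine this.trans (le_of_eq ?_)
    push_cast
    ring
  have hEE : ∀ r : ℝ, Real.exp (l * r ^ 2) * Real.exp (-(l * r ^ 2)) = 1 := by
    intro r; rw [← Real.exp_add]; simp
  refine ⟨fun r => Real.exp (l * r ^ 2) * hcontr.fixedPoint T r, hu _, fun r hr => ?_, ?_⟩
  · have h := congrArg (fun x => x r) hcontr.fixedPoint_isFixedPt.eq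
    simp only [hT, abs_of_nonneg hr] at h
    simp only
    rw [← h, ← mul_assoc, hEE, one_mul]
  · intro z hz hzeq r hr
    have hz' : Continuous fun r => z |r| := hz.comp continuous_abs
    have hzp : ∀ r, picard G κ (fun r => z |r|) |r| = z |r| := by
      intro r
      rw [hzeq _ (abs_nonneg r)]
      exact picard_congr (abs_nonneg r) fun t ht _ => by rw [abs_of_nonneg ht]
    let X : BoundedContinuousFunction ℝ ℝ :=
      BoundedContinuousFunction.ofNormedAddCommGroup _ (hcont _ hz') _ (hbd _ hz')
    have hX : ∀ r, X r = Real.exp (-(l * r ^ 2)) * z |r| := by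
      intro r
      rw [← hzp r]; rfl
    have hfun : (fun r => Real.exp (l * r ^ 2) * X r) = fun r => z |r| := by
      ext r; rw [hX, ← mul_assoc, hEE, one_mul]
    have hfix : Function.IsFixedPt T X := by
      ext r
      rw [hT, hfun, hzp, hX]
    have := hcontr.fixedPoint_unique hfix
    change Real.exp (l * r ^ 2) * hcontr.fixedPoint T r = z r
    rw [← this]
    have h := congrFun hfun r
    rw [h, abs_of_nonneg hr]

/-! ### Finite radius -/

/-- Since `k < 3/2`, the profile dominates a cubic power near the vacuum. -/
lemma gN_cubic_near {φ : ℝ → ℝ} (hφ : Continuous φ) (hφ0 : ∀ η : ℝ, η ≤ 0 → φ η = 0)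
    (hφpos : ∀ η : ℝ, 0 < η → 0 < φ η) {C η₀ k : ℝ} (hC : 0 < C) (hk' : k < 3 / 2)
    (hgrowth : ∀ η : ℝ, 0 < η → η < η₀ → C * η ^ k ≤ φ η) {y : ℝ} (hy : 0 < y) (hy1 : y ≤ 1)
    (hyη : y ≤ η₀) : 4 * Real.pi * Real.sqrt 2 * (C / 32) * y ^ 3 ≤ gN φ y := by
  rw [gN, if_pos hy, mul_assoc]
  refine mul_le_mul_of_nonneg_left ?_ gcoef_pos.le
  have hc : Continuous fun η => φ η * Real.sqrt (y - η) := by fun_prop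
  have hnn : ∀ η, 0 ≤ φ η * Real.sqrt (y - η) := by
    intro η
    refine mul_nonneg ?_ (Real.sqrt_nonneg _)
    rcases le_or_gt η 0 with h | h
    · rw [hφ0 _ h]
    · exact (hφpos _ h).le
  have h1 : ∫ η in (y / 2)..(3 * y / 4), φ η * Real.sqrt (y - η)
      ≤ ∫ η in (0 : ℝ)..y, φ η * Real.sqrt (y - η) :=
    intervalIntegral.integral_mono_interval (by linarith) (by linarith) (by linarith)
      (Eventually.of_forall hnn) (hc.intervalIntegrable _ _)
  have h2 : ∫ _ in (y / 2)..(3 * y / 4), C * y ^ 2 / 8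
      ≤ ∫ η in (y / 2)..(3 * y / 4), φ η * Real.sqrt (y - η) := by
    refine intervalIntegral.integral_mono_on (by linarith) intervalIntegrable_const
      (hc.intervalIntegrable _ _) fun η hη => ?_
    have hη0 : 0 < η := by linarith [hη.1]
    have hφη : C * (η * Real.sqrt η) ≤ φ η := by
      refine le_trans (mul_le_mul_of_nonneg_left ?_ hC.le) (hgrowth η hη0 (by linarith [hη.2]))
      have : η * Real.sqrt η = η ^ (3 / 2 : ℝ) := by
        rw [Real.sqrt_eq_rpow, show (3 / 2 : ℝ) = 1 + 1 / 2 by norm_num, Real.rpow_add hη0,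
          Real.rpow_one]
      rw [this]
      exact Real.rpow_le_rpow_of_exponent_ge hη0 (by linarith [hη.2]) hk'.le
    have hs1 : Real.sqrt (y / 4) ≤ Real.sqrt η := Real.sqrt_le_sqrt (by linarith [hη.1])
    have hs2 : Real.sqrt (y / 4) ≤ Real.sqrt (y - η) := Real.sqrt_le_sqrt (by linarith [hη.2])
    have hs3 : Real.sqrt (y / 4) * Real.sqrt (y / 4) = y / 4 :=
      Real.mul_self_sqrt (by linarith)
    have hs0 := Real.sqrt_nonneg (y / 4)
    calc C * y ^ 2 / 8 = C * (y / 2 * Real.sqrt (y / 4)) * Real.sqrt (y / 4) := by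
          rw [show C * (y / 2 * Real.sqrt (y / 4)) * Real.sqrt (y / 4)
            = C * (y / 2) * (Real.sqrt (y / 4) * Real.sqrt (y / 4)) by ring, hs3]
          ring
      _ ≤ C * (η * Real.sqrt η) * Real.sqrt (y - η) := by
          have := hη.1
          gcongr
      _ ≤ φ η * Real.sqrt (y - η) := mul_le_mul_of_nonneg_right hφη (Real.sqrt_nonneg _)
  rw [intervalIntegral.integral_const, smul_eq_mul] at h2
  nlinarith

/-- Away from the vacuum the cubic bound follows from monotonicity and positivity of `gN`. -/
lemma gN_cubic {φ : ℝ → ℝ} (hφ : Continuous φ) (hφ0 : ∀ η : ℝ, η ≤ 0 → φ η = 0)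
    (hφpos : ∀ η : ℝ, 0 < η → 0 < φ η) {C η₀ k : ℝ} (hC : 0 < C) (hη₀ : 0 < η₀) (hk' : k < 3 / 2)
    (hgrowth : ∀ η : ℝ, 0 < η → η < η₀ → C * η ^ k ≤ φ η) {κ : ℝ} (hκ : 0 < κ) :
    ∃ c, 0 < c ∧ ∀ y, 0 < y → y ≤ κ → c * y ^ 3 ≤ gN φ y := by
  have hδ : 0 < min 1 η₀ := lt_min one_pos hη₀
  have hg := gN_pos hφ hφpos hδ
  refine ⟨min (4 * Real.pi * Real.sqrt 2 * (C / 32)) (gN φ (min 1 η₀) / κ ^ 3),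
    lt_min (mul_pos gcoef_pos (by positivity)) (by positivity), fun y hy hyκ => ?_⟩
  rcases le_total y (min 1 η₀) with h | h
  · refine le_trans ?_ (gN_cubic_near hφ hφ0 hφpos hC hk' hgrowth hy
      (h.trans (min_le_left _ _)) (h.trans (min_le_right _ _)))
    exact mul_le_mul_of_nonneg_right (min_le_left _ _) (by positivity)
  · refine le_trans ?_ (gN_monotone hφ hφ0 hφpos h)
    refine (mul_le_mul_of_nonneg_right (min_le_right _ _) (by positivity)).trans ?_
    rw [div_mul_eq_mul_div, div_le_iff₀ (by positivity)]
    gcongr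

/-- A positive profile on `(0,∞)` whose density dominates a cubic cannot exist: integrating the field
over `[r, 2r]` gives `w r ≥ m r / (4r)`, so `m' ≥ b m³ / r`, hence `-1/(2m²) - b log r` is
nondecreasing; but it is negative and tends to `-∞`. -/
lemma no_global_pos {w m q : ℝ → ℝ} {c : ℝ} (hc : 0 < c)
    (hw : ∀ r, 0 < r → HasDerivAt w (-(m r) / r ^ 2) r)
    (hm : ∀ r, 0 < r → HasDerivAt m (4 * Real.pi * (q r * r ^ 2)) r)
    (hq : ∀ r, 0 < r → c * w r ^ 3 ≤ q r) (hm1 : 0 < m 1) (hpos : ∀ r, 0 < r → 0 < w r) :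
    False := by
  have hmono : MonotoneOn m (Ioi 0) := by
    refine monotoneOn_of_deriv_nonneg (convex_Ioi 0)
      (fun r hr => (hm r hr).continuousAt.continuousWithinAt)
      (fun r hr => ?_) fun r hr => ?_
    · rw [interior_Ioi] at hr
      exact (hm r hr).differentiableAt.differentiableWithinAt
    · rw [interior_Ioi] at hr
      have hr' : 0 < r := hr
      rw [(hm r hr).deriv]
      have := hpos r hr
      have := hq r hr
      have : 0 ≤ q r := le_trans (by positivity) this
      positivity
  have hmpos : ∀ r, 1 ≤ r → 0 < m r := fun r hr =>
    hm1.trans_le (hmono (mem_Ioi.2 one_pos) (mem_Ioi.2 (by linarith)) hr)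
  have hlow : ∀ r, 1 ≤ r → m r / (4 * r) ≤ w r := by
    intro r hr
    have hr0 : 0 < r := by linarith
    obtain ⟨ξ, hξ, h⟩ := exists_hasDerivAt_eq_slope w (fun r => -(m r) / r ^ 2)
      (show r < 2 * r by linarith)
      (fun x hx => (hw x (by linarith [hx.1])).continuousAt.continuousWithinAt)
      (fun x hx => hw x (by linarith [hx.1]))
    have hξ0 : 0 < ξ := by linarith [hξ.1]
    have h1 : m r ≤ m ξ := hmono hr0 hξ0 hξ.1.le
    have h2 := hpos (2 * r) (by linarith)
    have h3 : w r = w (2 * r) + m ξ / ξ ^ 2 * r := by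
      rw [eq_div_iff (by linarith)] at h
      rw [neg_div] at h
      linarith
    have h4 : m r / (4 * r) ≤ m ξ / ξ ^ 2 * r := by
      rw [div_mul_eq_mul_div, div_le_div_iff₀ (by positivity) (by positivity)]
      have := hmpos r hr
      have h5 : ξ ^ 2 ≤ (2 * r) ^ 2 := pow_le_pow_left₀ hξ0.le hξ.2.le 2
      have h6 : 0 ≤ m ξ := by linarith
      calc m r * ξ ^ 2 ≤ m ξ * (2 * r) ^ 2 := by gcongr
        _ = m ξ * r * (4 * r) := by ring
    linarith
  set b := 4 * Real.pi * c / 64 with hb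
  have hb0 : 0 < b := by positivity
  have hF : ∀ r, 1 ≤ r → HasDerivAt (fun r => -(1 / 2) * (m r ^ 2)⁻¹ - b * Real.log r)
      (4 * Real.pi * (q r * r ^ 2) / m r ^ 3 - b / r) r := by
    intro r hr
    have hr0 : 0 < r := by linarith
    have hmr := hmpos r hr
    refine (((((hm r hr0).pow 2).inv (pow_ne_zero 2 hmr.ne')).const_mul (-(1 / 2))).sub
      ((Real.hasDerivAt_log hr0.ne').const_mul b)).congr_deriv ?_
    simp only [Pi.pow_apply]
    field_simp
    push_cast
    ring
  have hFmono : MonotoneOn (fun r => -(1 / 2) * (m r ^ 2)⁻¹ - b * Real.log r) (Ici 1) := by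
    refine monotoneOn_of_deriv_nonneg (convex_Ici 1)
      (fun r hr => (hF r hr).continuousAt.continuousWithinAt)
      (fun r hr => ?_) fun r hr => ?_
    · rw [interior_Ici] at hr
      exact (hF r (le_of_lt hr)).differentiableAt.differentiableWithinAt
    · rw [interior_Ici] at hr
      have hr1 : 1 ≤ r := le_of_lt hr
      have hr0 : 0 < r := by linarith
      rw [(hF r hr1).deriv]
      have hmr := hmpos r hr1
      have h1 : c * (m r / (4 * r)) ^ 3 ≤ q r := by
        refine le_trans ?_ (hq r hr0)
        have := hlow r hr1
        gcongr
      rw [sub_nonneg, div_le_div_iff₀ hr0 (by positivity)]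
      calc b * m r ^ 3 = 4 * Real.pi * (c * (m r / (4 * r)) ^ 3 * r ^ 2) * r := by
            rw [hb]; field_simp; norm_num
        _ ≤ 4 * Real.pi * (q r * r ^ 2) * r := by gcongr
  -- At this radius `b log r` equals `1/(2 m(1)²)`, which forces `1/(2m²) ≤ 0`.
  have hE : 1 ≤ Real.exp ((1 / 2 * (m 1 ^ 2)⁻¹) / b) := Real.one_le_exp (by positivity)
  have h := hFmono (mem_Ici.2 le_rfl) hE hE
  simp only [Real.log_one, Real.log_exp, mul_zero, sub_zero] at h
  rw [mul_div_cancel₀ _ hb0.ne'] at h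
  have := hmpos _ hE
  have h6 : 0 < (m (Real.exp ((1 / 2 * (m 1 ^ 2)⁻¹) / b)) ^ 2)⁻¹ := by positivity
  linarith

/-! ### Steady states -/

/-- **Existence and uniqueness of compactly supported, finite mass steady states of
the Vlasov–Poisson system.**  `φ` satisfies the standard assumptions and the lower
bound `φ(η) ≥ C η^k` near `0` with `0 < k < 3/2`. -/
theorem stmt_10 (φ : ℝ → ℝ) (hφcont : Continuous φ)
    (hφC2 : ContDiffOn ℝ 2 φ (Ioi 0))
    (hφ0 : ∀ η : ℝ, η ≤ 0 → φ η = 0) (hφpos : ∀ η : ℝ, 0 < η → 0 < φ η)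
    (C η₀ k : ℝ) (hC : 0 < C) (hη₀ : 0 < η₀) (hk : 0 < k) (hk' : k < 3 / 2)
    (hgrowth : ∀ η : ℝ, 0 < η → η < η₀ → C * η ^ k ≤ φ η)
    (κ : ℝ) (hκ : 0 < κ) :
    ∃ y : ℝ → ℝ, IsVPSteady φ κ y ∧
      StrictAntiOn y (Ici 0) ∧
      (∃ R : ℝ, 0 < R ∧ y R = 0 ∧
        (∀ R' : ℝ, 0 < R' → y R' = 0 → R' = R) ∧
        (∀ r : ℝ, R < r → gN φ (y r) = 0) ∧
        Tendsto (mN φ y) atTop (nhds (mN φ y R))) ∧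
      ContDiffOn ℝ 1 (fun r => gN φ (y r)) (Ici 0) ∧
      ∀ y' : ℝ → ℝ, IsVPSteady φ κ y' → EqOn y y' (Ici 0) := by
  have hM : (0 : ℝ) ≤ κ + 1 := by positivity
  have hκM : κ ≤ (κ + 1) ^ 2 := by nlinarith
  obtain ⟨L, hL, hLip⟩ := gCut_lipschitz hφcont hφ0 hκ
  have hGc : Continuous (gCut φ κ) := continuous_gCut hφcont hφ0 hκ
  have hG0 := gCut_nonneg hφcont hφpos κ
  obtain ⟨y, hyc, hy, huniq⟩ := exists_unique_picard hGc (B := gN φ κ)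
    (fun x => by rw [abs_of_nonneg (hG0 x)]; exact gCut_le hφcont hφ0 hφpos κ x) hL hLip κ
  set q : ℝ → ℝ := fun t => gCut φ κ (y t) with hqdef
  have hqc : Continuous q := by fun_prop
  have hq0 : ∀ t, 0 ≤ q t := fun t => hG0 _
  -- `y` satisfies the integral equation only on `[0,∞)`; its Picard image `w` agrees with it there and
  -- is differentiable on all of `ℝ`, which yields the regularity at the origin.
  set w : ℝ → ℝ := picard (gCut φ κ) κ y with hwdef
  have hw' : ∀ r, HasDerivAt w (-(fld q r)) r := fun r =>
    (hasDerivAt_prim (continuous_fld hqc) r).const_sub κ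
  have hw0 : w 0 = κ := by simp [hwdef, picard]
  have hfld0 : ∀ r, 0 ≤ r → 0 ≤ fld q r := fun r hr =>
    mul_nonneg (by positivity) (intervalIntegral.integral_nonneg zero_le_one
      fun τ _ => mul_nonneg (hq0 _) (sq_nonneg τ))
  have hwκ : ∀ r, 0 ≤ r → w r ≤ κ := by
    intro r hr
    have : 0 ≤ ∫ s in (0 : ℝ)..r, fld q s :=
      intervalIntegral.integral_nonneg hr fun s hs => hfld0 s hs.1
    change κ - (∫ s in (0 : ℝ)..r, fld q s) ≤ κ
    linarith
  -- Because `w ≤ κ`, freezing the profile above `κ` is invisible along the solution.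
  have hgw : ∀ r, 0 ≤ r → gN φ (w r) = q r := by
    intro r hr
    have h1 := hy r hr
    have h2 := hwκ r hr
    simp only [hqdef, gCut]
    rw [h1, min_eq_left h2]
  have hmN : ∀ r, 0 ≤ r → mN φ w r = 4 * Real.pi * ∫ s in (0 : ℝ)..r, q s * s ^ 2 := by
    intro r hr
    unfold mN
    congr 1
    apply intervalIntegral.integral_congr
    intro s hs
    rw [uIcc_of_le hr] at hs
    simp only [hgw s hs.1]
  have hqs : Continuous fun s => q s * s ^ 2 := by fun_prop
  have hmass : ∀ r, 0 < r → 0 < ∫ s in (0 : ℝ)..r, q s * s ^ 2 := by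
    intro r hr
    have hq00 : 0 < q 0 := by
      rw [← hgw 0 le_rfl, hw0]; exact gN_pos hφcont hφpos hκ
    obtain ⟨ε, hε, hball⟩ := Metric.eventually_nhds_iff.1
      (hqc.continuousAt.eventually (lt_mem_nhds hq00))
    have hδ : 0 < min r (ε / 2) := lt_min hr (by positivity)
    refine intervalIntegral.integral_pos hr hqs.continuousOn
      (fun s _ => mul_nonneg (hq0 s) (sq_nonneg s))
      ⟨min r (ε / 2), ⟨hδ.le, min_le_left _ _⟩, mul_pos (hball ?_) (by positivity)⟩
    rw [Real.dist_eq, sub_zero, abs_of_pos hδ]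
    linarith [min_le_right r (ε / 2)]
  have hfld : ∀ r, 0 < r → fld q r = mN φ w r / r ^ 2 := by
    intro r hr
    rw [fld_eq q hr.ne', hmN r hr.le]
  have hanti : StrictAntiOn w (Ici 0) := by
    refine strictAntiOn_of_deriv_neg (convex_Ici 0)
      (fun r _ => (hw' r).continuousAt.continuousWithinAt) fun r hr => ?_
    rw [interior_Ici] at hr
    have hr' : 0 < r := hr
    rw [(hw' r).deriv, fld_eq q hr'.ne']
    have := hmass r hr
    have : 0 < 4 * Real.pi * (∫ s in (0 : ℝ)..r, q s * s ^ 2) / r ^ 2 := by positivity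
    linarith
  have hC2 : ContDiff ℝ 2 w := by
    rw [show (2 : WithTop ℕ∞) = 1 + 1 by norm_num, contDiff_succ_iff_deriv]
    refine ⟨fun r => (hw' r).differentiableAt, by simp, ?_⟩
    rw [funext fun r => (hw' r).deriv]
    exact (contDiff_fld hqc).neg
  have hzero : ∃ R, 0 < R ∧ w R = 0 := by
    obtain ⟨c, hc, hcub⟩ := gN_cubic hφcont hφ0 hφpos hC hη₀ hk' hgrowth hκ
    have hex : ∃ r, 0 < r ∧ w r ≤ 0 := by
      by_contra! hcon
      refine no_global_pos (w := w) (q := q)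
        (m := fun r => 4 * Real.pi * ∫ s in (0 : ℝ)..r, q s * s ^ 2) hc
        (fun r hr => (hw' r).congr_deriv ?_)
        (fun r _ => (hasDerivAt_prim hqs r).const_mul (4 * Real.pi))
        (fun r hr => ?_) (by have := hmass 1 one_pos; positivity) hcon
      · rw [fld_eq q hr.ne']; ring
      · rw [← hgw r hr.le]
        exact hcub _ (hcon r hr) (hwκ r hr.le)
    obtain ⟨r, hr, hwr⟩ := hex
    obtain ⟨R, hR, hwR⟩ := intermediate_value_Icc' hr.le hC2.continuous.continuousOn
      (show (0 : ℝ) ∈ Icc (w r) (w 0) from ⟨hwr, by rw [hw0]; exact hκ.le⟩)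
    -- The zero is not at the origin, since `w 0 = κ ≠ 0`.
    refine ⟨R, lt_of_le_of_ne hR.1 ?_, hwR⟩
    rintro rfl
    rw [hw0] at hwR
    exact hκ.ne' hwR
  obtain ⟨R, hR, hwR⟩ := hzero
  have hout : ∀ r, R < r → gN φ (w r) = 0 := by
    intro r hr
    refine gN_of_nonpos φ ?_
    rw [← hwR]
    exact (hanti hR.le (hR.trans hr).le hr).le
  refine ⟨w, ⟨hC2.contDiffOn, hw0, ?_, fun r hr => ?_⟩, hanti,
    ⟨R, hR, hwR, fun R' hR' h => hanti.injOn hR'.le hR.le (h.trans hwR.symm), hout, ?_⟩, ?_, ?_⟩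
  · rw [(hw' 0).hasDerivWithinAt.derivWithin (uniqueDiffOn_Ici 0 0 self_mem_Ici)]
    simp [fld]
  · rw [(hw' r).deriv, hfld r hr, neg_div]
  · refine tendsto_const_nhds.congr' ?_
    filter_upwards [eventually_ge_atTop R] with r hr
    rw [hmN r (hR.le.trans hr), hmN R hR.le]
    congr 1
    rw [← intervalIntegral.integral_add_adjacent_intervals (hqs.intervalIntegrable 0 R)
      (hqs.intervalIntegrable R r)]
    rw [intervalIntegral.integral_congr (a := R) (b := r) (g := fun _ => (0 : ℝ))]
    · simp
    · intro s hs
      rw [uIcc_of_le hr] at hs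
      have : gN φ (w s) = 0 := by
        rcases hs.1.eq_or_lt with h | h
        · rw [← h, hwR]; exact gN_of_nonpos φ le_rfl
        · exact hout s h
      simp only
      rw [← hgw s (hR.le.trans hs.1), this, zero_mul]
  · refine ((contDiff_gReg hφcont hM).comp (hC2.of_le one_le_two)).contDiffOn.congr fun r hr => ?_
    exact gN_eq_gReg hφcont hφ0 hM ((hwκ r hr).trans hκM)
  · rintro z ⟨hzC2, hz0, -, hz⟩ r hr
    have hzd : ∀ s, 0 < s → HasDerivAt z (-(mN φ z s) / s ^ 2) s := by
      intro s hs
      rw [← hz s hs]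
      exact ((hzC2.differentiableOn two_ne_zero).differentiableAt (Ici_mem_nhds hs)).hasDerivAt
    -- Any competitor is nonincreasing, hence also stays below `κ`.
    have hzκ : ∀ s, 0 ≤ s → z s ≤ κ := by
      have : AntitoneOn z (Ici 0) := by
        refine antitoneOn_of_deriv_nonpos (convex_Ici 0) hzC2.continuousOn ?_ ?_
        · rw [interior_Ici]
          exact fun s hs => (hzd s hs).differentiableAt.differentiableWithinAt
        · rw [interior_Ici]
          intro s hs
          have hs' : 0 < s := hs
          rw [hz s hs, neg_div, neg_nonpos]
          refine div_nonneg (mul_nonneg (by positivity) (intervalIntegral.integral_nonneg hs'.le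
            fun t _ => mul_nonneg (gN_nonneg hφcont hφpos _) (sq_nonneg t))) (sq_nonneg s)
      intro s hs
      rw [← hz0]
      exact this self_mem_Ici hs hs
    have hZc : Continuous fun s => z |s| :=
      hzC2.continuousOn.comp_continuous continuous_abs fun s => abs_nonneg s
    have hQc : Continuous fun s => gCut φ κ (z |s|) := hGc.comp hZc
    -- The even extension of the competitor satisfies the same integral equation.
    have hZ : ∀ s, 0 ≤ s → z |s| = picard (gCut φ κ) κ (fun s => z |s|) s := by
      intro s hs
      have h := intervalIntegral.integral_eq_sub_of_hasDeriv_right_of_le hs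
        (f := z) (f' := fun t => -(fld (fun s => gCut φ κ (z |s|)) t))
        (hzC2.continuousOn.mono Icc_subset_Ici_self) (fun t ht => ?_)
        ((continuous_fld hQc).neg.intervalIntegrable _ _)
      · rw [intervalIntegral.integral_neg, hz0] at h
        rw [abs_of_nonneg hs]
        unfold picard
        linarith
      · refine ((hzd t ht.1).congr_deriv ?_).hasDerivWithinAt
        have hmz : mN φ z t = 4 * Real.pi * ∫ s in (0 : ℝ)..t, gCut φ κ (z |s|) * s ^ 2 := by
          unfold mN
          congr 1
          apply intervalIntegral.integral_congr
          intro x hx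
          rw [uIcc_of_le ht.1.le] at hx
          simp only [gCut]
          rw [abs_of_nonneg hx.1, min_eq_left (hzκ x hx.1)]
        rw [fld_eq _ ht.1.ne', neg_div, hmz]
    have h := huniq _ hZc hZ hr
    rw [← hy r hr, h]
    exact congrArg z (abs_of_nonneg hr)
end
end
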